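/- Theorem 1 (joint source-channel coding for the MARC, CPM to the relay and Slepian-Wolf coding to the destination): The source pair (S1, S2) can be reliably transmitted over the discrete memoryless MARC with relay side information W3 and receiver side information W if there exist finite sets 𝒱1, 𝒱2 and a joint pmf that factors as p(s1,s2,w3,w) p(v1) p(x1|s1,v1) p(v2) p(x2|s2,v2) p(x3|v1,v2) p(y3,y|x1,x2,x3) (where p(s1,s2,w3,w) is the given source distribution and p(y3,y|x1,x2,x3) is the given channel law) such that all of the following strict inequalities hold: H(S1|S2,W3) < I(X1;Y3|S2,X2,V1,X3,W3); H(S2|S1,W3) < I(X2;Y3|S1,X1,V2,X3,W3); H(S1,S2|W3) < I(X1,X2;Y3|V1,V2,X3,W3); H(S1|S2,W) < I(X1,X3;Y|S1,X2,V2); H(S2|S1,W) < I(X2,X3;Y|S2,X1,V1); H(S1,S2|W) < I(X1,X2,X3;Y|S1,S2). -/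

import Mathlib

open scoped BigOperators

/-- A probability mass function on a finite type. -/
def IsPmf {α : Type*} [Fintype α] (p : α → ℝ) : Prop :=
  (∀ a, 0 ≤ p a) ∧ ∑ a, p a = 1

/-- Shannon entropy (natural logarithm) of the push-forward of `μ` under `X`. -/
noncomputable def entropyOf {Ω α : Type*} [Fintype Ω] [Fintype α] [DecidableEq α]
    (μ : Ω → ℝ) (X : Ω → α) : ℝ :=
  ∑ a : α, Real.negMulLog (∑ ω : Ω, if X ω = a then μ ω else 0)

/-- Conditional Shannon entropy `H(X | Y)` under `μ`. -/
noncomputable def condEntropyOf {Ω α β : Type*} [Fintype Ω] [Fintype α] [Fintype β]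
    [DecidableEq α] [DecidableEq β] (μ : Ω → ℝ) (X : Ω → α) (Y : Ω → β) : ℝ :=
  entropyOf μ (fun ω => (X ω, Y ω)) - entropyOf μ Y

/-- Mutual information `I(X ; Y)` under `μ`. -/
noncomputable def mutualInfoOf {Ω α β : Type*} [Fintype Ω] [Fintype α] [Fintype β]
    [DecidableEq α] [DecidableEq β] (μ : Ω → ℝ) (X : Ω → α) (Y : Ω → β) : ℝ :=
  entropyOf μ X + entropyOf μ Y - entropyOf μ (fun ω => (X ω, Y ω))

/-- Conditional mutual information `I(X ; Y | Z)` under `μ`. -/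
noncomputable def condMutualInfoOf {Ω α β γ : Type*} [Fintype Ω] [Fintype α] [Fintype β]
    [Fintype γ] [DecidableEq α] [DecidableEq β] [DecidableEq γ]
    (μ : Ω → ℝ) (X : Ω → α) (Y : Ω → β) (Z : Ω → γ) : ℝ :=
  entropyOf μ (fun ω => (X ω, Z ω)) + entropyOf μ (fun ω => (Y ω, Z ω))
    - entropyOf μ (fun ω => (X ω, Y ω, Z ω)) - entropyOf μ Z

/-- Causality of the relay encoding functions: the channel input of the relay at time `k`
depends on the relay channel outputs only through those at times `j < k`. -/
def CausalRelay {n : ℕ} {Y3 W3 X3 : Type*}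
    (f3 : Fin n → (Fin n → Y3) → (Fin n → W3) → X3) : Prop :=
  ∀ (k : Fin n) (y y' : Fin n → Y3) (w : Fin n → W3),
    (∀ j : Fin n, j < k → y j = y' j) → f3 k y w = f3 k y' w

/-- Error probability of a blocklength-`n` source-channel code over the discrete memoryless
MARC with source/side-information pmf `pSrc` (i.i.d. across time) and channel law `Q`. -/
noncomputable def marcErrProb {S1 S2 W W3 X1 X2 X3 Y Y3 : Type*}
    [Fintype S1] [Fintype S2] [Fintype W] [Fintype W3] [Fintype Y] [Fintype Y3]
    [DecidableEq S1] [DecidableEq S2]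
    (pSrc : S1 × S2 × W × W3 → ℝ) (Q : X1 × X2 × X3 → Y × Y3 → ℝ) (n : ℕ)
    (f1 : (Fin n → S1) → Fin n → X1) (f2 : (Fin n → S2) → Fin n → X2)
    (f3 : Fin n → (Fin n → Y3) → (Fin n → W3) → X3)
    (g : (Fin n → Y) → (Fin n → W) → (Fin n → S1) × (Fin n → S2)) : ℝ :=
  ∑ s1 : Fin n → S1, ∑ s2 : Fin n → S2, ∑ w : Fin n → W, ∑ w3 : Fin n → W3,
    ∑ y : Fin n → Y, ∑ y3 : Fin n → Y3,
      if g y w ≠ (s1, s2) then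
        (∏ k : Fin n, pSrc (s1 k, s2 k, w k, w3 k)) *
          ∏ k : Fin n, Q (f1 s1 k, f2 s2 k, f3 k y3 w3) (y k, y3 k)
      else 0

/-- The sources `(S1, S2)` can be reliably transmitted over the DM MARC: codes with
arbitrarily small error probability exist. -/
def MarcReliablyTransmitted {S1 S2 W W3 X1 X2 X3 Y Y3 : Type*}
    [Fintype S1] [Fintype S2] [Fintype W] [Fintype W3] [Fintype Y] [Fintype Y3]
    [DecidableEq S1] [DecidableEq S2]
    (pSrc : S1 × S2 × W × W3 → ℝ) (Q : X1 × X2 × X3 → Y × Y3 → ℝ) : Prop :=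
  ∀ ε : ℝ, 0 < ε → ∃ n : ℕ, 0 < n ∧
    ∃ (f1 : (Fin n → S1) → Fin n → X1) (f2 : (Fin n → S2) → Fin n → X2)
      (f3 : Fin n → (Fin n → Y3) → (Fin n → W3) → X3)
      (g : (Fin n → Y) → (Fin n → W) → (Fin n → S1) × (Fin n → S2)),
      CausalRelay f3 ∧ marcErrProb pSrc Q n f1 f2 f3 g ≤ ε

/-- The single-letter joint distribution of Theorem 1:
`p(s1,s2,w3,w) p(v1) p(x1|s1,v1) p(v2) p(x2|s2,v2) p(x3|v1,v2) p(y3,y|x1,x2,x3)`. -/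
noncomputable def thm1Joint {S1 S2 W W3 X1 X2 X3 Y Y3 : Type*} (n1 n2 : ℕ)
    (pSrc : S1 × S2 × W × W3 → ℝ) (Q : X1 × X2 × X3 → Y × Y3 → ℝ)
    (pV1 : Fin n1 → ℝ) (pV2 : Fin n2 → ℝ)
    (pX1 : S1 → Fin n1 → X1 → ℝ) (pX2 : S2 → Fin n2 → X2 → ℝ)
    (pX3 : Fin n1 → Fin n2 → X3 → ℝ) :
    S1 × S2 × W3 × W × Fin n1 × Fin n2 × X1 × X2 × X3 × Y3 × Y → ℝ :=
  fun (s1, s2, w3, w, v1, v2, x1, x2, x3, y3, y) =>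
    pSrc (s1, s2, w, w3) * pV1 v1 * pX1 s1 v1 x1 * pV2 v2 * pX2 s2 v2 x2 *
      pX3 v1 v2 x3 * Q (x1, x2, x3) (y, y3)

namespace MARC

section PiSums

variable {ι α β : Type*} [Fintype ι] [DecidableEq ι] [Fintype α] [Fintype β]

theorem sum_pi_prod (F : ι → α → ℝ) : ∑ f : ι → α, ∏ k, F k (f k) = ∏ k, ∑ a, F k a := by
  rw [Finset.prod_univ_sum, Fintype.piFinset_univ]

theorem sum_pi_prod₂ (F : ι → α → β → ℝ) :
    ∑ f : ι → α, ∑ g : ι → β, ∏ k, F k (f k) (g k) = ∏ k, ∑ a, ∑ b, F k a b := by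
  rw [← sum_pi_prod (fun k a => ∑ b, F k a b)]
  exact Finset.sum_congr rfl fun f _ => sum_pi_prod (fun k b => F k (f k) b)

/-- Isolating the coordinate `i` in an expectation over a product distribution. -/
theorem sum_pi_split (P : ι → β → ℝ) (i : ι) (φ : β → ({j // j ≠ i} → β) → ℝ) :
    ∑ F : ι → β, (∏ k, P k (F k)) * φ (F i) (fun j => F j) =
      ∑ b, P i b * ∑ G : {j // j ≠ i} → β, (∏ k : {j // j ≠ i}, P k (G k)) * φ b G := by
  rw [Fintype.sum_equiv (Equiv.funSplitAt i β) _
    (fun x => (P i x.1 * ∏ k : {j // j ≠ i}, P k (x.2 k)) * φ x.1 x.2), Fintype.sum_prod_type]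
  · simp only [Finset.mul_sum, mul_assoc]
  · intro F
    rw [Fintype.prod_eq_mul_prod_subtype_ne _ i]
    rfl

theorem isPmf_pi {P : ι → β → ℝ} (hP : ∀ i, IsPmf (P i)) :
    IsPmf (fun F : ι → β => ∏ k, P k (F k)) := by
  refine ⟨fun F => Finset.prod_nonneg fun k _ => (hP k).1 _, ?_⟩
  rw [sum_pi_prod]
  exact Finset.prod_eq_one fun k _ => (hP k).2

/-- One-dimensional marginals of a product distribution. -/
theorem sum_pi_one {P : ι → β → ℝ} (hP : ∀ i, IsPmf (P i)) (i : ι) (φ : β → ℝ) :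
    ∑ F : ι → β, (∏ k, P k (F k)) * φ (F i) = ∑ b, P i b * φ b := by
  rw [sum_pi_split P i (fun b _ => φ b)]
  refine Finset.sum_congr rfl fun b _ => ?_
  rw [← Finset.sum_mul, (isPmf_pi (fun k : {j // j ≠ i} => hP k)).2, one_mul]

/-- Two-dimensional marginals of a product distribution. -/
theorem sum_pi_two {P : ι → β → ℝ} (hP : ∀ i, IsPmf (P i)) {i j : ι} (hij : i ≠ j)
    (φ : β → β → ℝ) :
    ∑ F : ι → β, (∏ k, P k (F k)) * φ (F i) (F j) = ∑ b, P i b * ∑ b', P j b' * φ b b' := by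
  rw [sum_pi_split P i (fun b G => φ b (G ⟨j, hij.symm⟩))]
  refine Finset.sum_congr rfl fun b _ => ?_
  rw [sum_pi_one (fun k : {j // j ≠ i} => hP k) ⟨j, hij.symm⟩ (φ b)]

end PiSums

section Indicator

open Classical in
/-- Real-valued indicator of a proposition. -/
noncomputable def ind (p : Prop) : ℝ := if p then 1 else 0

theorem ind_pos {p : Prop} (h : p) : ind p = 1 := if_pos h

theorem ind_neg {p : Prop} (h : ¬p) : ind p = 0 := if_neg h

theorem ind_nonneg (p : Prop) : 0 ≤ ind p := by
  unfold ind; split_ifs <;> norm_num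

theorem ind_le_one (p : Prop) : ind p ≤ 1 := by
  unfold ind; split_ifs <;> norm_num

end Indicator

/-- Random coding with maximum a posteriori decoding: if the codewords have the marginal laws `P`
and, for every type `t` of confusion, the average likelihood of a competing codeword given the
transmitted one is `N t`, the expected error probability obeys a union bound over the types. -/
theorem exists_decoder_sum_error_le {Θ I W Z Y τ : Type*} [Fintype Θ] [Fintype I] [Nonempty I]
    [Fintype W] [Fintype Z] [Fintype Y] [Fintype τ]
    {π : Θ → ℝ} (hπ : ∀ θ, 0 ≤ π θ) {p : I → W → ℝ} (hp : ∀ i w, 0 ≤ p i w)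
    {K : Z → Y → ℝ} (hK : ∀ z y, 0 ≤ K z y) (cw : Θ → I → Z)
    {P : I → Z → ℝ} (hP : ∀ i z, 0 ≤ P i z)
    (R : τ → I → I → Prop) (hR : ∀ i j, i ≠ j → ∃ t, R t i j)
    (N : τ → I → Z → Y → ℝ) (M : τ → I → W → Z → Y → ℝ)
    (hM : ∀ t i w z y, ∑ j, ind (R t i j) * (p j w * N t j z y) ≤ M t i w z y)
    (h1 : ∀ i (h : Z → ℝ), ∑ θ, π θ * h (cw θ i) = ∑ z, P i z * h z)
    (h2 : ∀ t i j, R t i j → ∀ (h : Z → ℝ) y,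
      ∑ θ, π θ * (h (cw θ i) * K (cw θ j) y) = ∑ z, P i z * (h z * N t j z y)) :
    ∃ dec : Θ → Y → W → I,
      ∑ θ, π θ * ∑ i, ∑ w, ∑ y, p i w * K (cw θ i) y * ind (dec θ y w ≠ i) ≤
        ∑ t, ∑ i, ∑ w, ∑ y, ∑ z, P i z * min (p i w * K z y) (M t i w z y) := by
  have hmax : ∀ θ y w, ∃ i, ∀ j, p j w * K (cw θ j) y ≤ p i w * K (cw θ i) y := fun θ y w =>
    Finite.exists_max (fun i => p i w * K (cw θ i) y)
  choose dec hdec using hmax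
  refine ⟨dec, ?_⟩
  -- pointwise union bound
  have hpt : ∀ θ i w y, p i w * K (cw θ i) y * ind (dec θ y w ≠ i) ≤
      ∑ t, (ind (p i w * K (cw θ i) y ≤ M t i w (cw θ i) y) * (p i w * K (cw θ i) y) +
        ∑ j, ind (R t i j) * p j w *
          (ind (¬ p i w * K (cw θ i) y ≤ M t i w (cw θ i) y) * K (cw θ j) y)) := by
    intro θ i w y
    have hnn : ∀ t, ∀ j, 0 ≤ ind (R t i j) * p j w *
          (ind (¬ p i w * K (cw θ i) y ≤ M t i w (cw θ i) y) * K (cw θ j) y) := fun t j =>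
      mul_nonneg (mul_nonneg (ind_nonneg _) (hp _ _)) (mul_nonneg (ind_nonneg _) (hK _ _))
    have h0 : ∀ t, 0 ≤ ind (p i w * K (cw θ i) y ≤ M t i w (cw θ i) y) * (p i w * K (cw θ i) y) :=
      fun t => mul_nonneg (ind_nonneg _) (mul_nonneg (hp _ _) (hK _ _))
    by_cases he : dec θ y w = i
    · rw [ind_neg (by simpa using he), mul_zero]
      exact Finset.sum_nonneg fun t _ => add_nonneg (h0 t) (Finset.sum_nonneg fun j _ => hnn t j)
    · rw [ind_pos he, mul_one]
      obtain ⟨t, ht⟩ := hR i (dec θ y w) (Ne.symm he)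
      refine le_trans ?_ (Finset.single_le_sum (fun t _ =>
        add_nonneg (h0 t) (Finset.sum_nonneg fun j _ => hnn t j)) (Finset.mem_univ t))
      by_cases hc : p i w * K (cw θ i) y ≤ M t i w (cw θ i) y
      · rw [ind_pos hc, one_mul]
        exact le_add_of_nonneg_right (Finset.sum_nonneg fun j _ => hnn t j)
      · refine le_trans ?_ (le_add_of_nonneg_left (h0 t))
        refine le_trans ?_ (Finset.single_le_sum (fun j _ => hnn t j)
          (Finset.mem_univ (dec θ y w)))
        rw [ind_pos ht, ind_pos hc, one_mul, one_mul]
        exact hdec θ y w i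
  -- expectation of the right-hand side
  have hE : ∀ t i w y, ∑ θ, π θ *
      (ind (p i w * K (cw θ i) y ≤ M t i w (cw θ i) y) * (p i w * K (cw θ i) y) +
        ∑ j, ind (R t i j) * p j w *
          (ind (¬ p i w * K (cw θ i) y ≤ M t i w (cw θ i) y) * K (cw θ j) y)) ≤
      ∑ z, P i z * min (p i w * K z y) (M t i w z y) := by
    intro t i w y
    simp only [mul_add, Finset.sum_add_distrib]
    rw [h1 i (fun z => ind (p i w * K z y ≤ M t i w z y) * (p i w * K z y))]
    have hsw : ∑ θ, π θ * ∑ j, ind (R t i j) * p j w *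
          (ind (¬ p i w * K (cw θ i) y ≤ M t i w (cw θ i) y) * K (cw θ j) y) =
        ∑ z, P i z * (ind (¬ p i w * K z y ≤ M t i w z y) *
          ∑ j, ind (R t i j) * (p j w * N t j z y)) := by
      simp only [Finset.mul_sum]
      rw [Finset.sum_comm, Finset.sum_comm (s := (Finset.univ : Finset Z))]
      refine Finset.sum_congr rfl fun j _ => ?_
      by_cases hr : R t i j
      · have := h2 t i j hr (fun z => ind (¬ p i w * K z y ≤ M t i w z y)) y
        simp only [ind_pos hr, one_mul]
        calc _ = p j w * ∑ θ, π θ * (ind (¬ p i w * K (cw θ i) y ≤ M t i w (cw θ i) y) *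
              K (cw θ j) y) := by
              rw [Finset.mul_sum]; exact Finset.sum_congr rfl fun θ _ => by ring
          _ = _ := by
              rw [this, Finset.mul_sum]; exact Finset.sum_congr rfl fun θ _ => by ring
      · simp [ind_neg hr]
    rw [hsw, ← Finset.sum_add_distrib]
    refine Finset.sum_le_sum fun z _ => ?_
    rw [← mul_add]
    refine mul_le_mul_of_nonneg_left ?_ (hP i z)
    by_cases hc : p i w * K z y ≤ M t i w z y
    · rw [ind_pos hc, ind_neg (not_not.2 hc), min_eq_left hc]; simp
    · rw [ind_neg hc, ind_pos hc, min_eq_right (not_le.1 hc).le]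
      simpa using hM t i w z y
  calc ∑ θ, π θ * ∑ i, ∑ w, ∑ y, p i w * K (cw θ i) y * ind (dec θ y w ≠ i)
      ≤ ∑ θ, π θ * ∑ i, ∑ w, ∑ y, ∑ t,
        (ind (p i w * K (cw θ i) y ≤ M t i w (cw θ i) y) * (p i w * K (cw θ i) y) +
        ∑ j, ind (R t i j) * p j w *
          (ind (¬ p i w * K (cw θ i) y ≤ M t i w (cw θ i) y) * K (cw θ j) y)) := by
        gcongr with θ _ i _ w _ y _
        · exact hπ θ
        · exact hpt θ i w y
    _ = ∑ t, ∑ i, ∑ w, ∑ y, ∑ θ, π θ *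
        (ind (p i w * K (cw θ i) y ≤ M t i w (cw θ i) y) * (p i w * K (cw θ i) y) +
        ∑ j, ind (R t i j) * p j w *
          (ind (¬ p i w * K (cw θ i) y ≤ M t i w (cw θ i) y) * K (cw θ j) y)) := by
        simp only [Finset.mul_sum (s := (Finset.univ : Finset I)),
          Finset.mul_sum (s := (Finset.univ : Finset W)),
          Finset.mul_sum (s := (Finset.univ : Finset Y)),
          Finset.mul_sum (s := (Finset.univ : Finset τ))]
        rw [Finset.sum_comm]
        simp only [Finset.sum_comm (s := (Finset.univ : Finset Θ))]
        simp only [Finset.sum_comm (t := (Finset.univ : Finset τ))]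
    _ ≤ _ := by
        gcongr with t _ i _ w _ y _
        exact hE t i w y

end MARC

namespace MARC

section PairLaw

variable {ι β : Type*} [Fintype ι] [DecidableEq ι] [Fintype β]

open Classical in
/-- Conditional law of a second coordinate given that the first one equals `b`: a copy of `b` when
the coordinates coincide (`e`), an independent draw from `P` otherwise. -/
noncomputable def fresh (e : Prop) (P : β → ℝ) (b b' : β) : ℝ :=
  if e then (if b' = b then 1 else 0) else P b'

theorem sum_fresh_true (P : β → ℝ) (b : β) (φ : β → ℝ) :
    ∑ b', fresh True P b b' * φ b' = φ b := by
  rw [Finset.sum_eq_single b (fun b' _ h => by simp [fresh, h]) (by simp)]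
  simp [fresh]

theorem sum_fresh_false (P : β → ℝ) (b : β) (φ : β → ℝ) :
    ∑ b', fresh False P b b' * φ b' = ∑ b', P b' * φ b' := by
  simp [fresh]

theorem sum_pi_pair {P : ι → β → ℝ} (hP : ∀ i, IsPmf (P i)) (i j : ι) (φ : β → β → ℝ) :
    ∑ F : ι → β, (∏ k, P k (F k)) * φ (F i) (F j) =
      ∑ b, P i b * ∑ b', fresh (i = j) (P j) b b' * φ b b' := by
  by_cases h : i = j
  · subst h
    simp only [sum_fresh_true]
    exact sum_pi_one hP i (fun b => φ b b)
  · simp only [h, sum_fresh_false]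
    exact sum_pi_two hP h φ

theorem sum_mul_sum_mul_comm {α : Type*} [Fintype α] (k : β → ℝ) (a : α → ℝ)
    (F : β → α → ℝ) : ∑ b, k b * ∑ c, a c * F b c = ∑ c, a c * ∑ b, k b * F b c := by
  simp only [Finset.mul_sum]
  rw [Finset.sum_comm]
  exact Finset.sum_congr rfl fun _ _ => Finset.sum_congr rfl fun _ _ => mul_left_comm _ _ _

end PairLaw

/-- Single-letter data of the coding scheme: law `pS` of the sources, joint laws `pR`, `pD` of the
sources with the side information of the relay and of the destination, the auxiliary and input
laws, and the channels `QR`, `QD` to the relay and to the destination. -/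
structure Kernels (S1 S2 W W3 V1 V2 X1 X2 X3 Y Y3 : Type*) where
  pS : S1 × S2 → ℝ
  pR : S1 × S2 → W3 → ℝ
  pD : S1 × S2 → W → ℝ
  pV1 : V1 → ℝ
  pV2 : V2 → ℝ
  pX1 : S1 → V1 → X1 → ℝ
  pX2 : S2 → V2 → X2 → ℝ
  pX3 : V1 → V2 → X3 → ℝ
  QR : X1 × X2 × X3 → Y3 → ℝ
  QD : X1 × X2 × X3 → Y → ℝ

namespace Kernels

variable {S1 S2 W W3 V1 V2 X1 X2 X3 Y Y3 : Type*}
  [Fintype S1] [Fintype S2] [Fintype W] [Fintype W3] [Fintype V1] [Fintype V2]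
  [Fintype X1] [Fintype X2] [Fintype X3] [Fintype Y] [Fintype Y3]

structure Valid (D : Kernels S1 S2 W W3 V1 V2 X1 X2 X3 Y Y3) : Prop where
  pS : IsPmf D.pS
  pR_nonneg : ∀ c w, 0 ≤ D.pR c w
  pR_sum : ∀ c, ∑ w, D.pR c w = D.pS c
  pD_nonneg : ∀ c w, 0 ≤ D.pD c w
  pD_sum : ∀ c, ∑ w, D.pD c w = D.pS c
  pV1 : IsPmf D.pV1
  pV2 : IsPmf D.pV2
  pX1 : ∀ s v, IsPmf (D.pX1 s v)
  pX2 : ∀ s v, IsPmf (D.pX2 s v)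
  pX3 : ∀ v1 v2, IsPmf (D.pX3 v1 v2)
  QR : ∀ x, IsPmf (D.QR x)
  QD : ∀ x, IsPmf (D.QD x)

variable (D : Kernels S1 S2 W W3 V1 V2 X1 X2 X3 Y Y3)

/-- Law of `(V1, V2, X1, X2, X3)` given the sources. -/
def law (c : S1 × S2) (z : V1 × V2 × X1 × X2 × X3) : ℝ :=
  D.pV1 z.1 * (D.pV2 z.2.1 * (D.pX1 c.1 z.1 z.2.2.1 * (D.pX2 c.2 z.2.1 z.2.2.2.1 *
    D.pX3 z.1 z.2.1 z.2.2.2.2)))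

/-- A codebook: the auxiliary codewords, the source codewords indexed by the current and the
previous source block, and the relay codewords. -/
abbrev Codebook (S1 S2 V1 V2 X1 X2 X3 : Type*) :=
  (S1 → V1) × (S2 → V2) × (S1 × S1 → X1) × (S2 × S2 → X2) × (S1 × S2 → X3)

/-- The codewords used with current sources `c` and previous sources `s`. -/
def codeword (θ : Codebook S1 S2 V1 V2 X1 X2 X3) (c s : S1 × S2) : V1 × V2 × X1 × X2 × X3 :=
  (θ.1 s.1, θ.2.1 s.2, θ.2.2.1 (c.1, s.1), θ.2.2.2.1 (c.2, s.2), θ.2.2.2.2 s)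

/-- Law of the random codebook. -/
def codebookLaw (θ : Codebook S1 S2 V1 V2 X1 X2 X3) : ℝ :=
  (∏ s, D.pV1 (θ.1 s)) * ((∏ s, D.pV2 (θ.2.1 s)) *
    ((∏ i : S1 × S1, D.pX1 i.1 (θ.1 i.2) (θ.2.2.1 i)) *
    ((∏ i : S2 × S2, D.pX2 i.1 (θ.2.1 i.2) (θ.2.2.2.1 i)) *
      ∏ i : S1 × S2, D.pX3 (θ.1 i.1) (θ.2.1 i.2) (θ.2.2.2.2 i))))

variable {D}

theorem Valid.law_nonneg (hD : D.Valid) (c : S1 × S2) (z : V1 × V2 × X1 × X2 × X3) :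
    0 ≤ D.law c z :=
  mul_nonneg (hD.pV1.1 _) (mul_nonneg (hD.pV2.1 _) (mul_nonneg ((hD.pX1 _ _).1 _)
    (mul_nonneg ((hD.pX2 _ _).1 _) ((hD.pX3 _ _).1 _))))

theorem Valid.sum_law (hD : D.Valid) (c : S1 × S2) : ∑ z, D.law c z = 1 := by
  simp only [law, Fintype.sum_prod_type, ← Finset.mul_sum, (hD.pX3 _ _).2, (hD.pX2 _ _).2,
    (hD.pX1 _ _).2, hD.pV2.2, hD.pV1.2, mul_one]

theorem Valid.codebookLaw_nonneg (hD : D.Valid) (θ : Codebook S1 S2 V1 V2 X1 X2 X3) :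
    0 ≤ D.codebookLaw θ :=
  mul_nonneg (Finset.prod_nonneg fun _ _ => hD.pV1.1 _) <|
    mul_nonneg (Finset.prod_nonneg fun _ _ => hD.pV2.1 _) <|
    mul_nonneg (Finset.prod_nonneg fun _ _ => (hD.pX1 _ _).1 _) <|
    mul_nonneg (Finset.prod_nonneg fun _ _ => (hD.pX2 _ _).1 _) <|
    Finset.prod_nonneg fun _ _ => (hD.pX3 _ _).1 _

variable [DecidableEq S1] [DecidableEq S2]

/-- Joint law of the codewords at two indices. -/
theorem Valid.sum_codebookLaw_pair (hD : D.Valid) (c s c' s' : S1 × S2)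
    (φ : V1 × V2 × X1 × X2 × X3 → V1 × V2 × X1 × X2 × X3 → ℝ) :
    ∑ θ, D.codebookLaw θ * φ (codeword θ c s) (codeword θ c' s') =
      ∑ z, D.law c z * ∑ z' : V1 × V2 × X1 × X2 × X3,
        fresh (s.1 = s'.1) D.pV1 z.1 z'.1 * (fresh (s.2 = s'.2) D.pV2 z.2.1 z'.2.1 *
        (fresh ((c.1, s.1) = (c'.1, s'.1)) (D.pX1 c'.1 z'.1) z.2.2.1 z'.2.2.1 *
        (fresh ((c.2, s.2) = (c'.2, s'.2)) (D.pX2 c'.2 z'.2.1) z.2.2.2.1 z'.2.2.2.1 *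
        (fresh (s = s') (D.pX3 z'.1 z'.2.1) z.2.2.2.2 z'.2.2.2.2 * φ z z')))) := by
  have step : ∑ θ, D.codebookLaw θ * φ (codeword θ c s) (codeword θ c' s') =
      ∑ v1, D.pV1 v1 * ∑ v1', fresh (s.1 = s'.1) D.pV1 v1 v1' *
      ∑ v2, D.pV2 v2 * ∑ v2', fresh (s.2 = s'.2) D.pV2 v2 v2' *
      ∑ x1, D.pX1 c.1 v1 x1 * ∑ x1', fresh ((c.1, s.1) = (c'.1, s'.1)) (D.pX1 c'.1 v1') x1 x1' *
      ∑ x2, D.pX2 c.2 v2 x2 * ∑ x2', fresh ((c.2, s.2) = (c'.2, s'.2)) (D.pX2 c'.2 v2') x2 x2' *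
      ∑ x3, D.pX3 v1 v2 x3 * ∑ x3', fresh (s = s') (D.pX3 v1' v2') x3 x3' *
        φ (v1, v2, x1, x2, x3) (v1', v2', x1', x2', x3') := by
    simp only [codebookLaw, codeword, Fintype.sum_prod_type (α₁ := S1 → V1),
      Fintype.sum_prod_type (α₁ := S2 → V2), Fintype.sum_prod_type (α₁ := S1 × S1 → X1),
      Fintype.sum_prod_type (α₁ := S2 × S2 → X2), mul_assoc, ← Finset.mul_sum]
    rw [← sum_pi_pair (fun _ => hD.pV1) s.1 s'.1 (fun v1 v1' =>
      ∑ v2, D.pV2 v2 * ∑ v2', fresh (s.2 = s'.2) D.pV2 v2 v2' *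
      ∑ x1, D.pX1 c.1 v1 x1 * ∑ x1', fresh ((c.1, s.1) = (c'.1, s'.1)) (D.pX1 c'.1 v1') x1 x1' *
      ∑ x2, D.pX2 c.2 v2 x2 * ∑ x2', fresh ((c.2, s.2) = (c'.2, s'.2)) (D.pX2 c'.2 v2') x2 x2' *
      ∑ x3, D.pX3 v1 v2 x3 * ∑ x3', fresh (s = s') (D.pX3 v1' v2') x3 x3' *
        φ (v1, v2, x1, x2, x3) (v1', v2', x1', x2', x3'))]
    refine Finset.sum_congr rfl fun F1 _ => congrArg _ ?_
    rw [← sum_pi_pair (fun _ => hD.pV2) s.2 s'.2 (fun v2 v2' =>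
      ∑ x1, D.pX1 c.1 (F1 s.1) x1 * ∑ x1', fresh ((c.1, s.1) = (c'.1, s'.1))
        (D.pX1 c'.1 (F1 s'.1)) x1 x1' *
      ∑ x2, D.pX2 c.2 v2 x2 * ∑ x2', fresh ((c.2, s.2) = (c'.2, s'.2)) (D.pX2 c'.2 v2') x2 x2' *
      ∑ x3, D.pX3 (F1 s.1) v2 x3 * ∑ x3', fresh (s = s') (D.pX3 (F1 s'.1) v2') x3 x3' *
        φ (F1 s.1, v2, x1, x2, x3) (F1 s'.1, v2', x1', x2', x3'))]
    refine Finset.sum_congr rfl fun F2 _ => congrArg _ ?_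
    rw [← sum_pi_pair (P := fun i : S1 × S1 => D.pX1 i.1 (F1 i.2)) (fun _ => hD.pX1 _ _)
      (c.1, s.1) (c'.1, s'.1) (fun x1 x1' =>
      ∑ x2, D.pX2 c.2 (F2 s.2) x2 * ∑ x2', fresh ((c.2, s.2) = (c'.2, s'.2))
        (D.pX2 c'.2 (F2 s'.2)) x2 x2' *
      ∑ x3, D.pX3 (F1 s.1) (F2 s.2) x3 * ∑ x3', fresh (s = s') (D.pX3 (F1 s'.1) (F2 s'.2)) x3 x3' *
        φ (F1 s.1, F2 s.2, x1, x2, x3) (F1 s'.1, F2 s'.2, x1', x2', x3'))]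
    refine Finset.sum_congr rfl fun G1 _ => congrArg _ ?_
    rw [← sum_pi_pair (P := fun i : S2 × S2 => D.pX2 i.1 (F2 i.2)) (fun _ => hD.pX2 _ _)
      (c.2, s.2) (c'.2, s'.2) (fun x2 x2' =>
      ∑ x3, D.pX3 (F1 s.1) (F2 s.2) x3 * ∑ x3', fresh (s = s') (D.pX3 (F1 s'.1) (F2 s'.2)) x3 x3' *
        φ (F1 s.1, F2 s.2, G1 (c.1, s.1), x2, x3) (F1 s'.1, F2 s'.2, G1 (c'.1, s'.1), x2', x3'))]
    refine Finset.sum_congr rfl fun G2 _ => congrArg _ ?_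
    rw [← sum_pi_pair (P := fun i : S1 × S2 => D.pX3 (F1 i.1) (F2 i.2)) (fun _ => hD.pX3 _ _)
      s s' (fun x3 x3' => φ (F1 s.1, F2 s.2, G1 (c.1, s.1), G2 (c.2, s.2), x3)
        (F1 s'.1, F2 s'.2, G1 (c'.1, s'.1), G2 (c'.2, s'.2), x3'))]
  rw [step]
  simp only [law, Fintype.sum_prod_type, mul_assoc, ← Finset.mul_sum]
  refine Finset.sum_congr rfl fun v1 _ => congrArg _ ?_
  rw [sum_mul_sum_mul_comm]
  refine Finset.sum_congr rfl fun v2 _ => congrArg _ ?_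
  conv_lhs => enter [2, v1', 2]; rw [sum_mul_sum_mul_comm]
  rw [sum_mul_sum_mul_comm]
  refine Finset.sum_congr rfl fun x1 _ => congrArg _ ?_
  conv_lhs => enter [2, v1', 2, 2, v2', 2]; rw [sum_mul_sum_mul_comm]
  conv_lhs => enter [2, v1', 2]; rw [sum_mul_sum_mul_comm]
  rw [sum_mul_sum_mul_comm]
  refine Finset.sum_congr rfl fun x2 _ => congrArg _ ?_
  conv_lhs => enter [2, v1', 2, 2, v2', 2, 2, x1', 2]; rw [sum_mul_sum_mul_comm]
  conv_lhs => enter [2, v1', 2, 2, v2', 2]; rw [sum_mul_sum_mul_comm]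
  conv_lhs => enter [2, v1', 2]; rw [sum_mul_sum_mul_comm]
  rw [sum_mul_sum_mul_comm]

theorem Valid.sum_codebookLaw_single (hD : D.Valid) (c s : S1 × S2)
    (φ : V1 × V2 × X1 × X2 × X3 → ℝ) :
    ∑ θ, D.codebookLaw θ * φ (codeword θ c s) = ∑ z, D.law c z * φ z := by
  rw [hD.sum_codebookLaw_pair c s c s (fun z _ => φ z)]
  refine Finset.sum_congr rfl fun z _ => congrArg _ ?_
  simp only [Fintype.sum_prod_type, ← Finset.mul_sum, sum_fresh_true]

theorem Valid.isPmf_codebookLaw [Nonempty S1] [Nonempty S2] (hD : D.Valid) :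
    IsPmf D.codebookLaw := by
  refine ⟨hD.codebookLaw_nonneg, ?_⟩
  have c : S1 × S2 := Classical.arbitrary _
  have := hD.sum_codebookLaw_single c c (fun _ => 1)
  simpa [hD.sum_law] using this

end Kernels

end MARC

namespace MARC

theorem min_le_rpow_mul_rpow {a b t : ℝ} (ha : 0 ≤ a) (hb : 0 ≤ b) (ht0 : 0 < t) (ht1 : t < 1) :
    min a b ≤ a ^ (1 - t) * b ^ t := by
  have hm : 0 ≤ min a b := le_min ha hb
  calc min a b = min a b ^ (1 - t) * min a b ^ t := by
        rw [← Real.rpow_add' hm (by simp), sub_add_cancel, Real.rpow_one]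
    _ ≤ a ^ (1 - t) * b ^ t :=
        mul_le_mul (Real.rpow_le_rpow hm (min_le_left _ _) (by linarith))
          (Real.rpow_le_rpow hm (min_le_right _ _) ht0.le) (Real.rpow_nonneg hm _)
          (Real.rpow_nonneg ha _)

/-- Weighted Chernoff-type functional `∑ q a^(1-t) M^t`. -/
noncomputable def bhat {Λ : Type*} [Fintype Λ] (q a M : Λ → ℝ) (t : ℝ) : ℝ :=
  ∑ x, q x * (a x ^ (1 - t) * M x ^ t)

theorem sum_mul_min_le_bhat {Λ : Type*} [Fintype Λ] {q a M : Λ → ℝ} {t : ℝ} (hq : ∀ x, 0 ≤ q x)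
    (ha : ∀ x, 0 ≤ a x) (hM : ∀ x, 0 ≤ M x) (ht0 : 0 < t) (ht1 : t < 1) :
    ∑ x, q x * min (a x) (M x) ≤ bhat q a M t :=
  Finset.sum_le_sum fun x _ =>
    mul_le_mul_of_nonneg_left (min_le_rpow_mul_rpow (ha x) (hM x) ht0 ht1) (hq x)

section Confusion

variable {A B : Type*} [Fintype A] [Fintype B]

/-- The three ways of confusing a pair with another one. -/
def Confusion : Fin 3 → A × B → A × B → Prop
  | 0 => fun i j => i.1 ≠ j.1 ∧ i.2 = j.2
  | 1 => fun i j => i.1 = j.1 ∧ i.2 ≠ j.2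
  | 2 => fun i j => i.1 ≠ j.1 ∧ i.2 ≠ j.2

theorem exists_confusion {i j : A × B} (h : i ≠ j) : ∃ t, Confusion t i j := by
  by_cases h1 : i.1 = j.1
  · exact ⟨1, h1, fun h2 => h (Prod.ext h1 h2)⟩
  · by_cases h2 : i.2 = j.2
    · exact ⟨0, h1, h2⟩
    · exact ⟨2, h1, h2⟩

theorem sum_ind_mul_le {g : A × B → ℝ} (hg : ∀ j, 0 ≤ g j) (R : A × B → Prop) :
    ∑ j, ind (R j) * g j ≤ ∑ j, g j :=
  Finset.sum_le_sum fun j _ => mul_le_of_le_one_left (hg j) (ind_le_one _)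

theorem sum_ind_mul_le_fst {g : A × B → ℝ} (hg : ∀ j, 0 ≤ g j) {R : A × B → Prop} {b : B}
    (hR : ∀ j, R j → b = j.2) : ∑ j, ind (R j) * g j ≤ ∑ a, g (a, b) := by
  rw [Fintype.sum_prod_type]
  refine Finset.sum_le_sum fun a _ => ?_
  rw [Finset.sum_eq_single b (fun b' _ hb' => ?_) (by simp)]
  · exact mul_le_of_le_one_left (hg _) (ind_le_one _)
  · rw [ind_neg fun h => hb' (hR _ h).symm, zero_mul]

theorem sum_ind_mul_le_snd {g : A × B → ℝ} (hg : ∀ j, 0 ≤ g j) {R : A × B → Prop} {a : A}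
    (hR : ∀ j, R j → a = j.1) : ∑ j, ind (R j) * g j ≤ ∑ b, g (a, b) := by
  rw [Fintype.sum_prod_type_right]
  refine Finset.sum_le_sum fun b _ => ?_
  rw [Finset.sum_eq_single a (fun a' _ ha' => ?_) (by simp)]
  · exact mul_le_of_le_one_left (hg _) (ind_le_one _)
  · rw [ind_neg fun h => ha' (hR _ h).symm, zero_mul]

end Confusion

namespace Kernels

variable {S1 S2 W W3 V1 V2 X1 X2 X3 Y Y3 : Type*}
  [Fintype S1] [Fintype S2] [Fintype W] [Fintype W3] [Fintype V1] [Fintype V2]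
  [Fintype X1] [Fintype X2] [Fintype X3] [Fintype Y] [Fintype Y3]

/-- Exchange of the roles of the two users. -/
def swap (D : Kernels S1 S2 W W3 V1 V2 X1 X2 X3 Y Y3) :
    Kernels S2 S1 W W3 V2 V1 X2 X1 X3 Y Y3 where
  pS := fun c => D.pS c.swap
  pR := fun c => D.pR c.swap
  pD := fun c => D.pD c.swap
  pV1 := D.pV2
  pV2 := D.pV1
  pX1 := D.pX2
  pX2 := D.pX1
  pX3 := fun v2 v1 => D.pX3 v1 v2
  QR := fun x => D.QR (x.2.1, x.1, x.2.2)
  QD := fun x => D.QD (x.2.1, x.1, x.2.2)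

/-- Exchange of the roles of the two users on codewords. -/
def swapZ (z : V1 × V2 × X1 × X2 × X3) : V2 × V1 × X2 × X1 × X3 :=
  (z.2.1, z.1, z.2.2.2.1, z.2.2.1, z.2.2.2.2)

variable (D : Kernels S1 S2 W W3 V1 V2 X1 X2 X3 Y Y3)

/-- Mean likelihood at the relay of a codeword of user 1 for the wrong source `c1`. -/
def NR1 (c1 : S1) (z : V1 × V2 × X1 × X2 × X3) (y : Y3) : ℝ :=
  ∑ x1, D.pX1 c1 z.1 x1 * D.QR (x1, z.2.2.2) y

/-- Mean likelihood at the relay when both sources are wrong. -/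
def NR3 (c : S1 × S2) (z : V1 × V2 × X1 × X2 × X3) (y : Y3) : ℝ :=
  ∑ x1, D.pX1 c.1 z.1 x1 * ∑ x2, D.pX2 c.2 z.2.1 x2 * D.QR (x1, x2, z.2.2.2.2) y

/-- Mean likelihood at the destination when the source of user 1 is wrong. -/
def ND1 (c1 : S1) (z : V1 × V2 × X1 × X2 × X3) (y : Y) : ℝ :=
  ∑ v1, D.pV1 v1 * ∑ x1, D.pX1 c1 v1 x1 * ∑ x3, D.pX3 v1 z.2.1 x3 * D.QD (x1, z.2.2.2.1, x3) y

/-- Mean likelihood at the destination when both sources are wrong. -/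
def ND3 (c : S1 × S2) (y : Y) : ℝ := ∑ z, D.law c z * D.QD z.2.2 y

def MR1 (i : S1 × S2) (w : W3) (z : V1 × V2 × X1 × X2 × X3) (y : Y3) : ℝ :=
  ∑ c1, D.pR (c1, i.2) w * D.NR1 c1 z y

def MR3 (w : W3) (z : V1 × V2 × X1 × X2 × X3) (y : Y3) : ℝ :=
  ∑ c, D.pR c w * D.NR3 c z y

def MD1 (c i : S1 × S2) (w : W) (z : V1 × V2 × X1 × X2 × X3) (y : Y) : ℝ :=
  (∑ s1, D.pD (s1, i.2) w) * D.ND1 c.1 z y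

def MD3 (c : S1 × S2) (w : W) (y : Y) : ℝ := (∑ s, D.pD s w) * D.ND3 c y

/-- Letters entering the decision of the relay. -/
abbrev RelayLetter (S1 S2 W3 V1 V2 X1 X2 X3 Y3 : Type*) :=
  (S1 × S2) × W3 × Y3 × (V1 × V2 × X1 × X2 × X3)

/-- Letters entering the decision of the destination: current sources, previous sources, side
information on the latter, channel output, codeword letters. -/
abbrev DestLetter (S1 S2 W V1 V2 X1 X2 X3 Y : Type*) :=
  (S1 × S2) × (S1 × S2) × W × Y × (V1 × V2 × X1 × X2 × X3)

def relayWeight (x : RelayLetter S1 S2 W3 V1 V2 X1 X2 X3 Y3) : ℝ := D.law x.1 x.2.2.2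

def relayScore (x : RelayLetter S1 S2 W3 V1 V2 X1 X2 X3 Y3) : ℝ :=
  D.pR x.1 x.2.1 * D.QR x.2.2.2.2.2 x.2.2.1

def destWeight (x : DestLetter S1 S2 W V1 V2 X1 X2 X3 Y) : ℝ := D.pS x.1 * D.law x.1 x.2.2.2.2

def destScore (x : DestLetter S1 S2 W V1 V2 X1 X2 X3 Y) : ℝ :=
  D.pD x.2.1 x.2.2.1 * D.QD x.2.2.2.2.2.2 x.2.2.2.1

noncomputable def fR1 : ℝ → ℝ :=
  bhat D.relayWeight D.relayScore (fun x => D.MR1 x.1 x.2.1 x.2.2.2 x.2.2.1)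

noncomputable def fR3 : ℝ → ℝ :=
  bhat D.relayWeight D.relayScore (fun x => D.MR3 x.2.1 x.2.2.2 x.2.2.1)

noncomputable def fD1 : ℝ → ℝ :=
  bhat D.destWeight D.destScore (fun x => D.MD1 x.1 x.2.1 x.2.2.1 x.2.2.2.2 x.2.2.2.1)

noncomputable def fD3 : ℝ → ℝ :=
  bhat D.destWeight D.destScore (fun x => D.MD3 x.1 x.2.2.1 x.2.2.2.1)

variable {D}

theorem Valid.swap (hD : D.Valid) : D.swap.Valid where
  pS := ⟨fun _ => hD.pS.1 _, (Equiv.sum_comp (Equiv.prodComm S2 S1) D.pS).trans hD.pS.2⟩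
  pR_nonneg := fun _ _ => hD.pR_nonneg _ _
  pR_sum := fun _ => hD.pR_sum _
  pD_nonneg := fun _ _ => hD.pD_nonneg _ _
  pD_sum := fun _ => hD.pD_sum _
  pV1 := hD.pV2
  pV2 := hD.pV1
  pX1 := hD.pX2
  pX2 := hD.pX1
  pX3 := fun _ _ => hD.pX3 _ _
  QR := fun _ => hD.QR _
  QD := fun _ => hD.QD _

theorem swap_law (c : S1 × S2) (z : V1 × V2 × X1 × X2 × X3) :
    D.swap.law c.swap (swapZ z) = D.law c z := by
  simp only [law, Kernels.swap, swapZ, Prod.fst_swap, Prod.snd_swap]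
  ring

theorem Valid.NR1_nonneg (hD : D.Valid) (c1 : S1) (z : V1 × V2 × X1 × X2 × X3) (y : Y3) :
    0 ≤ D.NR1 c1 z y :=
  Finset.sum_nonneg fun _ _ => mul_nonneg ((hD.pX1 _ _).1 _) ((hD.QR _).1 _)

theorem Valid.NR3_nonneg (hD : D.Valid) (c : S1 × S2) (z : V1 × V2 × X1 × X2 × X3) (y : Y3) :
    0 ≤ D.NR3 c z y :=
  Finset.sum_nonneg fun _ _ => mul_nonneg ((hD.pX1 _ _).1 _) <|
    Finset.sum_nonneg fun _ _ => mul_nonneg ((hD.pX2 _ _).1 _) ((hD.QR _).1 _)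

theorem Valid.ND1_nonneg (hD : D.Valid) (c1 : S1) (z : V1 × V2 × X1 × X2 × X3) (y : Y) :
    0 ≤ D.ND1 c1 z y :=
  Finset.sum_nonneg fun _ _ => mul_nonneg (hD.pV1.1 _) <|
    Finset.sum_nonneg fun _ _ => mul_nonneg ((hD.pX1 _ _).1 _) <|
    Finset.sum_nonneg fun _ _ => mul_nonneg ((hD.pX3 _ _).1 _) ((hD.QD _).1 _)

theorem Valid.ND3_nonneg (hD : D.Valid) (c : S1 × S2) (y : Y) : 0 ≤ D.ND3 c y :=
  Finset.sum_nonneg fun _ _ => mul_nonneg (hD.law_nonneg _ _) ((hD.QD _).1 _)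

theorem Valid.MR1_nonneg (hD : D.Valid) (i : S1 × S2) (w : W3) (z : V1 × V2 × X1 × X2 × X3)
    (y : Y3) : 0 ≤ D.MR1 i w z y :=
  Finset.sum_nonneg fun _ _ => mul_nonneg (hD.pR_nonneg _ _) (hD.NR1_nonneg _ _ _)

theorem Valid.MR3_nonneg (hD : D.Valid) (w : W3) (z : V1 × V2 × X1 × X2 × X3) (y : Y3) :
    0 ≤ D.MR3 w z y :=
  Finset.sum_nonneg fun _ _ => mul_nonneg (hD.pR_nonneg _ _) (hD.NR3_nonneg _ _ _)

theorem Valid.MD1_nonneg (hD : D.Valid) (c i : S1 × S2) (w : W) (z : V1 × V2 × X1 × X2 × X3)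
    (y : Y) : 0 ≤ D.MD1 c i w z y :=
  mul_nonneg (Finset.sum_nonneg fun _ _ => hD.pD_nonneg _ _) (hD.ND1_nonneg _ _ _)

theorem Valid.MD3_nonneg (hD : D.Valid) (c : S1 × S2) (w : W) (y : Y) : 0 ≤ D.MD3 c w y :=
  mul_nonneg (Finset.sum_nonneg fun _ _ => hD.pD_nonneg _ _) (hD.ND3_nonneg _ _)

theorem Valid.relayScore_nonneg (hD : D.Valid) (x : RelayLetter S1 S2 W3 V1 V2 X1 X2 X3 Y3) :
    0 ≤ D.relayScore x := mul_nonneg (hD.pR_nonneg _ _) ((hD.QR _).1 _)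

theorem Valid.destScore_nonneg (hD : D.Valid) (x : DestLetter S1 S2 W V1 V2 X1 X2 X3 Y) :
    0 ≤ D.destScore x := mul_nonneg (hD.pD_nonneg _ _) ((hD.QD _).1 _)

theorem Valid.relayWeight_nonneg (hD : D.Valid) (x : RelayLetter S1 S2 W3 V1 V2 X1 X2 X3 Y3) :
    0 ≤ D.relayWeight x := hD.law_nonneg _ _

theorem Valid.destWeight_nonneg (hD : D.Valid) (x : DestLetter S1 S2 W V1 V2 X1 X2 X3 Y) :
    0 ≤ D.destWeight x := mul_nonneg (hD.pS.1 _) (hD.law_nonneg _ _)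

variable (D) in
/-- Error probability of the relay decoder that knows the previous source block. -/
noncomputable def relayError (x1 : S1 → S1 → X1) (x2 : S2 → S2 → X2) (x3 : S1 × S2 → X3)
    (gR : S1 × S2 → Y3 → W3 → S1 × S2) (a : S1 × S2) : ℝ :=
  ∑ c, ∑ w, ∑ y, D.pR c w * D.QR (x1 c.1 a.1, x2 c.2 a.2, x3 a) y * ind (gR a y w ≠ c)

variable (D) in
/-- Error probability of the destination decoder that knows the current source block. -/
noncomputable def destError (x1 : S1 → S1 → X1) (x2 : S2 → S2 → X2) (x3 : S1 × S2 → X3)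
    (gD : S1 × S2 → Y → W → S1 × S2) (c : S1 × S2) : ℝ :=
  ∑ s, ∑ w, ∑ y, D.pD s w * D.QD (x1 c.1 s.1, x2 c.2 s.2, x3 s) y * ind (gD c y w ≠ s)

variable [DecidableEq S1] [DecidableEq S2]

theorem Valid.exists_relay_decoder [Nonempty S1] [Nonempty S2] (hD : D.Valid) (a : S1 × S2)
    {t : Fin 3 → ℝ} (ht0 : ∀ i, 0 < t i) (ht1 : ∀ i, t i < 1) :
    ∃ dec : Codebook S1 S2 V1 V2 X1 X2 X3 → Y3 → W3 → S1 × S2,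
      ∑ θ, D.codebookLaw θ * ∑ c, ∑ w, ∑ y, D.pR c w * D.QR (codeword θ c a).2.2 y *
          ind (dec θ y w ≠ c) ≤
        D.fR1 (t 0) + D.swap.fR1 (t 1) + D.fR3 (t 2) := by
  obtain ⟨dec, hdec⟩ := exists_decoder_sum_error_le hD.codebookLaw_nonneg hD.pR_nonneg
    (K := fun z : V1 × V2 × X1 × X2 × X3 => D.QR z.2.2) (fun z y => (hD.QR _).1 y)
    (fun θ i => codeword θ i a) hD.law_nonneg Confusion (fun i j h => exists_confusion h)
    (fun t j z y => match t with
      | 0 => D.NR1 j.1 z y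
      | 1 => D.swap.NR1 j.2 (swapZ z) y
      | 2 => D.NR3 j z y)
    (fun t i w z y => match t with
      | 0 => D.MR1 i w z y
      | 1 => D.swap.MR1 i.swap w (swapZ z) y
      | 2 => D.MR3 w z y)
    (fun t i w z y => match t with
      | 0 => sum_ind_mul_le_fst (g := fun j => D.pR j w * D.NR1 j.1 z y)
          (fun _ => mul_nonneg (hD.pR_nonneg _ _) (hD.NR1_nonneg _ _ _)) fun _ h => h.2
      | 1 => sum_ind_mul_le_snd (g := fun j => D.pR j w * D.swap.NR1 j.2 (swapZ z) y)
          (fun _ => mul_nonneg (hD.pR_nonneg _ _) (hD.swap.NR1_nonneg _ _ _)) fun _ h => h.1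
      | 2 => sum_ind_mul_le
          (fun _ => mul_nonneg (hD.pR_nonneg _ _) (hD.NR3_nonneg _ _ _)) _)
    (fun i h => hD.sum_codebookLaw_single i a h)
    (fun t i j hij h y => by
      rw [hD.sum_codebookLaw_pair i a j a (fun z z' => h z * D.QR z'.2.2 y)]
      refine Finset.sum_congr rfl fun z _ => congrArg _ ?_
      match t, hij with
      | 0, hij =>
        have h1 : i.1 ≠ j.1 := hij.1
        have h2 : i.2 = j.2 := hij.2
        simp only [Fintype.sum_prod_type, ← Finset.mul_sum, Prod.mk.injEq, h1, h2, and_true,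
          sum_fresh_true, sum_fresh_false, NR1]
        simp only [mul_left_comm _ (h z), ← Finset.mul_sum]
      | 1, hij =>
        have h1 : i.1 = j.1 := hij.1
        have h2 : i.2 ≠ j.2 := hij.2
        simp only [Fintype.sum_prod_type, ← Finset.mul_sum, Prod.mk.injEq, h1, h2, and_true,
          sum_fresh_true, sum_fresh_false, NR1, Kernels.swap, swapZ]
        simp only [mul_left_comm _ (h z), ← Finset.mul_sum]
      | 2, hij =>
        have h1 : i.1 ≠ j.1 := hij.1
        have h2 : i.2 ≠ j.2 := hij.2
        simp only [Fintype.sum_prod_type, ← Finset.mul_sum, Prod.mk.injEq, h1, h2, and_true,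
          sum_fresh_true, sum_fresh_false, NR3]
        simp only [mul_left_comm _ (h z), ← Finset.mul_sum])
  refine ⟨dec, hdec.trans ?_⟩
  rw [Fin.sum_univ_three]
  refine add_le_add (add_le_add ?_ ?_) ?_
  · refine le_trans (le_of_eq ?_) (sum_mul_min_le_bhat hD.relayWeight_nonneg hD.relayScore_nonneg
      (fun x => hD.MR1_nonneg _ _ _ _) (ht0 0) (ht1 0))
    simp only [Fintype.sum_prod_type (α₁ := S1 × S2), Fintype.sum_prod_type (α₁ := W3),
      Fintype.sum_prod_type (α₁ := Y3)]
    rfl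
  · refine le_trans (le_of_eq ?_) (sum_mul_min_le_bhat hD.swap.relayWeight_nonneg
      hD.swap.relayScore_nonneg (fun x => hD.swap.MR1_nonneg _ _ _ _) (ht0 1) (ht1 1))
    simp only [Fintype.sum_prod_type (α₁ := S2 × S1), Fintype.sum_prod_type (α₁ := W3),
      Fintype.sum_prod_type (α₁ := Y3)]
    refine Fintype.sum_equiv (Equiv.prodComm S1 S2) _ _ fun i => Finset.sum_congr rfl fun w _ =>
      Finset.sum_congr rfl fun y _ => Fintype.sum_equiv
        (⟨swapZ, swapZ, fun _ => rfl, fun _ => rfl⟩ :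
          (V1 × V2 × X1 × X2 × X3) ≃ (V2 × V1 × X2 × X1 × X3)) _ _ fun z => ?_
    rw [← swap_law i z]
    rfl
  · refine le_trans (le_of_eq ?_) (sum_mul_min_le_bhat hD.relayWeight_nonneg hD.relayScore_nonneg
      (fun x => hD.MR3_nonneg _ _ _) (ht0 2) (ht1 2))
    simp only [Fintype.sum_prod_type (α₁ := S1 × S2), Fintype.sum_prod_type (α₁ := W3),
      Fintype.sum_prod_type (α₁ := Y3)]
    rfl

end Kernels

end MARC

namespace MARC

namespace Kernels

variable {S1 S2 W W3 V1 V2 X1 X2 X3 Y Y3 : Type*}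
  [Fintype S1] [Fintype S2] [Fintype W] [Fintype W3] [Fintype V1] [Fintype V2]
  [Fintype X1] [Fintype X2] [Fintype X3] [Fintype Y] [Fintype Y3]
  {D : Kernels S1 S2 W W3 V1 V2 X1 X2 X3 Y Y3} [DecidableEq S1] [DecidableEq S2]

theorem Valid.exists_dest_decoder [Nonempty S1] [Nonempty S2] (hD : D.Valid) (c : S1 × S2) :
    ∃ dec : Codebook S1 S2 V1 V2 X1 X2 X3 → Y → W → S1 × S2,
      ∑ θ, D.codebookLaw θ * ∑ s, ∑ w, ∑ y, D.pD s w * D.QD (codeword θ c s).2.2 y *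
          ind (dec θ y w ≠ s) ≤
        ∑ i, ∑ w, ∑ y, ∑ z, D.law c z * min (D.pD i w * D.QD z.2.2 y) (D.MD1 c i w z y) +
        ∑ i, ∑ w, ∑ y, ∑ z, D.law c z *
          min (D.pD i w * D.QD z.2.2 y) (D.swap.MD1 c.swap i.swap w (swapZ z) y) +
        ∑ i, ∑ w, ∑ y, ∑ z, D.law c z * min (D.pD i w * D.QD z.2.2 y) (D.MD3 c w y) := by
  obtain ⟨dec, hdec⟩ := exists_decoder_sum_error_le hD.codebookLaw_nonneg hD.pD_nonneg
    (K := fun z : V1 × V2 × X1 × X2 × X3 => D.QD z.2.2) (fun z y => (hD.QD _).1 y)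
    (fun θ i => codeword θ c i) (fun _ => hD.law_nonneg c) Confusion
    (fun i j h => exists_confusion h)
    (fun t _ z y => match t with
      | 0 => D.ND1 c.1 z y
      | 1 => D.swap.ND1 c.2 (swapZ z) y
      | 2 => D.ND3 c y)
    (fun t i w z y => match t with
      | 0 => D.MD1 c i w z y
      | 1 => D.swap.MD1 c.swap i.swap w (swapZ z) y
      | 2 => D.MD3 c w y)
    (fun t i w z y => match t with
      | 0 => by
          rw [MD1, Finset.sum_mul]
          exact sum_ind_mul_le_fst (g := fun j => D.pD j w * D.ND1 c.1 z y)
            (fun _ => mul_nonneg (hD.pD_nonneg _ _) (hD.ND1_nonneg _ _ _)) fun _ h => h.2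
      | 1 => by
          rw [show D.swap.MD1 c.swap i.swap w (swapZ z) y =
            ∑ b, D.pD (i.1, b) w * D.swap.ND1 c.2 (swapZ z) y from Finset.sum_mul _ _ _]
          exact sum_ind_mul_le_snd (g := fun j => D.pD j w * D.swap.ND1 c.2 (swapZ z) y)
            (fun _ => mul_nonneg (hD.pD_nonneg _ _) (hD.swap.ND1_nonneg _ _ _)) fun _ h => h.1
      | 2 => by
          rw [MD3, Finset.sum_mul]
          exact sum_ind_mul_le
            (fun _ => mul_nonneg (hD.pD_nonneg _ _) (hD.ND3_nonneg _ _)) _)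
    (fun i h => hD.sum_codebookLaw_single c i h)
    (fun t i j hij h y => by
      rw [hD.sum_codebookLaw_pair c i c j (fun z z' => h z * D.QD z'.2.2 y)]
      refine Finset.sum_congr rfl fun z _ => congrArg _ ?_
      match t, hij with
      | 0, hij =>
        have h1 : i.1 ≠ j.1 := hij.1
        have h2 : i.2 = j.2 := hij.2
        have h3 : i ≠ j := fun h => h1 (congrArg Prod.fst h)
        simp only [Fintype.sum_prod_type, ← Finset.mul_sum, Prod.mk.injEq, h1, h2, h3,
          and_false, sum_fresh_true, sum_fresh_false, ND1]
        simp only [mul_left_comm _ (h z), ← Finset.mul_sum]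
      | 1, hij =>
        have h1 : i.1 = j.1 := hij.1
        have h2 : i.2 ≠ j.2 := hij.2
        have h3 : i ≠ j := fun h => h2 (congrArg Prod.snd h)
        simp only [Fintype.sum_prod_type, ← Finset.mul_sum, Prod.mk.injEq, h1, h2, h3,
          and_false, sum_fresh_true, sum_fresh_false, ND1, Kernels.swap, swapZ]
        simp only [mul_left_comm _ (h z), ← Finset.mul_sum]
      | 2, hij =>
        have h1 : i.1 ≠ j.1 := hij.1
        have h2 : i.2 ≠ j.2 := hij.2
        have h3 : i ≠ j := fun h => h2 (congrArg Prod.snd h)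
        simp only [Fintype.sum_prod_type, ← Finset.mul_sum, Prod.mk.injEq, h1, h2, h3,
          and_false, sum_fresh_false, ND3, law, mul_assoc]
        simp only [mul_left_comm _ (h z), ← Finset.mul_sum])
  refine ⟨dec, hdec.trans (le_of_eq ?_)⟩
  rw [Fin.sum_univ_three]

/-- Existence of a good block code: the relay knows the previous source block, the destination
the current one. -/
theorem Valid.exists_code [Nonempty S1] [Nonempty S2] (hD : D.Valid)
    {t : Fin 6 → ℝ} (ht0 : ∀ i, 0 < t i) (ht1 : ∀ i, t i < 1) :
    ∃ (x1 : S1 → S1 → X1) (x2 : S2 → S2 → X2) (x3 : S1 × S2 → X3)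
      (gR : S1 × S2 → Y3 → W3 → S1 × S2) (gD : S1 × S2 → Y → W → S1 × S2),
      ∑ a, D.pS a * D.relayError x1 x2 x3 gR a + ∑ c, D.pS c * D.destError x1 x2 x3 gD c ≤
        (D.fR1 (t 0) + D.swap.fR1 (t 1) + D.fR3 (t 2)) +
          (D.fD1 (t 3) + D.swap.fD1 (t 4) + D.fD3 (t 5)) := by
  choose decR hR using fun a => hD.exists_relay_decoder a
    (t := ![t 0, t 1, t 2]) (by intro i; fin_cases i <;> exact ht0 _)
    (by intro i; fin_cases i <;> exact ht1 _)
  choose decD hdD using fun c => hD.exists_dest_decoder c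
  have hrelay : ∑ θ, D.codebookLaw θ * ∑ a, D.pS a * ∑ c, ∑ w, ∑ y,
      D.pR c w * D.QR (codeword θ c a).2.2 y * ind (decR a θ y w ≠ c) ≤
      D.fR1 (t 0) + D.swap.fR1 (t 1) + D.fR3 (t 2) := by
    rw [sum_mul_sum_mul_comm]
    calc _ ≤ ∑ a, D.pS a * (D.fR1 (t 0) + D.swap.fR1 (t 1) + D.fR3 (t 2)) :=
          Finset.sum_le_sum fun a _ => mul_le_mul_of_nonneg_left (hR a) (hD.pS.1 a)
      _ = _ := by rw [← Finset.sum_mul, hD.pS.2, one_mul]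
  have hdest : ∑ θ, D.codebookLaw θ * ∑ c, D.pS c * ∑ s, ∑ w, ∑ y,
      D.pD s w * D.QD (codeword θ c s).2.2 y * ind (decD c θ y w ≠ s) ≤
      D.fD1 (t 3) + D.swap.fD1 (t 4) + D.fD3 (t 5) := by
    rw [sum_mul_sum_mul_comm]
    refine (Finset.sum_le_sum fun c _ =>
      mul_le_mul_of_nonneg_left (hdD c) (hD.pS.1 c)).trans ?_
    simp only [mul_add, Finset.sum_add_distrib]
    refine add_le_add (add_le_add ?_ ?_) ?_
    · refine le_trans (le_of_eq ?_) (sum_mul_min_le_bhat hD.destWeight_nonneg hD.destScore_nonneg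
        (fun x => hD.MD1_nonneg _ _ _ _ _) (ht0 3) (ht1 3))
      simp only [Fintype.sum_prod_type (α₁ := S1 × S2), Fintype.sum_prod_type (α₁ := W),
        Fintype.sum_prod_type (α₁ := Y), Finset.mul_sum, destWeight, destScore, mul_assoc]
    · refine le_trans (le_of_eq ?_) (sum_mul_min_le_bhat hD.swap.destWeight_nonneg
        hD.swap.destScore_nonneg (fun x => hD.swap.MD1_nonneg _ _ _ _ _) (ht0 4) (ht1 4))
      simp only [Fintype.sum_prod_type (α₁ := S2 × S1), Fintype.sum_prod_type (α₁ := W),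
        Fintype.sum_prod_type (α₁ := Y), Finset.mul_sum]
      refine Fintype.sum_equiv (Equiv.prodComm S1 S2) _ _ fun c =>
        Fintype.sum_equiv (Equiv.prodComm S1 S2) _ _ fun i => Finset.sum_congr rfl fun w _ =>
        Finset.sum_congr rfl fun y _ => Fintype.sum_equiv
        (⟨swapZ, swapZ, fun _ => rfl, fun _ => rfl⟩ :
          (V1 × V2 × X1 × X2 × X3) ≃ (V2 × V1 × X2 × X1 × X3)) _ _ fun z => ?_
      rw [← swap_law c z, ← mul_assoc]
      rfl
    · refine le_trans (le_of_eq ?_) (sum_mul_min_le_bhat hD.destWeight_nonneg hD.destScore_nonneg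
        (fun x => hD.MD3_nonneg _ _ _) (ht0 5) (ht1 5))
      simp only [Fintype.sum_prod_type (α₁ := S1 × S2), Fintype.sum_prod_type (α₁ := W),
        Fintype.sum_prod_type (α₁ := Y), Finset.mul_sum, destWeight, destScore, mul_assoc]
  obtain ⟨θ, hθ⟩ : ∃ θ, ∑ a, D.pS a * ∑ c, ∑ w, ∑ y,
      D.pR c w * D.QR (codeword θ c a).2.2 y * ind (decR a θ y w ≠ c) +
      ∑ c, D.pS c * ∑ s, ∑ w, ∑ y,
      D.pD s w * D.QD (codeword θ c s).2.2 y * ind (decD c θ y w ≠ s) ≤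
      (D.fR1 (t 0) + D.swap.fR1 (t 1) + D.fR3 (t 2)) +
          (D.fD1 (t 3) + D.swap.fD1 (t 4) + D.fD3 (t 5)) := by
    have hp := hD.isPmf_codebookLaw
    by_contra! hcon
    have hsum := add_le_add hrelay hdest
    rw [← Finset.sum_add_distrib] at hsum
    simp only [← mul_add] at hsum
    have hle : ∀ θ, D.codebookLaw θ * ((D.fR1 (t 0) + D.swap.fR1 (t 1) + D.fR3 (t 2)) +
          (D.fD1 (t 3) + D.swap.fD1 (t 4) + D.fD3 (t 5))) ≤ _ := fun θ =>
      mul_le_mul_of_nonneg_left (hcon θ).le (hp.1 θ)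
    obtain ⟨θ, -, hθ⟩ : ∃ θ ∈ Finset.univ, 0 < D.codebookLaw θ := by
      apply Finset.exists_lt_of_sum_lt
      simp [hp.2]
    have hlt := Finset.sum_lt_sum (fun θ _ => hle θ)
      ⟨θ, Finset.mem_univ _, mul_lt_mul_of_pos_left (hcon θ) hθ⟩
    rw [← Finset.sum_mul, hp.2, one_mul] at hlt
    exact absurd hsum (not_le.2 hlt)
  exact ⟨fun c a => θ.2.2.1 (c, a), fun c a => θ.2.2.2.1 (c, a), θ.2.2.2.2,
    fun a => decR a θ, fun c => decD c θ, hθ⟩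

end Kernels

end MARC

namespace MARC

section Pi

variable {T Λ Λ' : Type*} [Fintype T] [DecidableEq T] [Fintype Λ] [Fintype Λ']

theorem sum_eq_prod_sum (e : (T → Λ) ≃ Λ') {φ : Λ' → ℝ} {ψ : T → Λ → ℝ}
    (h : ∀ F, φ (e F) = ∏ k, ψ k (F k)) : ∑ x, φ x = ∏ k, ∑ a, ψ k a := by
  rw [← sum_pi_prod ψ, ← Equiv.sum_comp e]
  exact Finset.sum_congr rfl fun F _ => h F

theorem sum_pi_mul (A B : T → Λ → ℝ) :
    ∑ f : T → Λ, (∏ k, A k (f k)) * (∏ k, B k (f k)) = ∏ k, ∑ a, A k a * B k a :=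
  sum_eq_prod_sum (Equiv.refl _) fun _ => Finset.prod_mul_distrib.symm

theorem bhat_pi (e : (T → Λ) ≃ Λ') {q a M : Λ' → ℝ} {q' a' M' : T → Λ → ℝ}
    (hq : ∀ F, q (e F) = ∏ k, q' k (F k)) (ha : ∀ F, a (e F) = ∏ k, a' k (F k))
    (hM : ∀ F, M (e F) = ∏ k, M' k (F k)) (ha0 : ∀ k x, 0 ≤ a' k x) (hM0 : ∀ k x, 0 ≤ M' k x)
    (t : ℝ) : bhat q a M t = ∏ k, bhat (q' k) (a' k) (M' k) t :=
  sum_eq_prod_sum e fun F => by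
    rw [hq, ha, hM, ← Real.finsetProd_rpow _ _ fun k _ => ha0 k _,
      ← Real.finsetProd_rpow _ _ fun k _ => hM0 k _, ← Finset.prod_mul_distrib,
      ← Finset.prod_mul_distrib]

end Pi

namespace Kernels

variable {S1 S2 W W3 V1 V2 X1 X2 X3 Y Y3 T : Type*} [Fintype T]

/-- Product of single-letter data. -/
def pi (D : T → Kernels S1 S2 W W3 V1 V2 X1 X2 X3 Y Y3) :
    Kernels (T → S1) (T → S2) (T → W) (T → W3) (T → V1) (T → V2) (T → X1) (T → X2) (T → X3)
      (T → Y) (T → Y3) where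
  pS := fun c => ∏ k, (D k).pS (c.1 k, c.2 k)
  pR := fun c w => ∏ k, (D k).pR (c.1 k, c.2 k) (w k)
  pD := fun c w => ∏ k, (D k).pD (c.1 k, c.2 k) (w k)
  pV1 := fun v => ∏ k, (D k).pV1 (v k)
  pV2 := fun v => ∏ k, (D k).pV2 (v k)
  pX1 := fun s v x => ∏ k, (D k).pX1 (s k) (v k) (x k)
  pX2 := fun s v x => ∏ k, (D k).pX2 (s k) (v k) (x k)
  pX3 := fun v1 v2 x => ∏ k, (D k).pX3 (v1 k) (v2 k) (x k)
  QR := fun x y => ∏ k, (D k).QR (x.1 k, x.2.1 k, x.2.2 k) (y k)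
  QD := fun x y => ∏ k, (D k).QD (x.1 k, x.2.1 k, x.2.2 k) (y k)

theorem swap_pi (D : T → Kernels S1 S2 W W3 V1 V2 X1 X2 X3 Y Y3) :
    (pi D).swap = pi fun k => (D k).swap := rfl

def pairPi (T S1 S2 : Type*) : (T → S1 × S2) ≃ (T → S1) × (T → S2) :=
  ⟨fun F => (fun k => (F k).1, fun k => (F k).2), fun c k => (c.1 k, c.2 k),
    fun _ => rfl, fun _ => rfl⟩

def wordPi (T V1 V2 X1 X2 X3 : Type*) : (T → V1 × V2 × X1 × X2 × X3) ≃
    (T → V1) × (T → V2) × (T → X1) × (T → X2) × (T → X3) :=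
  ⟨fun F => (fun k => (F k).1, fun k => (F k).2.1, fun k => (F k).2.2.1, fun k => (F k).2.2.2.1,
    fun k => (F k).2.2.2.2), fun z k => (z.1 k, z.2.1 k, z.2.2.1 k, z.2.2.2.1 k, z.2.2.2.2 k),
    fun _ => rfl, fun _ => rfl⟩

def relayLetterPi (T S1 S2 W3 V1 V2 X1 X2 X3 Y3 : Type*) :
    (T → RelayLetter S1 S2 W3 V1 V2 X1 X2 X3 Y3) ≃ RelayLetter (T → S1) (T → S2) (T → W3)
      (T → V1) (T → V2) (T → X1) (T → X2) (T → X3) (T → Y3) :=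
  ⟨fun F => (pairPi T S1 S2 fun k => (F k).1, fun k => (F k).2.1, fun k => (F k).2.2.1,
      wordPi T V1 V2 X1 X2 X3 fun k => (F k).2.2.2),
    fun x k => ((pairPi T S1 S2).symm x.1 k, x.2.1 k, x.2.2.1 k,
      (wordPi T V1 V2 X1 X2 X3).symm x.2.2.2 k), fun _ => rfl, fun _ => rfl⟩

def destLetterPi (T S1 S2 W V1 V2 X1 X2 X3 Y : Type*) :
    (T → DestLetter S1 S2 W V1 V2 X1 X2 X3 Y) ≃ DestLetter (T → S1) (T → S2) (T → W)
      (T → V1) (T → V2) (T → X1) (T → X2) (T → X3) (T → Y) :=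
  ⟨fun F => (pairPi T S1 S2 fun k => (F k).1, pairPi T S1 S2 fun k => (F k).2.1,
      fun k => (F k).2.2.1, fun k => (F k).2.2.2.1,
      wordPi T V1 V2 X1 X2 X3 fun k => (F k).2.2.2.2),
    fun x k => ((pairPi T S1 S2).symm x.1 k, (pairPi T S1 S2).symm x.2.1 k, x.2.2.1 k,
      x.2.2.2.1 k, (wordPi T V1 V2 X1 X2 X3).symm x.2.2.2.2 k), fun _ => rfl, fun _ => rfl⟩

theorem law_pi (D : T → Kernels S1 S2 W W3 V1 V2 X1 X2 X3 Y Y3) (c : T → S1 × S2)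
    (z : T → V1 × V2 × X1 × X2 × X3) :
    (pi D).law (pairPi _ _ _ c) (wordPi _ _ _ _ _ _ z) = ∏ k, (D k).law (c k) (z k) := by
  simp only [law, Finset.prod_mul_distrib]
  rfl

variable [DecidableEq T] [Fintype S1] [Fintype S2] [Fintype W] [Fintype W3] [Fintype V1]
  [Fintype V2] [Fintype X1] [Fintype X2] [Fintype X3] [Fintype Y] [Fintype Y3]
  {D : T → Kernels S1 S2 W W3 V1 V2 X1 X2 X3 Y Y3}

theorem Valid.pi (hD : ∀ k, (D k).Valid) : (pi D).Valid where
  pS := ⟨fun _ => Finset.prod_nonneg fun _ _ => (hD _).pS.1 _, by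
    rw [sum_eq_prod_sum (pairPi T S1 S2) (φ := (Kernels.pi D).pS) (ψ := fun k => (D k).pS)
      (fun _ => rfl)]
    exact Finset.prod_eq_one fun k _ => (hD k).pS.2⟩
  pR_nonneg := fun _ _ => Finset.prod_nonneg fun _ _ => (hD _).pR_nonneg _ _
  pR_sum := fun c => (sum_pi_prod fun k w => (D k).pR (c.1 k, c.2 k) w).trans
    (Finset.prod_congr rfl fun k _ => (hD k).pR_sum _)
  pD_nonneg := fun _ _ => Finset.prod_nonneg fun _ _ => (hD _).pD_nonneg _ _
  pD_sum := fun c => (sum_pi_prod fun k w => (D k).pD (c.1 k, c.2 k) w).trans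
    (Finset.prod_congr rfl fun k _ => (hD k).pD_sum _)
  pV1 := isPmf_pi fun k => (hD k).pV1
  pV2 := isPmf_pi fun k => (hD k).pV2
  pX1 := fun _ _ => isPmf_pi fun k => (hD k).pX1 _ _
  pX2 := fun _ _ => isPmf_pi fun k => (hD k).pX2 _ _
  pX3 := fun _ _ => isPmf_pi fun k => (hD k).pX3 _ _
  QR := fun _ => isPmf_pi fun k => (hD k).QR _
  QD := fun _ => isPmf_pi fun k => (hD k).QD _

theorem NR1_pi (c1 : T → S1) (z : T → V1 × V2 × X1 × X2 × X3) (y : T → Y3) :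
    (pi D).NR1 c1 (wordPi _ _ _ _ _ _ z) y = ∏ k, (D k).NR1 (c1 k) (z k) (y k) :=
  sum_pi_mul (fun k => (D k).pX1 (c1 k) (z k).1) fun k x => (D k).QR (x, (z k).2.2.2) (y k)

theorem NR3_pi (c : T → S1 × S2) (z : T → V1 × V2 × X1 × X2 × X3) (y : T → Y3) :
    (pi D).NR3 (pairPi _ _ _ c) (wordPi _ _ _ _ _ _ z) y =
      ∏ k, (D k).NR3 (c k) (z k) (y k) := by
  refine sum_eq_prod_sum (Equiv.refl _) (ψ := fun k x => (D k).pX1 (c k).1 (z k).1 x * ∑ x2,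
    (D k).pX2 (c k).2 (z k).2.1 x2 * (D k).QR (x, x2, (z k).2.2.2.2) (y k)) fun x => ?_
  rw [Finset.prod_mul_distrib]
  exact congrArg _ (sum_pi_mul (fun k => (D k).pX2 (c k).2 (z k).2.1)
    fun k x2 => (D k).QR (x k, x2, (z k).2.2.2.2) (y k))

theorem ND1_pi (c1 : T → S1) (z : T → V1 × V2 × X1 × X2 × X3) (y : T → Y) :
    (pi D).ND1 c1 (wordPi _ _ _ _ _ _ z) y = ∏ k, (D k).ND1 (c1 k) (z k) (y k) := by
  refine sum_eq_prod_sum (Equiv.refl _) (ψ := fun k v1 => (D k).pV1 v1 * ∑ x1,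
    (D k).pX1 (c1 k) v1 x1 * ∑ x3, (D k).pX3 v1 (z k).2.1 x3 *
      (D k).QD (x1, (z k).2.2.2.1, x3) (y k)) fun v1 => ?_
  rw [Finset.prod_mul_distrib]
  refine congrArg _ (sum_eq_prod_sum (Equiv.refl _) (ψ := fun k x1 =>
    (D k).pX1 (c1 k) (v1 k) x1 * ∑ x3, (D k).pX3 (v1 k) (z k).2.1 x3 *
      (D k).QD (x1, (z k).2.2.2.1, x3) (y k)) fun x1 => ?_)
  rw [Finset.prod_mul_distrib]
  exact congrArg _ (sum_pi_mul (fun k => (D k).pX3 (v1 k) (z k).2.1)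
    fun k x3 => (D k).QD (x1 k, (z k).2.2.2.1, x3) (y k))

theorem ND3_pi (c : T → S1 × S2) (y : T → Y) :
    (pi D).ND3 (pairPi _ _ _ c) y = ∏ k, (D k).ND3 (c k) (y k) :=
  sum_eq_prod_sum (wordPi T V1 V2 X1 X2 X3) (ψ := fun k z => (D k).law (c k) z *
    (D k).QD z.2.2 (y k)) fun z => by
    rw [law_pi, Finset.prod_mul_distrib]
    rfl

theorem MR1_pi (i : T → S1 × S2) (w : T → W3) (z : T → V1 × V2 × X1 × X2 × X3) (y : T → Y3) :
    (pi D).MR1 (pairPi _ _ _ i) w (wordPi _ _ _ _ _ _ z) y =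
      ∏ k, (D k).MR1 (i k) (w k) (z k) (y k) :=
  (Finset.sum_congr rfl fun _ _ => congrArg (_ * ·) <| NR1_pi _ _ _).trans <|
  sum_pi_mul (fun k c1 => (D k).pR (c1, (i k).2) (w k)) fun k c1 => (D k).NR1 c1 (z k) (y k)

theorem MR3_pi (w : T → W3) (z : T → V1 × V2 × X1 × X2 × X3) (y : T → Y3) :
    (pi D).MR3 w (wordPi _ _ _ _ _ _ z) y = ∏ k, (D k).MR3 (w k) (z k) (y k) :=
  sum_eq_prod_sum (pairPi T S1 S2) (ψ := fun k c => (D k).pR c (w k) *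
    (D k).NR3 c (z k) (y k)) fun c => by
    rw [NR3_pi, Finset.prod_mul_distrib]
    rfl

theorem MD1_pi (c i : T → S1 × S2) (w : T → W) (z : T → V1 × V2 × X1 × X2 × X3) (y : T → Y) :
    (pi D).MD1 (pairPi _ _ _ c) (pairPi _ _ _ i) w (wordPi _ _ _ _ _ _ z) y =
      ∏ k, (D k).MD1 (c k) (i k) (w k) (z k) (y k) := by
  simp only [MD1, ND1_pi, Finset.prod_mul_distrib]
  exact congr_arg₂ _ (sum_pi_prod fun k s => (D k).pD (s, (i k).2) (w k)) rfl

theorem MD3_pi (c : T → S1 × S2) (w : T → W) (y : T → Y) :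
    (pi D).MD3 (pairPi _ _ _ c) w y = ∏ k, (D k).MD3 (c k) (w k) (y k) := by
  simp only [MD3, ND3_pi, Finset.prod_mul_distrib]
  exact congrArg (· * _) (sum_eq_prod_sum (pairPi T S1 S2)
    (ψ := fun k s => (D k).pD s (w k)) fun _ => rfl)

theorem relayWeight_pi (x : T → RelayLetter S1 S2 W3 V1 V2 X1 X2 X3 Y3) :
    (pi D).relayWeight (relayLetterPi _ _ _ _ _ _ _ _ _ _ x) = ∏ k, (D k).relayWeight (x k) :=
  law_pi D _ _

theorem relayScore_pi (x : T → RelayLetter S1 S2 W3 V1 V2 X1 X2 X3 Y3) :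
    (pi D).relayScore (relayLetterPi _ _ _ _ _ _ _ _ _ _ x) = ∏ k, (D k).relayScore (x k) :=
  Finset.prod_mul_distrib.symm

theorem destWeight_pi (x : T → DestLetter S1 S2 W V1 V2 X1 X2 X3 Y) :
    (pi D).destWeight (destLetterPi _ _ _ _ _ _ _ _ _ _ x) = ∏ k, (D k).destWeight (x k) :=
  (congrArg (_ * ·) (law_pi D _ _)).trans Finset.prod_mul_distrib.symm

theorem destScore_pi (x : T → DestLetter S1 S2 W V1 V2 X1 X2 X3 Y) :
    (pi D).destScore (destLetterPi _ _ _ _ _ _ _ _ _ _ x) = ∏ k, (D k).destScore (x k) :=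
  Finset.prod_mul_distrib.symm

theorem fR1_pi (hD : ∀ k, (D k).Valid) (t : ℝ) : (pi D).fR1 t = ∏ k, (D k).fR1 t :=
  bhat_pi (relayLetterPi _ _ _ _ _ _ _ _ _ _) relayWeight_pi relayScore_pi
    (fun _ => MR1_pi _ _ _ _) (fun k => (hD k).relayScore_nonneg)
    (fun k _ => (hD k).MR1_nonneg _ _ _ _) t

theorem fR3_pi (hD : ∀ k, (D k).Valid) (t : ℝ) : (pi D).fR3 t = ∏ k, (D k).fR3 t :=
  bhat_pi (relayLetterPi _ _ _ _ _ _ _ _ _ _) relayWeight_pi relayScore_pi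
    (fun _ => MR3_pi _ _ _) (fun k => (hD k).relayScore_nonneg)
    (fun k _ => (hD k).MR3_nonneg _ _ _) t

theorem fD1_pi (hD : ∀ k, (D k).Valid) (t : ℝ) : (pi D).fD1 t = ∏ k, (D k).fD1 t :=
  bhat_pi (destLetterPi _ _ _ _ _ _ _ _ _ _) destWeight_pi destScore_pi
    (fun _ => MD1_pi _ _ _ _ _) (fun k => (hD k).destScore_nonneg)
    (fun k _ => (hD k).MD1_nonneg _ _ _ _ _) t

theorem fD3_pi (hD : ∀ k, (D k).Valid) (t : ℝ) : (pi D).fD3 t = ∏ k, (D k).fD3 t :=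
  bhat_pi (destLetterPi _ _ _ _ _ _ _ _ _ _) destWeight_pi destScore_pi
    (fun _ => MD3_pi _ _ _) (fun k => (hD k).destScore_nonneg)
    (fun k _ => (hD k).MD3_nonneg _ _ _) t

end Kernels

end MARC

namespace MARC

/-- A causally adapted product of stochastic kernels has total mass one. -/
theorem sum_causal_prod {O : Type*} [Fintype O] [Nonempty O] :
    ∀ {n : ℕ} (q : Fin n → (Fin n → O) → O → ℝ),
    (∀ k o, ∑ a, q k o a = 1) → (∀ k o o', (∀ j < k, o j = o' j) → q k o = q k o') →
    ∑ o : Fin n → O, ∏ k, q k o (o k) = 1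
  | 0, _, _, _ => by simp
  | n + 1, q, hq, hc => by
    obtain ⟨a0⟩ := ‹Nonempty O›
    have ih := sum_causal_prod (fun k o => q k.castSucc (Fin.snoc (α := fun _ => O) o a0))
      (fun _ _ => hq _ _) fun k o o' h => hc _ _ _ fun j hj => by
        have hjn : (j : ℕ) < n := lt_of_lt_of_le hj k.is_lt.le
        simp only [Fin.snoc, hjn, dite_true]
        exact h ⟨j, hjn⟩ hj
    rw [← Equiv.sum_comp (Fin.snocEquiv fun _ => O), Fintype.sum_prod_type_right, ← ih]
    refine Finset.sum_congr rfl fun o _ => ?_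
    simp only [Fin.snocEquiv, Equiv.coe_fn_mk, Fin.prod_univ_castSucc, Fin.snoc_castSucc,
      Fin.snoc_last]
    have h1 : ∀ a (k : Fin n), q k.castSucc (Fin.snoc (α := fun _ => O) o a) =
        q k.castSucc (Fin.snoc (α := fun _ => O) o a0) := fun a k => hc _ _ _ fun j hj => by
      have hjn : (j : ℕ) < n := lt_of_lt_of_le hj k.is_lt.le
      simp [Fin.snoc, hjn]
    have h2 : ∀ a, q (Fin.last n) (Fin.snoc (α := fun _ => O) o a) =
        q (Fin.last n) (Fin.snoc (α := fun _ => O) o a0) := fun a => hc _ _ _ fun j hj => by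
      have hjn : (j : ℕ) < n := hj
      simp [Fin.snoc, hjn]
    simp only [h1, h2, ← Finset.mul_sum, hq, mul_one]

section Blocks

variable {S Y Y3 W W3 : Type*} {B : ℕ}

/-- A sequence with boundary values. -/
def bdry (a c : S) (s : Fin B → S) : ℕ → S
  | 0 => a
  | j + 1 => if h : j < B then s ⟨j, h⟩ else c

/-- Forward recursive estimates of the relay. -/
def relayEst (a : S) (gR : S → Y3 → W3 → S) (y : Fin (B + 1) → Y3) (w : Fin B → W3) : ℕ → S
  | 0 => a
  | j + 1 => if h : j < B then
      gR (relayEst a gR y w j) (y (Fin.castSucc ⟨j, h⟩)) (w ⟨j, h⟩) else a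

/-- Backward recursive estimates of the destination. -/
def destEst (c : S) (gD : S → Y → W → S) (y : Fin (B + 1) → Y) (w : Fin B → W) : ℕ → S
  | 0 => c
  | k + 1 => if h : k < B then
      gD (destEst c gD y w k) (y (Fin.succ ⟨B - 1 - k, by omega⟩)) (w ⟨B - 1 - k, by omega⟩) else c

theorem bdry_succ (a c : S) (s : Fin B → S) (j : Fin B) : bdry a c s (j + 1) = s j := by
  simp [bdry]

theorem relayEst_eq {a c : S} {gR : S → Y3 → W3 → S} {y : Fin (B + 1) → Y3} {w : Fin B → W3}
    {s : Fin B → S} (h : ∀ j : Fin B, gR (bdry a c s j) (y j.castSucc) (w j) = s j) :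
    ∀ j ≤ B, relayEst a gR y w j = bdry a c s j
  | 0, _ => rfl
  | j + 1, hj => by
    have hj' : j < B := hj
    rw [relayEst, dif_pos hj', relayEst_eq h j hj'.le, h ⟨j, hj'⟩]
    exact (bdry_succ a c s ⟨j, hj'⟩).symm

theorem destEst_eq {a c : S} {gD : S → Y → W → S} {y : Fin (B + 1) → Y} {w : Fin B → W}
    {s : Fin B → S} (h : ∀ j : Fin B, gD (bdry a c s (j + 2)) (y j.succ) (w j) = s j) :
    ∀ k ≤ B, destEst c gD y w k = bdry a c s (B + 1 - k)
  | 0, _ => by simp [destEst, bdry]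
  | k + 1, hk => by
    have hk' : k < B := hk
    rw [destEst, dif_pos hk', destEst_eq h k hk'.le]
    have e : B + 1 - k = (B - 1 - k) + 2 := by omega
    have e' : B + 1 - (k + 1) = (B - 1 - k) + 1 := by omega
    rw [e, e', h ⟨B - 1 - k, by omega⟩]
    exact (bdry_succ a c s ⟨B - 1 - k, by omega⟩).symm

theorem relayEst_congr (a : S) (gR : S → Y3 → W3 → S) {y y' : Fin (B + 1) → Y3} (w : Fin B → W3) :
    ∀ j : ℕ, (∀ i : Fin (B + 1), (i : ℕ) < j → y i = y' i) →
      relayEst a gR y w j = relayEst a gR y' w j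
  | 0, _ => rfl
  | j + 1, h => by
    rw [relayEst, relayEst, relayEst_congr a gR w j fun i hi => h i (hi.trans (Nat.lt_succ_self j))]
    split_ifs with hj
    · rw [h (Fin.castSucc ⟨j, hj⟩) (by simp)]
    · rfl

end Blocks

section BlockMarkov

variable {S1 S2 W W3 X1 X2 X3 Y Y3 : Type*}
  [Fintype S1] [Fintype S2] [Fintype W] [Fintype W3] [Fintype Y] [Fintype Y3]

/-- Relay error probability given the previous sources `a`. -/
noncomputable def relayErr (p : S1 × S2 × W × W3 → ℝ) (Q : X1 × X2 × X3 → Y × Y3 → ℝ)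
    (x1 : S1 → S1 → X1) (x2 : S2 → S2 → X2) (x3 : S1 × S2 → X3)
    (gR : S1 × S2 → Y3 → W3 → S1 × S2) (a : S1 × S2) : ℝ :=
  ∑ ω, p ω * ∑ o, Q (x1 ω.1 a.1, x2 ω.2.1 a.2, x3 a) o * ind (gR a o.2 ω.2.2.2 ≠ (ω.1, ω.2.1))

/-- Destination error probability given the current sources `c`. -/
noncomputable def destErr (p : S1 × S2 × W × W3 → ℝ) (Q : X1 × X2 × X3 → Y × Y3 → ℝ)
    (x1 : S1 → S1 → X1) (x2 : S2 → S2 → X2) (x3 : S1 × S2 → X3)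
    (gD : S1 × S2 → Y → W → S1 × S2) (c : S1 × S2) : ℝ :=
  ∑ ω, p ω * ∑ o, Q (x1 c.1 ω.1, x2 c.2 ω.2.1, x3 (ω.1, ω.2.1)) o *
    ind (gD c o.1 ω.2.2.1 ≠ (ω.1, ω.2.1))

theorem exists_le_of_sum_mul_le {α : Type*} [Fintype α] {p f : α → ℝ} {e : ℝ} (hp : IsPmf p)
    (h : ∑ x, p x * f x ≤ e) : ∃ x, f x ≤ e := by
  by_contra! hcon
  obtain ⟨x, -, hx⟩ : ∃ x ∈ Finset.univ, 0 < p x := by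
    apply Finset.exists_lt_of_sum_lt
    simp [hp.2]
  have hlt := Finset.sum_lt_sum
    (fun x _ => mul_le_mul_of_nonneg_left (hcon x).le (hp.1 x))
    ⟨x, Finset.mem_univ _, mul_lt_mul_of_pos_left (hcon x) hx⟩
  rw [← Finset.sum_mul, hp.2, one_mul] at hlt
  exact absurd h (not_le.2 hlt)

/-- Block Markov coding with forward decoding at the relay and backward decoding at the
destination. -/
theorem exists_block_code {p : S1 × S2 × W × W3 → ℝ} (hp : IsPmf p)
    {Q : X1 × X2 × X3 → Y × Y3 → ℝ} (hQ : ∀ x, IsPmf (Q x))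
    {x1 : S1 → S1 → X1} {x2 : S2 → S2 → X2} {x3 : S1 × S2 → X3}
    {gR : S1 × S2 → Y3 → W3 → S1 × S2} {gD : S1 × S2 → Y → W → S1 × S2} {e : ℝ}
    (hR : ∑ ω, p ω * relayErr p Q x1 x2 x3 gR (ω.1, ω.2.1) ≤ e)
    (hD : ∑ ω, p ω * destErr p Q x1 x2 x3 gD (ω.1, ω.2.1) ≤ e) (B : ℕ) :
    ∃ (F1 : (Fin B → S1) → Fin (B + 1) → X1) (F2 : (Fin B → S2) → Fin (B + 1) → X2)
      (F3 : Fin (B + 1) → (Fin (B + 1) → Y3) → (Fin B → W3) → X3)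
      (g : (Fin (B + 1) → Y) → (Fin B → W) → Fin B → S1 × S2),
      (∀ k y y' w, (∀ j < k, y j = y' j) → F3 k y w = F3 k y' w) ∧
      ∑ ω : Fin B → S1 × S2 × W × W3, (∏ j, p (ω j)) * ∑ o : Fin (B + 1) → Y × Y3,
        (∏ j, Q (F1 (fun i => (ω i).1) j, F2 (fun i => (ω i).2.1) j,
          F3 j (fun i => (o i).2) (fun i => (ω i).2.2.2)) (o j)) *
        ind (g (fun i => (o i).1) (fun i => (ω i).2.2.1) ≠ fun i => ((ω i).1, (ω i).2.1)) ≤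
      2 * B * e := by
  obtain ⟨ωa, ha⟩ := exists_le_of_sum_mul_le hp hR
  obtain ⟨ωc, hc⟩ := exists_le_of_sum_mul_le hp hD
  set a : S1 × S2 := (ωa.1, ωa.2.1)
  set c : S1 × S2 := (ωc.1, ωc.2.1)
  refine ⟨fun s j => x1 (bdry a.1 c.1 s (j + 1)) (bdry a.1 c.1 s j),
    fun s j => x2 (bdry a.2 c.2 s (j + 1)) (bdry a.2 c.2 s j),
    fun j y w => x3 (relayEst a gR y w j), fun y w j => destEst c gD y w (B - j), ?_, ?_⟩
  · intro k y y' w h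
    exact congrArg x3 (relayEst_congr a gR w k fun i hi => h i hi)
  have hb1 : ∀ (ω : Fin B → S1 × S2 × W × W3) (j : ℕ),
      bdry a.1 c.1 (fun i => (ω i).1) j = (bdry a c (fun i => ((ω i).1, (ω i).2.1)) j).1 := by
    intro ω j; cases j <;> simp only [bdry]; split_ifs <;> rfl
  have hb2 : ∀ (ω : Fin B → S1 × S2 × W × W3) (j : ℕ),
      bdry a.2 c.2 (fun i => (ω i).2.1) j = (bdry a c (fun i => ((ω i).1, (ω i).2.1)) j).2 := by
    intro ω j; cases j <;> simp only [bdry]; split_ifs <;> rfl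
  simp only [hb1, hb2]
  set s : (Fin B → S1 × S2 × W × W3) → ℕ → S1 × S2 := fun ω =>
    bdry a c (fun i => ((ω i).1, (ω i).2.1)) with hs
  have hs1 : ∀ ω (j : Fin B), s ω (j + 1) = ((ω j).1, (ω j).2.1) := fun ω j => bdry_succ _ _ _ j
  set q : (Fin B → S1 × S2 × W × W3) → Fin (B + 1) → Y × Y3 → ℝ := fun ω j =>
    Q (x1 (s ω (j + 1)).1 (s ω j).1, x2 (s ω (j + 1)).2 (s ω j).2, x3 (s ω j)) with hq
  have hqp : ∀ ω j, IsPmf (q ω j) := fun ω j => hQ _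
  -- pointwise comparison with the genie-aided scheme
  have hpt : ∀ ω (o : Fin (B + 1) → Y × Y3),
      (∏ j : Fin (B + 1), Q (x1 (s ω (j + 1)).1 (s ω j).1, x2 (s ω (j + 1)).2 (s ω j).2,
        x3 (relayEst a gR (fun i => (o i).2) (fun i => (ω i).2.2.2) j)) (o j)) *
        ind ((fun j : Fin B => destEst c gD (fun i => (o i).1) (fun i => (ω i).2.2.1) (B - j)) ≠
          fun i => ((ω i).1, (ω i).2.1)) ≤
      ((∏ j : Fin (B + 1), Q (x1 (s ω (j + 1)).1 (s ω j).1, x2 (s ω (j + 1)).2 (s ω j).2,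
        x3 (relayEst a gR (fun i => (o i).2) (fun i => (ω i).2.2.2) j)) (o j)) -
        ∏ j, q ω j (o j)) +
      ∑ j : Fin B, ((∏ k, q ω k (o k)) *
          ind (gR (s ω j) (o j.castSucc).2 (ω j).2.2.2 ≠ ((ω j).1, (ω j).2.1)) +
        (∏ k, q ω k (o k)) *
          ind (gD (s ω (j + 2)) (o j.succ).1 (ω j).2.2.1 ≠ ((ω j).1, (ω j).2.1))) := by
    intro ω o
    have hq0 : 0 ≤ ∏ k, q ω k (o k) := Finset.prod_nonneg fun k _ => (hqp ω k).1 _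
    have hnn : ∀ j : Fin B, 0 ≤ (∏ k, q ω k (o k)) *
          ind (gR (s ω j) (o j.castSucc).2 (ω j).2.2.2 ≠ ((ω j).1, (ω j).2.1)) +
        (∏ k, q ω k (o k)) *
          ind (gD (s ω (j + 2)) (o j.succ).1 (ω j).2.2.1 ≠ ((ω j).1, (ω j).2.1)) := fun j =>
      add_nonneg (mul_nonneg hq0 (ind_nonneg _)) (mul_nonneg hq0 (ind_nonneg _))
    by_cases hG : ∀ j : Fin B, gR (s ω j) (o j.castSucc).2 (ω j).2.2.2 = ((ω j).1, (ω j).2.1) ∧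
        gD (s ω (j + 2)) (o j.succ).1 (ω j).2.2.1 = ((ω j).1, (ω j).2.1)
    · have h1 : ∀ j : Fin (B + 1), relayEst a gR (fun i => (o i).2) (fun i => (ω i).2.2.2) j =
          s ω j := fun j => relayEst_eq (fun j => (hG j).1) j (Nat.lt_succ_iff.1 j.is_lt)
      have h2 : (fun j : Fin B => destEst c gD (fun i => (o i).1) (fun i => (ω i).2.2.1) (B - j)) =
          fun i => ((ω i).1, (ω i).2.1) := by
        funext j
        rw [destEst_eq (a := a) (fun j => (hG j).2) (B - j) (Nat.sub_le _ _),
          show B + 1 - (B - (j : ℕ)) = j + 1 by omega]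
        exact hs1 ω j
      rw [ind_neg (by simpa using h2), mul_zero]
      refine add_nonneg (le_of_eq ?_) (Finset.sum_nonneg fun j _ => hnn j)
      simp only [h1, hq, sub_self]
    · rw [not_forall] at hG
      obtain ⟨j, hj⟩ := hG
      have h1 : (∏ k, q ω k (o k)) ≤ ∑ j : Fin B, ((∏ k, q ω k (o k)) *
          ind (gR (s ω j) (o j.castSucc).2 (ω j).2.2.2 ≠ ((ω j).1, (ω j).2.1)) +
        (∏ k, q ω k (o k)) *
          ind (gD (s ω (j + 2)) (o j.succ).1 (ω j).2.2.1 ≠ ((ω j).1, (ω j).2.1))) := by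
        refine le_trans ?_ (Finset.single_le_sum (fun j _ => hnn j) (Finset.mem_univ j))
        by_cases hr : gR (s ω j) (o j.castSucc).2 (ω j).2.2.2 = ((ω j).1, (ω j).2.1)
        · rw [ind_pos (fun h => hj ⟨hr, h⟩ : gD (s ω (j + 2)) (o j.succ).1 (ω j).2.2.1 ≠ _),
            mul_one]
          exact le_add_of_nonneg_left (mul_nonneg hq0 (ind_nonneg _))
        · rw [ind_pos hr, mul_one]
          exact le_add_of_nonneg_right (mul_nonneg hq0 (ind_nonneg _))
      have h2 : 0 ≤ ∏ j : Fin (B + 1), Q (x1 (s ω (j + 1)).1 (s ω j).1,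
          x2 (s ω (j + 1)).2 (s ω j).2,
          x3 (relayEst a gR (fun i => (o i).2) (fun i => (ω i).2.2.2) j)) (o j) :=
        Finset.prod_nonneg fun k _ => (hQ _).1 _
      linarith [mul_le_of_le_one_right h2 (ind_le_one ((fun j : Fin B =>
        destEst c gD (fun i => (o i).1) (fun i => (ω i).2.2.1) (B - j)) ≠
          fun i => ((ω i).1, (ω i).2.1)))]
  have : Nonempty (Y × Y3) := by
    by_contra hne
    rw [not_nonempty_iff] at hne
    simpa using (hQ (x1 a.1 a.1, x2 a.2 a.2, x3 a)).2
  -- total masses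
  have hact : ∀ ω : Fin B → S1 × S2 × W × W3, ∑ o : Fin (B + 1) → Y × Y3,
      ∏ j : Fin (B + 1), Q (x1 (s ω (j + 1)).1 (s ω j).1, x2 (s ω (j + 1)).2 (s ω j).2,
        x3 (relayEst a gR (fun i => (o i).2) (fun i => (ω i).2.2.2) j)) (o j) = 1 := fun ω =>
    sum_causal_prod (fun j o => Q (x1 (s ω (j + 1)).1 (s ω j).1, x2 (s ω (j + 1)).2 (s ω j).2,
        x3 (relayEst a gR (fun i => (o i).2) (fun i => (ω i).2.2.2) j)))
      (fun _ _ => (hQ _).2) fun k o o' h => by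
        rw [relayEst_congr a gR (fun i => (ω i).2.2.2) k fun i hi => congrArg Prod.snd (h i hi)]
  have hP := isPmf_pi (fun _ : Fin B => hp)
  -- genie-aided errors
  have hRj : ∀ j : Fin B, ∑ ω : Fin B → S1 × S2 × W × W3, (∏ i, p (ω i)) *
      ∑ o : Fin (B + 1) → Y × Y3, (∏ k, q ω k (o k)) *
        ind (gR (s ω j) (o j.castSucc).2 (ω j).2.2.2 ≠ ((ω j).1, (ω j).2.1)) ≤ e := by
    intro j
    have h1 : ∀ ω, ∑ o : Fin (B + 1) → Y × Y3, (∏ k, q ω k (o k)) *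
        ind (gR (s ω j) (o j.castSucc).2 (ω j).2.2.2 ≠ ((ω j).1, (ω j).2.1)) =
        ∑ o, Q (x1 (ω j).1 (s ω j).1, x2 (ω j).2.1 (s ω j).2, x3 (s ω j)) o *
          ind (gR (s ω j) o.2 (ω j).2.2.2 ≠ ((ω j).1, (ω j).2.1)) := fun ω => by
      rw [sum_pi_one (hqp ω) j.castSucc fun o =>
        ind (gR (s ω j) o.2 (ω j).2.2.2 ≠ ((ω j).1, (ω j).2.1))]
      simp only [hq, Fin.val_castSucc, hs1]
    simp only [h1]
    rcases Nat.eq_zero_or_pos (j : ℕ) with hj | hj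
    · have h0 : ∀ ω, s ω j = a := fun ω => by rw [hj]; rfl
      simp only [h0]
      rw [sum_pi_one (fun _ => hp) j fun ω => ∑ o, Q (x1 ω.1 a.1, x2 ω.2.1 a.2, x3 a) o *
          ind (gR a o.2 ω.2.2.2 ≠ (ω.1, ω.2.1))]
      exact ha
    · obtain ⟨i, hi⟩ : ∃ i : Fin B, (j : ℕ) = i + 1 := ⟨⟨j - 1, by omega⟩, by simp; omega⟩
      have hij : i ≠ j := fun h => by rw [h] at hi; omega
      have h0 : ∀ ω, s ω j = ((ω i).1, (ω i).2.1) := fun ω => by rw [hi, hs1]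
      simp only [h0]
      rw [sum_pi_two (fun _ => hp) hij fun ω' ω => ∑ o, Q (x1 ω.1 ω'.1, x2 ω.2.1 ω'.2.1,
        x3 (ω'.1, ω'.2.1)) o * ind (gR (ω'.1, ω'.2.1) o.2 ω.2.2.2 ≠ (ω.1, ω.2.1))]
      exact hR
  have hDj : ∀ j : Fin B, ∑ ω : Fin B → S1 × S2 × W × W3, (∏ i, p (ω i)) *
      ∑ o : Fin (B + 1) → Y × Y3, (∏ k, q ω k (o k)) *
        ind (gD (s ω (j + 2)) (o j.succ).1 (ω j).2.2.1 ≠ ((ω j).1, (ω j).2.1)) ≤ e := by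
    intro j
    have h1 : ∀ ω, ∑ o : Fin (B + 1) → Y × Y3, (∏ k, q ω k (o k)) *
        ind (gD (s ω (j + 2)) (o j.succ).1 (ω j).2.2.1 ≠ ((ω j).1, (ω j).2.1)) =
        ∑ o, Q (x1 (s ω (j + 2)).1 (ω j).1, x2 (s ω (j + 2)).2 (ω j).2.1,
          x3 ((ω j).1, (ω j).2.1)) o *
          ind (gD (s ω (j + 2)) o.1 (ω j).2.2.1 ≠ ((ω j).1, (ω j).2.1)) := fun ω => by
      rw [sum_pi_one (hqp ω) j.succ fun o =>
        ind (gD (s ω (j + 2)) o.1 (ω j).2.2.1 ≠ ((ω j).1, (ω j).2.1))]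
      simp only [hq, Fin.val_succ, hs1, add_assoc, Nat.reduceAdd]
    simp only [h1]
    by_cases hj : (j : ℕ) + 1 < B
    · have hij : j ≠ ⟨j + 1, hj⟩ := fun h => by simpa using congrArg Fin.val h
      have h0 : ∀ ω, s ω (j + 2) = ((ω ⟨j + 1, hj⟩).1, (ω ⟨j + 1, hj⟩).2.1) := fun ω =>
        hs1 ω ⟨j + 1, hj⟩
      simp only [h0]
      rw [sum_pi_two (fun _ => hp) hij.symm fun ω' ω => ∑ o, Q (x1 ω'.1 ω.1, x2 ω'.2.1 ω.2.1,
        x3 (ω.1, ω.2.1)) o * ind (gD (ω'.1, ω'.2.1) o.1 ω.2.2.1 ≠ (ω.1, ω.2.1))]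
      exact hD
    · have h0 : ∀ ω, s ω (j + 2) = c := fun ω => by
        simp only [hs, bdry, dif_neg hj]
      simp only [h0]
      rw [sum_pi_one (fun _ => hp) j fun ω => ∑ o, Q (x1 c.1 ω.1, x2 c.2 ω.2.1,
        x3 (ω.1, ω.2.1)) o * ind (gD c o.1 ω.2.2.1 ≠ (ω.1, ω.2.1))]
      exact hc
  calc _ ≤ ∑ ω : Fin B → S1 × S2 × W × W3, (∏ i, p (ω i)) * ∑ j : Fin B,
        ((∑ o : Fin (B + 1) → Y × Y3, (∏ k, q ω k (o k)) *
          ind (gR (s ω j) (o j.castSucc).2 (ω j).2.2.2 ≠ ((ω j).1, (ω j).2.1))) +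
        ∑ o : Fin (B + 1) → Y × Y3, (∏ k, q ω k (o k)) *
          ind (gD (s ω (j + 2)) (o j.succ).1 (ω j).2.2.1 ≠ ((ω j).1, (ω j).2.1))) := by
        refine Finset.sum_le_sum fun ω _ => mul_le_mul_of_nonneg_left ?_ (hP.1 ω)
        refine (Finset.sum_le_sum fun o _ => hpt ω o).trans (le_of_eq ?_)
        rw [Finset.sum_add_distrib, Finset.sum_sub_distrib, hact, (isPmf_pi (hqp ω)).2, sub_self,
          zero_add, Finset.sum_comm]
        simp only [Finset.sum_add_distrib]
    _ ≤ ∑ j : Fin B, (e + e) := by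
        simp only [Finset.mul_sum (s := (Finset.univ : Finset (Fin B)))]
        rw [Finset.sum_comm]
        refine Finset.sum_le_sum fun j _ => ?_
        simp only [mul_add, Finset.sum_add_distrib]
        exact add_le_add (hRj j) (hDj j)
    _ = 2 * B * e := by simp; ring

end BlockMarkov

end MARC

namespace MARC

section Drift

variable {Λ : Type*} [Fintype Λ]

/-- Negative mean log-likelihood ratio makes the Chernoff functional contract. -/
theorem exists_bhat_lt_one {q a M : Λ → ℝ} (hq : ∀ x, 0 ≤ q x) (ha : ∀ x, 0 ≤ a x)
    (hsum : ∑ x, q x * a x = 1) {p₁ p₂ N K : Λ → ℝ}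
    (hpos : ∀ x, 0 < q x * a x → 0 < p₁ x ∧ 0 < p₂ x ∧ 0 < N x ∧ 0 < K x)
    (hpK : ∀ x, a x = p₁ x * K x) (hpN : ∀ x, 0 < q x * a x → M x = p₂ x * N x)
    (h : ∑ x, q x * a x * (Real.log (p₂ x) - Real.log (p₁ x)) +
      ∑ x, q x * a x * (Real.log (N x) - Real.log (K x)) < 0) :
    ∃ t, 0 < t ∧ t < 1 ∧ bhat q a M t < 1 := by
  set L : Λ → ℝ := fun x => Real.log (p₂ x) - Real.log (p₁ x) + (Real.log (N x) - Real.log (K x))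
    with hL
  have hD : HasDerivAt (fun t : ℝ => ∑ x, q x * a x * Real.exp (t * L x))
      (∑ x, q x * a x * L x) 0 := by
    refine HasDerivAt.fun_sum fun x _ => ?_
    have := (((hasDerivAt_id (0 : ℝ)).mul_const (L x)).exp).const_mul (q x * a x)
    simpa using this
  have hneg : ∑ x, q x * a x * L x < 0 := by
    simpa only [hL, mul_add, Finset.sum_add_distrib] using h
  have hev := (hD.tendsto_slope_zero_right.eventually_lt_const hneg).and
    (Ioo_mem_nhdsGT (zero_lt_one' ℝ))
  obtain ⟨t, hslope, ht⟩ := hev.exists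
  refine ⟨t, ht.1, ht.2, ?_⟩
  have hb : bhat q a M t = ∑ x, q x * a x * Real.exp (t * L x) := by
    refine Finset.sum_congr rfl fun x _ => ?_
    rcases (mul_nonneg (hq x) (ha x)).eq_or_lt with h0 | h0
    · rw [← h0, zero_mul]
      rcases mul_eq_zero.1 h0.symm with h1 | h1
      · rw [h1, zero_mul]
      · rw [h1, Real.zero_rpow (by linarith [ht.2]), zero_mul, mul_zero]
    · obtain ⟨h1, h2, h3, h4⟩ := hpos x h0
      have ha0 : 0 < a x := by rw [hpK]; exact mul_pos h1 h4
      have hM0 : 0 < M x := by rw [hpN x h0]; exact mul_pos h2 h3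
      have hlog : L x = Real.log (M x) - Real.log (a x) := by
        rw [hpK, hpN x h0, Real.log_mul h2.ne' h3.ne', Real.log_mul h1.ne' h4.ne']
        simp only [hL]; ring
      rw [Real.rpow_def_of_pos ha0, Real.rpow_def_of_pos hM0, ← Real.exp_add, mul_assoc, hlog]
      congr 1
      nth_rewrite 2 [← Real.exp_log ha0]
      rw [← Real.exp_add]
      congr 1
      ring
  rw [hb]
  simp only [zero_add, zero_mul, Real.exp_zero, mul_one, hsum, smul_eq_mul] at hslope
  have := mul_neg_of_pos_of_neg ht.1 hslope
  rw [mul_inv_cancel_left₀ ht.1.ne'] at this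
  linarith

end Drift

section Entropy

variable {Ω α β γ : Type*} [Fintype Ω] [DecidableEq α] [DecidableEq β] [DecidableEq γ]

/-- Law of the random variable `X`. -/
def marg (μ : Ω → ℝ) (X : Ω → α) (a : α) : ℝ := ∑ ω, if X ω = a then μ ω else 0

theorem marg_nonneg {μ : Ω → ℝ} (hμ : ∀ ω, 0 ≤ μ ω) (X : Ω → α) (a : α) : 0 ≤ marg μ X a :=
  Finset.sum_nonneg fun ω _ => by split_ifs <;> simp [hμ]

theorem marg_pos {μ : Ω → ℝ} (hμ : ∀ ω, 0 ≤ μ ω) (X : Ω → α) {ω : Ω} (h : 0 < μ ω) :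
    0 < marg μ X (X ω) := by
  refine lt_of_lt_of_le h ?_
  have := Finset.single_le_sum (f := fun ω' => if X ω' = X ω then μ ω' else 0)
    (fun ω' _ => by split_ifs <;> simp [hμ]) (Finset.mem_univ ω)
  simpa [marg] using this

variable [Fintype α] [Fintype β] [Fintype γ]

theorem sum_mul_comp (μ : Ω → ℝ) (X : Ω → α) (φ : α → ℝ) :
    ∑ ω, μ ω * φ (X ω) = ∑ a, marg μ X a * φ a := by
  simp only [marg, Finset.sum_mul, ite_mul, zero_mul]
  rw [Finset.sum_comm]
  simp

theorem sum_marg_fst (μ : Ω → ℝ) (X : Ω → α) (Z : Ω → γ) (z : γ) :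
    ∑ a, marg μ (fun ω => (X ω, Z ω)) (a, z) = marg μ Z z := by
  simp only [marg, Prod.mk.injEq]
  rw [Finset.sum_comm]
  refine Finset.sum_congr rfl fun ω _ => ?_
  by_cases h : Z ω = z <;> simp [h]

theorem sum_mul_log_marg (μ : Ω → ℝ) (X : Ω → α) :
    ∑ ω, μ ω * Real.log (marg μ X (X ω)) = -entropyOf μ X := by
  rw [sum_mul_comp μ X fun a => Real.log (marg μ X a), entropyOf, ← Finset.sum_neg_distrib]
  exact Finset.sum_congr rfl fun a _ => by simp [Real.negMulLog, marg]

theorem sum_mul_log_marg_sub (μ : Ω → ℝ) (X : Ω → α) (Z : Ω → γ) :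
    ∑ ω, μ ω * (Real.log (marg μ Z (Z ω)) -
      Real.log (marg μ (fun ω => (X ω, Z ω)) (X ω, Z ω))) = condEntropyOf μ X Z := by
  have := sum_mul_log_marg μ fun ω => (X ω, Z ω)
  simp only [mul_sub, Finset.sum_sub_distrib, sum_mul_log_marg, this, condEntropyOf]
  ring

theorem entropyOf_comp_equiv (μ : Ω → ℝ) (X : Ω → α) (e : α ≃ β) :
    entropyOf μ (fun ω => e (X ω)) = entropyOf μ X := by
  rw [entropyOf, ← Equiv.sum_comp e]
  simp [entropyOf]

theorem condMutualInfoOf_eq (μ : Ω → ℝ) (X : Ω → α) (Y : Ω → β) (Z : Ω → γ) :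
    condMutualInfoOf μ X Y Z = condEntropyOf μ Y Z - condEntropyOf μ Y fun ω => (X ω, Z ω) := by
  have : entropyOf μ (fun ω => (Y ω, X ω, Z ω)) = entropyOf μ fun ω => (X ω, Y ω, Z ω) :=
    entropyOf_comp_equiv μ (fun ω => (X ω, Y ω, Z ω))
      (⟨fun x => (x.2.1, x.1, x.2.2), fun x => (x.2.1, x.1, x.2.2), fun _ => rfl, fun _ => rfl⟩ :
        α × β × γ ≃ β × α × γ)
  rw [condMutualInfoOf, condEntropyOf, condEntropyOf, this]
  ring

theorem sum_mul_log_nonpos {μ r : Ω → ℝ} (hμ : IsPmf μ) (hr : ∀ ω, 0 < μ ω → 0 < r ω)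
    (h : ∑ ω, μ ω * r ω ≤ 1) : ∑ ω, μ ω * Real.log (r ω) ≤ 0 := by
  have : ∑ ω, μ ω * Real.log (r ω) ≤ ∑ ω, μ ω * (r ω - 1) := by
    refine Finset.sum_le_sum fun ω _ => ?_
    rcases (hμ.1 ω).eq_or_lt with h0 | h0
    · simp [← h0]
    · exact mul_le_mul_of_nonneg_left (Real.log_le_sub_one_of_pos (hr ω h0)) h0.le
  simp only [mul_sub, mul_one, Finset.sum_sub_distrib, hμ.2] at this
  linarith

/-- Gibbs' inequality. -/
theorem sum_mul_log_le_neg_condEntropyOf {μ : Ω → ℝ} (hμ : IsPmf μ) (Y : Ω → β) (Z : Ω → γ)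
    {N : γ → β → ℝ} (hN : ∀ z y, 0 ≤ N z y) (hN1 : ∀ z, ∑ y, N z y ≤ 1)
    (hpos : ∀ ω, 0 < μ ω → 0 < N (Z ω) (Y ω)) :
    ∑ ω, μ ω * Real.log (N (Z ω) (Y ω)) ≤ -condEntropyOf μ Y Z := by
  set P := marg μ fun ω => (Y ω, Z ω) with hP
  have h : ∑ ω, μ ω * Real.log (N (Z ω) (Y ω) * marg μ Z (Z ω) / P (Y ω, Z ω)) ≤ 0 := by
    refine sum_mul_log_nonpos hμ (fun ω h => div_pos (mul_pos (hpos ω h) (marg_pos hμ.1 Z h))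
      (marg_pos hμ.1 (fun ω => (Y ω, Z ω)) h)) ?_
    rw [sum_mul_comp μ (fun ω => (Y ω, Z ω)) fun x => N x.2 x.1 * marg μ Z x.2 / P x]
    calc _ ≤ ∑ x : β × γ, N x.2 x.1 * marg μ Z x.2 := by
          refine Finset.sum_le_sum fun x _ => ?_
          have h0 : 0 ≤ N x.2 x.1 * marg μ Z x.2 := mul_nonneg (hN _ _) (marg_nonneg hμ.1 _ _)
          rcases eq_or_ne (P x) 0 with hx | hx
          · simpa [hx] using h0
          · exact (mul_div_cancel₀ _ hx).le
      _ = ∑ z, (∑ y, N z y) * marg μ Z z := by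
          rw [Fintype.sum_prod_type_right]
          simp only [Finset.sum_mul]
      _ ≤ ∑ z, 1 * marg μ Z z := Finset.sum_le_sum fun z _ =>
          mul_le_mul_of_nonneg_right (hN1 z) (marg_nonneg hμ.1 _ _)
      _ = 1 := by
          have := sum_mul_comp μ Z fun _ => 1
          simp only [mul_one, hμ.2] at this
          simpa using this.symm
  have hs : ∑ ω, μ ω * Real.log (N (Z ω) (Y ω) * marg μ Z (Z ω) / P (Y ω, Z ω)) =
      ∑ ω, μ ω * Real.log (N (Z ω) (Y ω)) + condEntropyOf μ Y Z := by
    rw [← sum_mul_log_marg_sub, ← Finset.sum_add_distrib]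
    refine Finset.sum_congr rfl fun ω _ => ?_
    rcases (hμ.1 ω).eq_or_lt with h0 | h0
    · simp [← h0]
    · rw [Real.log_div (mul_pos (hpos ω h0) (marg_pos hμ.1 Z h0)).ne'
        (marg_pos hμ.1 (fun ω => (Y ω, Z ω)) h0).ne', Real.log_mul (hpos ω h0).ne'
        (marg_pos hμ.1 Z h0).ne']
      ring
  linarith

/-- Conditioning reduces entropy: the entropy of a channel output given all inputs is at most its
entropy given a function of the inputs. -/
theorem neg_sum_mul_log_le_condEntropyOf {ρ : Type*} [Fintype ρ] (e : Ω ≃ ρ × β) {τ : ρ → ℝ}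
    (hτ : IsPmf τ) {K : ρ → β → ℝ} (hK : ∀ r, IsPmf (K r)) {μ : Ω → ℝ}
    (hμ : ∀ ω, μ ω = τ (e ω).1 * K (e ω).1 (e ω).2) (U : ρ → γ) :
    -∑ ω, μ ω * Real.log (K (e ω).1 (e ω).2) ≤
      condEntropyOf μ (fun ω => (e ω).2) fun ω => U (e ω).1 := by
  have hμp : IsPmf μ := by
    refine ⟨fun ω => by rw [hμ]; exact mul_nonneg (hτ.1 _) ((hK _).1 _), ?_⟩
    simp only [hμ]
    rw [Equiv.sum_comp e fun x => τ x.1 * K x.1 x.2, Fintype.sum_prod_type]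
    simp only [← Finset.mul_sum, (hK _).2, mul_one, hτ.2]
  set Z : Ω → γ := fun ω => U (e ω).1 with hZ
  set P := marg μ fun ω => ((e ω).2, Z ω) with hP
  have hKpos : ∀ ω, 0 < μ ω → 0 < K (e ω).1 (e ω).2 := fun ω h => by
    rw [hμ] at h
    exact pos_of_mul_pos_right h (hτ.1 _)
  have h : ∑ ω, μ ω * Real.log (P ((e ω).2, Z ω) / (marg μ Z (Z ω) * K (e ω).1 (e ω).2)) ≤ 0 := by
    refine sum_mul_log_nonpos hμp (fun ω h => div_pos
      (marg_pos hμp.1 (fun ω => ((e ω).2, Z ω)) h)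
      (mul_pos (marg_pos hμp.1 Z h) (hKpos ω h))) ?_
    calc _ ≤ ∑ ω, τ (e ω).1 * (P ((e ω).2, U (e ω).1) / marg μ Z (U (e ω).1)) := by
          refine Finset.sum_le_sum fun ω _ => ?_
          rw [hμ ω]
          have h0 : 0 ≤ τ (e ω).1 * (P ((e ω).2, U (e ω).1) / marg μ Z (U (e ω).1)) :=
            mul_nonneg (hτ.1 _) (div_nonneg (marg_nonneg hμp.1 _ _) (marg_nonneg hμp.1 _ _))
          rcases eq_or_ne (K (e ω).1 (e ω).2) 0 with hx | hx
          · simpa [hx] using h0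
          · refine le_of_eq ?_
            rw [mul_assoc, ← div_div, mul_div_cancel₀ _ hx]
      _ = ∑ r, τ r * ∑ y, P (y, U r) / marg μ Z (U r) := by
          rw [Equiv.sum_comp e fun x => τ x.1 * (P (x.2, U x.1) / marg μ Z (U x.1)),
            Fintype.sum_prod_type]
          simp only [Finset.mul_sum]
      _ ≤ ∑ r, τ r * 1 := by
          refine Finset.sum_le_sum fun r _ => mul_le_mul_of_nonneg_left ?_ (hτ.1 r)
          rw [← Finset.sum_div, hP, sum_marg_fst]
          exact div_self_le_one _
      _ = 1 := by simp [hτ.2]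
  have hs : ∑ ω, μ ω * Real.log (P ((e ω).2, Z ω) / (marg μ Z (Z ω) * K (e ω).1 (e ω).2)) =
      -∑ ω, μ ω * Real.log (K (e ω).1 (e ω).2) -
        condEntropyOf μ (fun ω => (e ω).2) fun ω => U (e ω).1 := by
    rw [← sum_mul_log_marg_sub, ← Finset.sum_neg_distrib, ← Finset.sum_sub_distrib]
    refine Finset.sum_congr rfl fun ω _ => ?_
    rcases (hμp.1 ω).eq_or_lt with h0 | h0
    · simp [← h0]
    · rw [Real.log_div (marg_pos hμp.1 (fun ω => ((e ω).2, Z ω)) h0).ne'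
        (mul_pos (marg_pos hμp.1 Z h0) (hKpos ω h0)).ne',
        Real.log_mul (marg_pos hμp.1 Z h0).ne' (hKpos ω h0).ne']
      ring
  linarith

section Push

variable {Λ : Type*} [Fintype Λ] {μ : Ω → ℝ} {ν : Λ → ℝ} {π : Ω → Λ}

theorem entropyOf_push (h : ∀ φ : Λ → ℝ, ∑ ω, μ ω * φ (π ω) = ∑ x, ν x * φ x) (X : Λ → α) :
    entropyOf μ (fun ω => X (π ω)) = entropyOf ν X := by
  refine Finset.sum_congr rfl fun a _ => congrArg _ ?_
  simpa using h fun x => if X x = a then 1 else 0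

end Push

end Entropy

end MARC

namespace MARC

section Exponent

variable {Λ σ ρ β γ ξ : Type*} [Fintype Λ] [Fintype σ] [Fintype ρ] [Fintype β] [Fintype γ]
  [Fintype ξ] [DecidableEq β] [DecidableEq γ] [DecidableEq ξ]

theorem pos_of_push {μ : Λ → ℝ} (hμ : ∀ x, 0 ≤ μ x) {ν : σ → ℝ} {π : Λ → σ}
    (h : ∀ φ : σ → ℝ, ∑ x, μ x * φ (π x) = ∑ s, ν s * φ s) {x : Λ} (hx : 0 < μ x) :
    0 < ν (π x) := by
  classical
  have h1 := h fun s => if s = π x then 1 else 0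
  simp only [mul_ite, mul_one, mul_zero, Finset.sum_ite_eq', Finset.mem_univ, if_true] at h1
  rw [← h1]
  exact Finset.sum_pos' (fun x' _ => by split_ifs <;> simp [hμ]) ⟨x, Finset.mem_univ x, by simpa⟩

/-- A source term below the mutual information of the channel gives a contracting Chernoff
functional. -/
theorem exists_bhat_lt_one_of_lt_condMutualInfoOf {q a M : Λ → ℝ} (hq : ∀ x, 0 ≤ q x)
    (ha : ∀ x, 0 ≤ a x) {p₁ p₂ : σ → ℝ} (hp₁ : IsPmf p₁) {τ : ρ → ℝ} (hτ : IsPmf τ)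
    {K : ρ → β → ℝ} (hK : ∀ r, IsPmf (K r)) {πs : Λ → σ} {πc : Λ → ρ × β}
    (hs : ∀ φ : σ → ℝ, ∑ x, q x * a x * φ (πs x) = ∑ s, p₁ s * φ s)
    (hc : ∀ φ : ρ × β → ℝ, ∑ x, q x * a x * φ (πc x) = ∑ r, τ r.1 * K r.1 r.2 * φ r)
    (hpK : ∀ x, a x = p₁ (πs x) * K (πc x).1 (πc x).2) (U : ρ → ξ) (G : ρ → γ)
    {N : γ → β → ℝ} (hN : ∀ z y, 0 ≤ N z y) (hN1 : ∀ z, ∑ y, N z y ≤ 1)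
    (hp₂ : ∀ s, 0 < p₁ s → 0 < p₂ s) (hNpos : ∀ r y, 0 < τ r * K r y → 0 < N (G r) y)
    (hM : ∀ x, M x = p₂ (πs x) * N (G (πc x).1) (πc x).2)
    (h : ∑ s, p₁ s * (Real.log (p₂ s) - Real.log (p₁ s)) <
      condMutualInfoOf (fun r : ρ × β => τ r.1 * K r.1 r.2) (fun r => U r.1) (fun r => r.2)
        fun r => G r.1) :
    ∃ t, 0 < t ∧ t < 1 ∧ bhat q a M t < 1 := by
  have hqa : ∀ x, 0 ≤ q x * a x := fun x => mul_nonneg (hq x) (ha x)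
  have hsum : ∑ x, q x * a x = 1 := by simpa [hp₁.2] using hs fun _ => 1
  have hμ : IsPmf fun r : ρ × β => τ r.1 * K r.1 r.2 := by
    refine ⟨fun r => mul_nonneg (hτ.1 _) ((hK _).1 _), ?_⟩
    simpa [hsum] using (hc fun _ => 1).symm
  refine exists_bhat_lt_one hq ha hsum (p₁ := fun x => p₁ (πs x)) (p₂ := fun x => p₂ (πs x))
    (N := fun x => N (G (πc x).1) (πc x).2) (K := fun x => K (πc x).1 (πc x).2)
    (fun x hx => ?_) hpK (fun x _ => hM x) ?_
  · have h1 := pos_of_push hqa hs hx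
    have h2 := pos_of_push hqa hc hx
    exact ⟨h1, hp₂ _ h1, hNpos _ _ h2, pos_of_mul_pos_right h2 (hτ.1 _)⟩
  · rw [hs fun s => Real.log (p₂ s) - Real.log (p₁ s),
      hc fun r => Real.log (N (G r.1) r.2) - Real.log (K r.1 r.2)]
    have h1 := sum_mul_log_le_neg_condEntropyOf hμ (fun r => r.2) (fun r => G r.1) hN hN1
      fun r hr => hNpos _ _ hr
    have h2 := neg_sum_mul_log_le_condEntropyOf (Equiv.refl (ρ × β)) hτ hK
      (fun _ => rfl) fun r => (U r, G r)
    rw [condMutualInfoOf_eq] at h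
    simp only [mul_sub, Finset.sum_sub_distrib, Equiv.refl_apply] at h h1 h2 ⊢
    linarith

end Exponent

section Source

variable {A B C : Type*} [Fintype A] [Fintype B] [Fintype C] [DecidableEq A] [DecidableEq B]
  [DecidableEq C]

theorem sum_mul_log_source_fst (p : (A × B) × C → ℝ) :
    ∑ x, p x * (Real.log (∑ a, p ((a, x.1.2), x.2)) - Real.log (p x)) =
      condEntropyOf p (fun x => x.1.1) fun x => (x.1.2, x.2) := by
  rw [← sum_mul_log_marg_sub]
  refine Finset.sum_congr rfl fun x _ => ?_
  congr 4
  · rw [marg, ← (Equiv.prodAssoc A B C).symm.sum_comp, Fintype.sum_prod_type]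
    simp [Equiv.prodAssoc]
  · rw [marg, ← (Equiv.prodAssoc A B C).symm.sum_comp]
    simp [Equiv.prodAssoc]

theorem sum_mul_log_source (p : A × C → ℝ) :
    ∑ x, p x * (Real.log (∑ a, p (a, x.2)) - Real.log (p x)) =
      condEntropyOf p (fun x => x.1) fun x => x.2 := by
  rw [← sum_mul_log_marg_sub]
  refine Finset.sum_congr rfl fun x _ => ?_
  congr 4
  · simp only [marg, Fintype.sum_prod_type]
    simp
  · simp [marg]

end Source

namespace Kernels

variable {S1 S2 W W3 V1 V2 X1 X2 X3 Y Y3 : Type*}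
  [Fintype S1] [Fintype S2] [Fintype W] [Fintype W3] [Fintype V1] [Fintype V2]
  [Fintype X1] [Fintype X2] [Fintype X3] [Fintype Y] [Fintype Y3]
  (D : Kernels S1 S2 W W3 V1 V2 X1 X2 X3 Y Y3)

def relaySource (x : (S1 × S2) × W3) : ℝ := D.pR x.1 x.2

def destSource (x : (S1 × S2) × W) : ℝ := D.pD x.1 x.2

def relayInput (r : (S1 × S2) × W3 × (V1 × V2 × X1 × X2 × X3)) : ℝ :=
  D.pR r.1 r.2.1 * D.law r.1 r.2.2

def destInput (r : (S1 × S2) × (V1 × V2 × X1 × X2 × X3)) : ℝ := D.pS r.1 * D.law r.1 r.2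

def relayJoint (x : ((S1 × S2) × W3 × (V1 × V2 × X1 × X2 × X3)) × Y3) : ℝ :=
  D.relayInput x.1 * D.QR x.1.2.2.2.2 x.2

def destJoint (x : ((S1 × S2) × (V1 × V2 × X1 × X2 × X3)) × Y) : ℝ :=
  D.destInput x.1 * D.QD x.1.2.2.2 x.2

variable {D}

theorem Valid.relaySource (hD : D.Valid) : IsPmf D.relaySource :=
  ⟨fun _ => hD.pR_nonneg _ _, by
    simp only [Kernels.relaySource, Fintype.sum_prod_type_right (α₁ := S1 × S2)]
    rw [Finset.sum_comm]
    simp only [hD.pR_sum, hD.pS.2]⟩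

theorem Valid.destSource (hD : D.Valid) : IsPmf D.destSource :=
  ⟨fun _ => hD.pD_nonneg _ _, by
    simp only [Kernels.destSource, Fintype.sum_prod_type_right (α₁ := S1 × S2)]
    rw [Finset.sum_comm]
    simp only [hD.pD_sum, hD.pS.2]⟩

theorem Valid.relayInput (hD : D.Valid) : IsPmf D.relayInput :=
  ⟨fun _ => mul_nonneg (hD.pR_nonneg _ _) (hD.law_nonneg _ _), by
    simp only [Kernels.relayInput]
    rw [Fintype.sum_prod_type]
    simp only [Fintype.sum_prod_type (α₁ := W3), ← Finset.mul_sum, hD.sum_law, mul_one, hD.pR_sum,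
      hD.pS.2]⟩

theorem Valid.destInput (hD : D.Valid) : IsPmf D.destInput :=
  ⟨fun _ => mul_nonneg (hD.pS.1 _) (hD.law_nonneg _ _), by
    simp only [Kernels.destInput]
    rw [Fintype.sum_prod_type]
    simp only [← Finset.mul_sum, hD.sum_law, mul_one, hD.pS.2]⟩

theorem Valid.relay_push_source (hD : D.Valid) (φ : (S1 × S2) × W3 → ℝ) :
    ∑ x, D.relayWeight x * D.relayScore x * φ (x.1, x.2.1) = ∑ s, D.relaySource s * φ s := by
  simp only [Kernels.relayWeight, Kernels.relayScore, Kernels.relaySource]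
  rw [Fintype.sum_prod_type, Fintype.sum_prod_type (α₁ := S1 × S2)]
  refine Finset.sum_congr rfl fun c _ => ?_
  rw [Fintype.sum_prod_type]
  refine Finset.sum_congr rfl fun w _ => ?_
  rw [Fintype.sum_prod_type_right]
  have : ∀ (z : V1 × V2 × X1 × X2 × X3) (y : Y3), D.law c z * (D.pR c w * D.QR z.2.2 y) * φ (c, w) =
      (D.pR c w * φ (c, w)) * (D.law c z * D.QR z.2.2 y) := fun _ _ => by ring
  simp only [this, ← Finset.mul_sum, (hD.QR _).2, mul_one, hD.sum_law]

theorem relay_push_joint (φ : ((S1 × S2) × W3 × (V1 × V2 × X1 × X2 × X3)) × Y3 → ℝ) :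
    ∑ x, D.relayWeight x * D.relayScore x * φ ((x.1, x.2.1, x.2.2.2), x.2.2.1) =
      ∑ r, D.relayInput r.1 * D.QR r.1.2.2.2.2 r.2 * φ r := by
  refine Fintype.sum_equiv (⟨fun x => ((x.1, x.2.1, x.2.2.2), x.2.2.1),
    fun r => (r.1.1, r.1.2.1, r.2, r.1.2.2), fun _ => rfl, fun _ => rfl⟩ :
      RelayLetter S1 S2 W3 V1 V2 X1 X2 X3 Y3 ≃
        ((S1 × S2) × W3 × (V1 × V2 × X1 × X2 × X3)) × Y3) _ _ fun x => ?_
  simp only [Kernels.relayWeight, Kernels.relayScore, Kernels.relayInput, Equiv.coe_fn_mk]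
  ring

theorem Valid.dest_push_source (hD : D.Valid) (φ : (S1 × S2) × W → ℝ) :
    ∑ x, D.destWeight x * D.destScore x * φ (x.2.1, x.2.2.1) = ∑ s, D.destSource s * φ s := by
  simp only [Kernels.destWeight, Kernels.destScore, Kernels.destSource]
  rw [Fintype.sum_prod_type_right, Fintype.sum_prod_type (α₁ := S1 × S2),
    Fintype.sum_prod_type (α₁ := S1 × S2)]
  refine Finset.sum_congr rfl fun s _ => ?_
  rw [Fintype.sum_prod_type]
  refine Finset.sum_congr rfl fun w _ => ?_
  rw [Fintype.sum_prod_type_right, Finset.sum_congr rfl fun _ _ => Finset.sum_comm,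
    Finset.sum_comm]
  have : ∀ c (z : V1 × V2 × X1 × X2 × X3) (y : Y),
      D.pS c * D.law c z * (D.pD s w * D.QD z.2.2 y) * φ (s, w) =
      (D.pD s w * φ (s, w)) * (D.pS c * (D.law c z * D.QD z.2.2 y)) := fun _ _ _ => by ring
  simp only [this, ← Finset.mul_sum, (hD.QD _).2, mul_one, hD.sum_law, hD.pS.2]

theorem Valid.dest_push_joint (hD : D.Valid)
    (φ : ((S1 × S2) × (V1 × V2 × X1 × X2 × X3)) × Y → ℝ) :
    ∑ x, D.destWeight x * D.destScore x * φ ((x.1, x.2.2.2.2), x.2.2.2.1) =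
      ∑ r, D.destInput r.1 * D.QD r.1.2.2.2 r.2 * φ r := by
  simp only [Kernels.destWeight, Kernels.destScore, Kernels.destInput]
  rw [Fintype.sum_prod_type, Fintype.sum_prod_type (γ := ℝ) (α₁ := (S1 × S2) × _),
    Fintype.sum_prod_type (α₁ := S1 × S2) (α₂ := V1 × V2 × X1 × X2 × X3)]
  refine Finset.sum_congr rfl fun c _ => ?_
  simp only [Fintype.sum_prod_type (α₁ := W), Fintype.sum_prod_type (α₁ := S1 × S2),
    Fintype.sum_prod_type_right (α₁ := Y)]
  have : ∀ s w y (z : V1 × V2 × X1 × X2 × X3),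
      D.pS c * D.law c z * (D.pD s w * D.QD z.2.2 y) * φ ((c, z), y) =
      D.pD s w * (D.pS c * D.law c z * D.QD z.2.2 y * φ ((c, z), y)) := fun _ _ _ _ => by ring
  simp only [this, ← Finset.mul_sum, ← Finset.sum_mul, hD.pD_sum, hD.pS.2, one_mul]

end Kernels

end MARC

namespace MARC.Kernels

variable {S1 S2 W W3 V1 V2 X1 X2 X3 Y Y3 : Type*}
  [Fintype S1] [Fintype S2] [Fintype W] [Fintype W3] [Fintype V1] [Fintype V2]
  [Fintype X1] [Fintype X2] [Fintype X3] [Fintype Y] [Fintype Y3]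
  [DecidableEq S1] [DecidableEq S2] [DecidableEq W] [DecidableEq W3] [DecidableEq V1]
  [DecidableEq V2] [DecidableEq X1] [DecidableEq X2] [DecidableEq X3] [DecidableEq Y]
  [DecidableEq Y3] {D : Kernels S1 S2 W W3 V1 V2 X1 X2 X3 Y Y3}

theorem Valid.law_pos (hD : D.Valid) {c : S1 × S2} {z : V1 × V2 × X1 × X2 × X3}
    (h : 0 < D.law c z) : 0 < D.pV1 z.1 ∧ 0 < D.pV2 z.2.1 ∧ 0 < D.pX1 c.1 z.1 z.2.2.1 ∧
      0 < D.pX2 c.2 z.2.1 z.2.2.2.1 ∧ 0 < D.pX3 z.1 z.2.1 z.2.2.2.2 := by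
  have h1 : D.law c z ≠ 0 := h.ne'
  simp only [law, mul_ne_zero_iff] at h1
  obtain ⟨h1, h2, h3, h4, h5⟩ := h1
  exact ⟨(hD.pV1.1 _).lt_of_ne' h1, (hD.pV2.1 _).lt_of_ne' h2, ((hD.pX1 _ _).1 _).lt_of_ne' h3,
    ((hD.pX2 _ _).1 _).lt_of_ne' h4, ((hD.pX3 _ _).1 _).lt_of_ne' h5⟩

theorem sum_pos_of_pos {ι : Type*} [Fintype ι] {f : ι → ℝ} (hf : ∀ i, 0 ≤ f i) {i : ι}
    (h : 0 < f i) : 0 < ∑ i, f i :=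
  Finset.sum_pos' (fun i _ => hf i) ⟨i, Finset.mem_univ i, h⟩

theorem Valid.exists_fR1_lt_one (hD : D.Valid)
    (h : condEntropyOf D.relaySource (fun x => x.1.1) (fun x => (x.1.2, x.2)) <
      condMutualInfoOf D.relayJoint (fun x => x.1.2.2.2.2.1) (fun x => x.2)
        fun x => (x.1.1.2, x.1.2.2.2.2.2.1, x.1.2.2.1, x.1.2.2.2.2.2.2, x.1.2.1)) :
    ∃ t, 0 < t ∧ t < 1 ∧ D.fR1 t < 1 := by
  rw [← sum_mul_log_source_fst] at h
  let A (z : S2 × X2 × V1 × X3 × W3) (y : Y3) : ℝ :=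
    ∑ c1, D.pR (c1, z.1) z.2.2.2.2 * ∑ x1, D.pX1 c1 z.2.2.1 x1 * D.QR (x1, z.2.1, z.2.2.2.1) y
  let B (z : S2 × X2 × V1 × X3 × W3) : ℝ := ∑ c1, D.pR (c1, z.1) z.2.2.2.2
  have hAB : ∀ z, ∑ y, A z y = B z := fun z => by
    simp only [A, B]
    rw [Finset.sum_comm]
    refine Finset.sum_congr rfl fun c1 _ => ?_
    rw [← Finset.mul_sum, Finset.sum_comm]
    simp only [← Finset.mul_sum, (hD.QR _).2, mul_one, (hD.pX1 _ _).2]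
  have hA : ∀ z y, 0 ≤ A z y := fun z y => Finset.sum_nonneg fun _ _ =>
    mul_nonneg (hD.pR_nonneg _ _) <| Finset.sum_nonneg fun _ _ =>
      mul_nonneg ((hD.pX1 _ _).1 _) ((hD.QR _).1 _)
  have hB : ∀ z, 0 ≤ B z := fun z => Finset.sum_nonneg fun _ _ => hD.pR_nonneg _ _
  refine exists_bhat_lt_one_of_lt_condMutualInfoOf hD.relayWeight_nonneg hD.relayScore_nonneg
    hD.relaySource hD.relayInput (K := fun r => D.QR r.2.2.2.2) (fun r => hD.QR _)
    hD.relay_push_source relay_push_joint (fun x => rfl) (fun r => r.2.2.2.2.1)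
    (fun r => (r.1.2, r.2.2.2.2.2.1, r.2.2.1, r.2.2.2.2.2.2, r.2.1))
    (N := fun z y => A z y / B z) (fun z y => div_nonneg (hA z y) (hB z))
    (fun z => ?_) (p₂ := fun s => ∑ a, D.relaySource ((a, s.1.2), s.2)) (fun s hs => ?_)
    (fun r y hr => ?_) (fun x => ?_) h
  · rw [← Finset.sum_div, hAB]
    exact div_self_le_one _
  · exact sum_pos_of_pos (f := fun a => D.relaySource ((a, s.1.2), s.2))
      (fun _ => hD.pR_nonneg _ _) (i := s.1.1) hs
  · have h1 := pos_of_mul_pos_left hr ((hD.QR _).1 _)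
    have h2 := pos_of_mul_pos_right hr (hD.relayInput.1 _)
    have h3 := pos_of_mul_pos_left h1 (hD.law_nonneg _ _)
    obtain ⟨-, -, h4, -, -⟩ := hD.law_pos (pos_of_mul_pos_right h1 (hD.pR_nonneg _ _))
    refine div_pos (sum_pos_of_pos (fun _ => mul_nonneg (hD.pR_nonneg _ _) <|
      Finset.sum_nonneg fun _ _ => mul_nonneg ((hD.pX1 _ _).1 _) ((hD.QR _).1 _)) (i := r.1.1)
        (mul_pos h3 <| sum_pos_of_pos (fun _ => mul_nonneg ((hD.pX1 _ _).1 _) ((hD.QR _).1 _))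
          (i := r.2.2.2.2.1) (mul_pos h4 h2)))
      (sum_pos_of_pos (fun _ => hD.pR_nonneg _ _) (i := r.1.1) h3)
  · set z := (x.1.2, x.2.2.2.2.2.2.1, x.2.2.2.1, x.2.2.2.2.2.2.2, x.2.1) with hz
    refine (mul_div_cancel_of_imp' fun h0 => le_antisymm ?_ (hA z _)).symm
    have h0' : B z = 0 := h0
    rw [← h0', ← hAB]
    exact Finset.single_le_sum (fun y _ => hA z y) (Finset.mem_univ _)

theorem Valid.exists_fR3_lt_one (hD : D.Valid)
    (h : condEntropyOf D.relaySource (fun x => x.1) (fun x => x.2) <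
      condMutualInfoOf D.relayJoint (fun x => (x.1.2.2.2.2.1, x.1.2.2.2.2.2.1)) (fun x => x.2)
        fun x => (x.1.2.2.1, x.1.2.2.2.1, x.1.2.2.2.2.2.2, x.1.2.1)) :
    ∃ t, 0 < t ∧ t < 1 ∧ D.fR3 t < 1 := by
  rw [← sum_mul_log_source] at h
  let A (z : V1 × V2 × X3 × W3) (y : Y3) : ℝ :=
    ∑ c, D.pR c z.2.2.2 * ∑ x1, D.pX1 c.1 z.1 x1 * ∑ x2, D.pX2 c.2 z.2.1 x2 *
      D.QR (x1, x2, z.2.2.1) y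
  let B (z : V1 × V2 × X3 × W3) : ℝ := ∑ c, D.pR c z.2.2.2
  have hAB : ∀ z, ∑ y, A z y = B z := fun z => by
    simp only [A, B]
    rw [Finset.sum_comm]
    refine Finset.sum_congr rfl fun c1 _ => ?_
    rw [← Finset.mul_sum, Finset.sum_comm]
    simp only [← Finset.mul_sum, Finset.sum_comm (s := (Finset.univ : Finset Y3)), (hD.QR _).2,
      mul_one, (hD.pX1 _ _).2, (hD.pX2 _ _).2]
  have hN : ∀ (c : S1 × S2) (z : V1 × V2 × X3) y,
      0 ≤ ∑ x1, D.pX1 c.1 z.1 x1 * ∑ x2, D.pX2 c.2 z.2.1 x2 *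
      D.QR (x1, x2, z.2.2) y := fun c z y => Finset.sum_nonneg fun _ _ =>
    mul_nonneg ((hD.pX1 _ _).1 _) <| Finset.sum_nonneg fun _ _ =>
      mul_nonneg ((hD.pX2 _ _).1 _) ((hD.QR _).1 _)
  have hA : ∀ z y, 0 ≤ A z y := fun z y => Finset.sum_nonneg fun c _ =>
    mul_nonneg (hD.pR_nonneg _ _) (hN c (z.1, z.2.1, z.2.2.1) y)
  have hB : ∀ z, 0 ≤ B z := fun z => Finset.sum_nonneg fun _ _ => hD.pR_nonneg _ _
  refine exists_bhat_lt_one_of_lt_condMutualInfoOf hD.relayWeight_nonneg hD.relayScore_nonneg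
    hD.relaySource hD.relayInput (K := fun r => D.QR r.2.2.2.2) (fun r => hD.QR _)
    hD.relay_push_source relay_push_joint (fun x => rfl) (fun r => (r.2.2.2.2.1, r.2.2.2.2.2.1))
    (fun r => (r.2.2.1, r.2.2.2.1, r.2.2.2.2.2.2, r.2.1))
    (N := fun z y => A z y / B z) (fun z y => div_nonneg (hA z y) (hB z))
    (fun z => ?_) (p₂ := fun s => ∑ a, D.relaySource (a, s.2)) (fun s hs => ?_)
    (fun r y hr => ?_) (fun x => ?_) h
  · rw [← Finset.sum_div, hAB]
    exact div_self_le_one _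
  · exact sum_pos_of_pos (f := fun a => D.relaySource (a, s.2))
      (fun _ => hD.pR_nonneg _ _) (i := s.1) hs
  · have h1 := pos_of_mul_pos_left hr ((hD.QR _).1 _)
    have h2 := pos_of_mul_pos_right hr (hD.relayInput.1 _)
    have h3 := pos_of_mul_pos_left h1 (hD.law_nonneg _ _)
    obtain ⟨-, -, h4, h5, -⟩ := hD.law_pos (pos_of_mul_pos_right h1 (hD.pR_nonneg _ _))
    refine div_pos (sum_pos_of_pos (fun c => mul_nonneg (hD.pR_nonneg _ _)
      (hN c (r.2.2.1, r.2.2.2.1, r.2.2.2.2.2.2) y)) (i := r.1)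
        (mul_pos h3 <| sum_pos_of_pos (fun _ => mul_nonneg ((hD.pX1 _ _).1 _) <|
          Finset.sum_nonneg fun _ _ => mul_nonneg ((hD.pX2 _ _).1 _) ((hD.QR _).1 _))
          (i := r.2.2.2.2.1) (mul_pos h4 <| sum_pos_of_pos (fun _ =>
            mul_nonneg ((hD.pX2 _ _).1 _) ((hD.QR _).1 _)) (i := r.2.2.2.2.2.1) (mul_pos h5 h2))))
      (sum_pos_of_pos (fun _ => hD.pR_nonneg _ _) (i := r.1) h3)
  · set z := (x.2.2.2.1, x.2.2.2.2.1, x.2.2.2.2.2.2.2, x.2.1) with hz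
    refine (mul_div_cancel_of_imp' fun h0 => le_antisymm ?_ (hA z _)).symm
    have h0' : B z = 0 := h0
    rw [← h0', ← hAB]
    exact Finset.single_le_sum (fun y _ => hA z y) (Finset.mem_univ _)

theorem Valid.exists_fD1_lt_one (hD : D.Valid)
    (h : condEntropyOf D.destSource (fun x => x.1.1) (fun x => (x.1.2, x.2)) <
      condMutualInfoOf D.destJoint (fun x => (x.1.2.2.2.1, x.1.2.2.2.2.2)) (fun x => x.2)
        fun x => (x.1.1.1, x.1.2.2.2.2.1, x.1.2.2.1)) :
    ∃ t, 0 < t ∧ t < 1 ∧ D.fD1 t < 1 := by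
  rw [← sum_mul_log_source_fst] at h
  refine exists_bhat_lt_one_of_lt_condMutualInfoOf hD.destWeight_nonneg hD.destScore_nonneg
    hD.destSource hD.destInput (K := fun r => D.QD r.2.2.2) (fun r => hD.QD _)
    hD.dest_push_source hD.dest_push_joint (fun x => rfl) (fun r => (r.2.2.2.1, r.2.2.2.2.2))
    (fun r => (r.1.1, r.2.2.2.2.1, r.2.2.1))
    (N := fun z y => ∑ v1, D.pV1 v1 * ∑ x1, D.pX1 z.1 v1 x1 * ∑ x3, D.pX3 v1 z.2.2 x3 *
      D.QD (x1, z.2.1, x3) y)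
    (fun z y => Finset.sum_nonneg fun _ _ => mul_nonneg (hD.pV1.1 _) <|
      Finset.sum_nonneg fun _ _ => mul_nonneg ((hD.pX1 _ _).1 _) <|
      Finset.sum_nonneg fun _ _ => mul_nonneg ((hD.pX3 _ _).1 _) ((hD.QD _).1 _))
    (fun z => le_of_eq ?_) (p₂ := fun s => ∑ a, D.destSource ((a, s.1.2), s.2)) (fun s hs => ?_)
    (fun r y hr => ?_) (fun x => rfl) h
  · simp only [← Finset.mul_sum, Finset.sum_comm (s := (Finset.univ : Finset Y)), (hD.QD _).2,
      mul_one, (hD.pX1 _ _).2, (hD.pX3 _ _).2, hD.pV1.2]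
  · exact sum_pos_of_pos (f := fun a => D.destSource ((a, s.1.2), s.2))
      (fun _ => hD.pD_nonneg _ _) (i := s.1.1) hs
  · have h1 := pos_of_mul_pos_left hr ((hD.QD _).1 _)
    have h2 := pos_of_mul_pos_right hr (hD.destInput.1 _)
    obtain ⟨h3, -, h4, -, h5⟩ := hD.law_pos (pos_of_mul_pos_right h1 (hD.pS.1 _))
    exact sum_pos_of_pos (fun _ => mul_nonneg (hD.pV1.1 _) <|
      Finset.sum_nonneg fun _ _ => mul_nonneg ((hD.pX1 _ _).1 _) <|
      Finset.sum_nonneg fun _ _ => mul_nonneg ((hD.pX3 _ _).1 _) ((hD.QD _).1 _)) (i := r.2.1)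
      (mul_pos h3 <| sum_pos_of_pos (fun _ => mul_nonneg ((hD.pX1 _ _).1 _) <|
        Finset.sum_nonneg fun _ _ => mul_nonneg ((hD.pX3 _ _).1 _) ((hD.QD _).1 _))
        (i := r.2.2.2.1) (mul_pos h4 <| sum_pos_of_pos (fun _ =>
          mul_nonneg ((hD.pX3 _ _).1 _) ((hD.QD _).1 _)) (i := r.2.2.2.2.2) (mul_pos h5 h2)))

theorem Valid.exists_fD3_lt_one (hD : D.Valid)
    (h : condEntropyOf D.destSource (fun x => x.1) (fun x => x.2) <
      condMutualInfoOf D.destJoint (fun x => x.1.2.2.2) (fun x => x.2) fun x => x.1.1) :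
    ∃ t, 0 < t ∧ t < 1 ∧ D.fD3 t < 1 := by
  rw [← sum_mul_log_source] at h
  refine exists_bhat_lt_one_of_lt_condMutualInfoOf hD.destWeight_nonneg hD.destScore_nonneg
    hD.destSource hD.destInput (K := fun r => D.QD r.2.2.2) (fun r => hD.QD _)
    hD.dest_push_source hD.dest_push_joint (fun x => rfl) (fun r => r.2.2.2)
    (fun r => r.1) (N := D.ND3) hD.ND3_nonneg (fun c => le_of_eq ?_)
    (p₂ := fun s => ∑ a, D.destSource (a, s.2)) (fun s hs => ?_)
    (fun r y hr => ?_) (fun x => rfl) ?_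
  · simp only [ND3]
    rw [Finset.sum_comm]
    simp only [← Finset.mul_sum, (hD.QD _).2, mul_one, hD.sum_law]
  · exact sum_pos_of_pos (f := fun a => D.destSource (a, s.2))
      (fun _ => hD.pD_nonneg _ _) (i := s.1) hs
  · have h1 := pos_of_mul_pos_left hr ((hD.QD _).1 _)
    have h2 := pos_of_mul_pos_right hr (hD.destInput.1 _)
    exact sum_pos_of_pos (fun _ => mul_nonneg (hD.law_nonneg _ _) ((hD.QD _).1 _)) (i := r.2)
      (mul_pos (pos_of_mul_pos_right h1 (hD.pS.1 _)) h2)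
  · exact h

end MARC.Kernels

namespace MARC

section Push

variable {Ω Λ α β γ : Type*} [Fintype Ω] [Fintype Λ] [Fintype α] [Fintype β] [Fintype γ]
  [DecidableEq α] [DecidableEq β] [DecidableEq γ] {μ : Ω → ℝ} {ν : Λ → ℝ} {π : Ω → Λ}

theorem condEntropyOf_push (h : ∀ φ : Λ → ℝ, ∑ ω, μ ω * φ (π ω) = ∑ x, ν x * φ x) (X : Λ → α)
    (Y : Λ → β) :
    condEntropyOf μ (fun ω => X (π ω)) (fun ω => Y (π ω)) = condEntropyOf ν X Y := by
  rw [condEntropyOf, condEntropyOf, entropyOf_push h Y, entropyOf_push h fun x => (X x, Y x)]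

theorem condMutualInfoOf_push (h : ∀ φ : Λ → ℝ, ∑ ω, μ ω * φ (π ω) = ∑ x, ν x * φ x) (X : Λ → α)
    (Y : Λ → β) (Z : Λ → γ) :
    condMutualInfoOf μ (fun ω => X (π ω)) (fun ω => Y (π ω)) (fun ω => Z (π ω)) =
      condMutualInfoOf ν X Y Z := by
  rw [condMutualInfoOf, condMutualInfoOf, entropyOf_push h Z, entropyOf_push h fun x => (X x, Z x),
    entropyOf_push h fun x => (Y x, Z x), entropyOf_push h fun x => (X x, Y x, Z x)]

end Push

namespace Kernels

variable {S1 S2 W W3 V1 V2 X1 X2 X3 Y Y3 : Type*}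
  [Fintype S1] [Fintype S2] [Fintype W] [Fintype W3] [Fintype V1] [Fintype V2]
  [Fintype X1] [Fintype X2] [Fintype X3] [Fintype Y] [Fintype Y3]

section Swap

variable {D : Kernels S1 S2 W W3 V1 V2 X1 X2 X3 Y Y3}

theorem swap_push_relaySource (φ : (S2 × S1) × W3 → ℝ) :
    ∑ x, D.relaySource x * φ (x.1.swap, x.2) = ∑ x, D.swap.relaySource x * φ x :=
  Fintype.sum_equiv ((Equiv.prodComm S1 S2).prodCongr (Equiv.refl W3)) _ _ fun _ => rfl

theorem swap_push_destSource (φ : (S2 × S1) × W → ℝ) :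
    ∑ x, D.destSource x * φ (x.1.swap, x.2) = ∑ x, D.swap.destSource x * φ x :=
  Fintype.sum_equiv ((Equiv.prodComm S1 S2).prodCongr (Equiv.refl W)) _ _ fun _ => rfl

/-- `swapZ` as an equivalence. -/
def swapZEquiv (V1 V2 X1 X2 X3 : Type*) :
    V1 × V2 × X1 × X2 × X3 ≃ V2 × V1 × X2 × X1 × X3 :=
  ⟨swapZ, swapZ, fun _ => rfl, fun _ => rfl⟩

theorem swap_push_relayJoint
    (φ : ((S2 × S1) × W3 × (V2 × V1 × X2 × X1 × X3)) × Y3 → ℝ) :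
    ∑ x, D.relayJoint x * φ ((x.1.1.swap, x.1.2.1, swapZ x.1.2.2), x.2) =
      ∑ x, D.swap.relayJoint x * φ x :=
  Fintype.sum_equiv (((Equiv.prodComm S1 S2).prodCongr
    ((Equiv.refl W3).prodCongr (swapZEquiv V1 V2 X1 X2 X3))).prodCongr (Equiv.refl Y3)) _ _
    fun x => congrArg (· * _) (by
      change _ = D.pR x.1.1 _ * D.swap.law x.1.1.swap (swapZ x.1.2.2) * _
      rw [swap_law]
      rfl)

theorem swap_push_destJoint (φ : ((S2 × S1) × (V2 × V1 × X2 × X1 × X3)) × Y → ℝ) :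
    ∑ x, D.destJoint x * φ ((x.1.1.swap, swapZ x.1.2), x.2) = ∑ x, D.swap.destJoint x * φ x :=
  Fintype.sum_equiv (((Equiv.prodComm S1 S2).prodCongr (swapZEquiv V1 V2 X1 X2 X3)).prodCongr
    (Equiv.refl Y)) _ _
    fun x => congrArg (· * _) (by
      change _ = D.pS x.1.1 * D.swap.law x.1.1.swap (swapZ x.1.2) * _
      rw [swap_law]
      rfl)

end Swap

/-- The kernels derived from a source pmf, a channel and the input distributions. -/
def ofLaw (p : S1 × S2 × W × W3 → ℝ) (Q : X1 × X2 × X3 → Y × Y3 → ℝ) (pV1 : V1 → ℝ) (pV2 : V2 → ℝ)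
    (pX1 : S1 → V1 → X1 → ℝ) (pX2 : S2 → V2 → X2 → ℝ) (pX3 : V1 → V2 → X3 → ℝ) :
    Kernels S1 S2 W W3 V1 V2 X1 X2 X3 Y Y3 where
  pS := fun c => ∑ w, ∑ w3, p (c.1, c.2, w, w3)
  pR := fun c w3 => ∑ w, p (c.1, c.2, w, w3)
  pD := fun c w => ∑ w3, p (c.1, c.2, w, w3)
  pV1 := pV1
  pV2 := pV2
  pX1 := pX1
  pX2 := pX2
  pX3 := pX3
  QR := fun x y3 => ∑ y, Q x (y, y3)
  QD := fun x y => ∑ y3, Q x (y, y3)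

variable {p : S1 × S2 × W × W3 → ℝ} {Q : X1 × X2 × X3 → Y × Y3 → ℝ} {pV1 : V1 → ℝ} {pV2 : V2 → ℝ}
    {pX1 : S1 → V1 → X1 → ℝ} {pX2 : S2 → V2 → X2 → ℝ} {pX3 : V1 → V2 → X3 → ℝ}

theorem ofLaw_valid (hp : IsPmf p) (hQ : ∀ x, IsPmf (Q x)) (hV1 : IsPmf pV1) (hV2 : IsPmf pV2)
    (hX1 : ∀ s v, IsPmf (pX1 s v)) (hX2 : ∀ s v, IsPmf (pX2 s v))
    (hX3 : ∀ v1 v2, IsPmf (pX3 v1 v2)) : (ofLaw p Q pV1 pV2 pX1 pX2 pX3).Valid where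
  pS := ⟨fun _ => Finset.sum_nonneg fun _ _ => Finset.sum_nonneg fun _ _ => hp.1 _, by
    have := hp.2
    simp only [Fintype.sum_prod_type] at this
    simpa only [ofLaw, Fintype.sum_prod_type] using this⟩
  pR_nonneg := fun _ _ => Finset.sum_nonneg fun _ _ => hp.1 _
  pR_sum := fun _ => Finset.sum_comm
  pD_nonneg := fun _ _ => Finset.sum_nonneg fun _ _ => hp.1 _
  pD_sum := fun _ => rfl
  pV1 := hV1
  pV2 := hV2
  pX1 := hX1
  pX2 := hX2
  pX3 := hX3
  QR := fun x => ⟨fun _ => Finset.sum_nonneg fun _ _ => (hQ x).1 _, by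
    rw [← (hQ x).2, Fintype.sum_prod_type_right]
    rfl⟩
  QD := fun x => ⟨fun _ => Finset.sum_nonneg fun _ _ => (hQ x).1 _, by
    rw [← (hQ x).2, Fintype.sum_prod_type]
    rfl⟩

end Kernels

section Joint

open Kernels

variable {S1 S2 W W3 X1 X2 X3 Y Y3 : Type*} {n1 n2 : ℕ}
  [Fintype S1] [Fintype S2] [Fintype W] [Fintype W3]
  [Fintype X1] [Fintype X2] [Fintype X3] [Fintype Y] [Fintype Y3]
  {p : S1 × S2 × W × W3 → ℝ} {Q : X1 × X2 × X3 → Y × Y3 → ℝ} {pV1 : Fin n1 → ℝ} {pV2 : Fin n2 → ℝ}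
  {pX1 : S1 → Fin n1 → X1 → ℝ} {pX2 : S2 → Fin n2 → X2 → ℝ} {pX3 : Fin n1 → Fin n2 → X3 → ℝ}

theorem thm1Joint_push_relayJoint
    (φ : ((S1 × S2) × W3 × (Fin n1 × Fin n2 × X1 × X2 × X3)) × Y3 → ℝ) :
    ∑ ω, thm1Joint n1 n2 p Q pV1 pV2 pX1 pX2 pX3 ω *
        φ (((ω.1, ω.2.1), ω.2.2.1, ω.2.2.2.2.1, ω.2.2.2.2.2.1, ω.2.2.2.2.2.2.1, ω.2.2.2.2.2.2.2.1,
          ω.2.2.2.2.2.2.2.2.1), ω.2.2.2.2.2.2.2.2.2.1) =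
      ∑ x, (ofLaw p Q pV1 pV2 pX1 pX2 pX3).relayJoint x * φ x := by
  let e : S1 × S2 × W3 × W × Fin n1 × Fin n2 × X1 × X2 × X3 × Y3 × Y ≃
      (((S1 × S2) × W3 × (Fin n1 × Fin n2 × X1 × X2 × X3)) × Y3) × (W × Y) :=
    ⟨fun (s1, s2, w3, w, v1, v2, x1, x2, x3, y3, y) =>
        ((((s1, s2), w3, (v1, v2, x1, x2, x3)), y3), (w, y)),
      fun ((((s1, s2), w3, (v1, v2, x1, x2, x3)), y3), (w, y)) =>
        (s1, s2, w3, w, v1, v2, x1, x2, x3, y3, y), fun _ => rfl, fun _ => rfl⟩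
  rw [← e.symm.sum_comp, Fintype.sum_prod_type]
  refine Finset.sum_congr rfl fun x _ => ?_
  simp only [relayJoint, relayInput, ofLaw]
  calc _ = ∑ w : W, ∑ y : Y, p (x.1.1.1, x.1.1.2, w, x.1.2.1) * (Q x.1.2.2.2.2 (y, x.2) *
        ((ofLaw p Q pV1 pV2 pX1 pX2 pX3).law x.1.1 x.1.2.2 * φ x)) := by
        rw [Fintype.sum_prod_type]
        refine Finset.sum_congr rfl fun w _ => Finset.sum_congr rfl fun y _ => ?_
        simp only [e, thm1Joint, Equiv.coe_fn_symm_mk, law, ofLaw]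
        ring
    _ = _ := by
        rw [← Finset.sum_mul_sum, ← Finset.sum_mul]
        simp only [law, ofLaw]
        ring

theorem thm1Joint_push_destJoint
    (φ : ((S1 × S2) × (Fin n1 × Fin n2 × X1 × X2 × X3)) × Y → ℝ) :
    ∑ ω, thm1Joint n1 n2 p Q pV1 pV2 pX1 pX2 pX3 ω *
        φ (((ω.1, ω.2.1), ω.2.2.2.2.1, ω.2.2.2.2.2.1, ω.2.2.2.2.2.2.1, ω.2.2.2.2.2.2.2.1,
          ω.2.2.2.2.2.2.2.2.1), ω.2.2.2.2.2.2.2.2.2.2) =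
      ∑ x, (ofLaw p Q pV1 pV2 pX1 pX2 pX3).destJoint x * φ x := by
  let e : S1 × S2 × W3 × W × Fin n1 × Fin n2 × X1 × X2 × X3 × Y3 × Y ≃
      (((S1 × S2) × (Fin n1 × Fin n2 × X1 × X2 × X3)) × Y) × ((W × W3) × Y3) :=
    ⟨fun (s1, s2, w3, w, v1, v2, x1, x2, x3, y3, y) =>
        ((((s1, s2), (v1, v2, x1, x2, x3)), y), ((w, w3), y3)),
      fun ((((s1, s2), (v1, v2, x1, x2, x3)), y), ((w, w3), y3)) =>
        (s1, s2, w3, w, v1, v2, x1, x2, x3, y3, y), fun _ => rfl, fun _ => rfl⟩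
  rw [← e.symm.sum_comp, Fintype.sum_prod_type]
  refine Finset.sum_congr rfl fun x _ => ?_
  simp only [destJoint, destInput, ofLaw]
  calc _ = ∑ v : W × W3, ∑ y3 : Y3, p (x.1.1.1, x.1.1.2, v.1, v.2) * (Q x.1.2.2.2 (x.2, y3) *
        ((ofLaw p Q pV1 pV2 pX1 pX2 pX3).law x.1.1 x.1.2 * φ x)) := by
        rw [Fintype.sum_prod_type]
        refine Finset.sum_congr rfl fun w _ => Finset.sum_congr rfl fun y _ => ?_
        simp only [e, thm1Joint, Equiv.coe_fn_symm_mk, law, ofLaw]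
        ring
    _ = _ := by
        rw [← Finset.sum_mul_sum, ← Finset.sum_mul, Fintype.sum_prod_type]
        simp only [law, ofLaw]
        ring

theorem thm1Joint_push_source (hD : (ofLaw p Q pV1 pV2 pX1 pX2 pX3).Valid)
    (hQ : ∀ x, IsPmf (Q x)) (φ : S1 × S2 × W × W3 → ℝ) :
    ∑ ω, thm1Joint n1 n2 p Q pV1 pV2 pX1 pX2 pX3 ω * φ (ω.1, ω.2.1, ω.2.2.2.1, ω.2.2.1) =
      ∑ x, p x * φ x := by
  let e : S1 × S2 × W3 × W × Fin n1 × Fin n2 × X1 × X2 × X3 × Y3 × Y ≃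
      (S1 × S2 × W × W3) × ((Fin n1 × Fin n2 × X1 × X2 × X3) × (Y × Y3)) :=
    ⟨fun (s1, s2, w3, w, v1, v2, x1, x2, x3, y3, y) =>
        ((s1, s2, w, w3), ((v1, v2, x1, x2, x3), (y, y3))),
      fun ((s1, s2, w, w3), ((v1, v2, x1, x2, x3), (y, y3))) =>
        (s1, s2, w3, w, v1, v2, x1, x2, x3, y3, y), fun _ => rfl, fun _ => rfl⟩
  rw [← e.symm.sum_comp, Fintype.sum_prod_type]
  refine Finset.sum_congr rfl fun x _ => ?_
  calc _ = ∑ z, ∑ y, p x * φ x * ((ofLaw p Q pV1 pV2 pX1 pX2 pX3).law (x.1, x.2.1) z *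
        Q z.2.2 y) := by
        rw [Fintype.sum_prod_type]
        refine Finset.sum_congr rfl fun w _ => Finset.sum_congr rfl fun y _ => ?_
        simp only [e, thm1Joint, Equiv.coe_fn_symm_mk, law, ofLaw]
        ring
    _ = _ := by simp only [← Finset.mul_sum, (hQ _).2, mul_one, hD.sum_law]

theorem thm1Joint_push_relaySource (hD : (ofLaw p Q pV1 pV2 pX1 pX2 pX3).Valid)
    (hQ : ∀ x, IsPmf (Q x)) (φ : (S1 × S2) × W3 → ℝ) :
    ∑ ω, thm1Joint n1 n2 p Q pV1 pV2 pX1 pX2 pX3 ω * φ ((ω.1, ω.2.1), ω.2.2.1) =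
      ∑ x, (ofLaw p Q pV1 pV2 pX1 pX2 pX3).relaySource x * φ x := by
  rw [thm1Joint_push_source hD hQ fun x => φ ((x.1, x.2.1), x.2.2.2)]
  simp only [Fintype.sum_prod_type, relaySource, ofLaw, Finset.sum_mul]
  refine Finset.sum_congr rfl fun _ _ => Finset.sum_congr rfl fun _ _ => ?_
  exact Finset.sum_comm

theorem thm1Joint_push_destSource (hD : (ofLaw p Q pV1 pV2 pX1 pX2 pX3).Valid)
    (hQ : ∀ x, IsPmf (Q x)) (φ : (S1 × S2) × W → ℝ) :
    ∑ ω, thm1Joint n1 n2 p Q pV1 pV2 pX1 pX2 pX3 ω * φ ((ω.1, ω.2.1), ω.2.2.2.1) =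
      ∑ x, (ofLaw p Q pV1 pV2 pX1 pX2 pX3).destSource x * φ x := by
  rw [thm1Joint_push_source hD hQ fun x => φ ((x.1, x.2.1), x.2.2.1)]
  simp only [Fintype.sum_prod_type, destSource, ofLaw, Finset.sum_mul]

theorem push_trans {Ω Λ Λ' : Type*} [Fintype Ω] [Fintype Λ] [Fintype Λ'] {μ : Ω → ℝ} {ν : Λ → ℝ}
    {ν' : Λ' → ℝ} {π : Ω → Λ} {π' : Λ → Λ'}
    (h : ∀ φ : Λ → ℝ, ∑ ω, μ ω * φ (π ω) = ∑ x, ν x * φ x)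
    (h' : ∀ φ : Λ' → ℝ, ∑ x, ν x * φ (π' x) = ∑ x, ν' x * φ x) (φ : Λ' → ℝ) :
    ∑ ω, μ ω * φ (π' (π ω)) = ∑ x, ν' x * φ x :=
  (h fun x => φ (π' x)).trans (h' φ)

end Joint

end MARC

namespace MARC

section Transfer

variable {S1 S2 W W3 V1 V2 X1 X2 X3 Y Y3 X1' X2' X3' Y' Y3' : Type*}
  [Fintype S1] [Fintype S2] [Fintype W] [Fintype W3] [Fintype Y] [Fintype Y3] [Fintype Y']
  [Fintype Y3'] {D : Kernels S1 S2 W W3 V1 V2 X1 X2 X3 Y Y3} {p : S1 × S2 × W × W3 → ℝ}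
  {Q : X1' × X2' × X3' → Y' × Y3' → ℝ}

theorem sum_pS_mul (hp : ∀ c, D.pS c = ∑ w, ∑ w3, p (c.1, c.2, w, w3)) (φ : S1 × S2 → ℝ) :
    ∑ c, D.pS c * φ c = ∑ ω, p ω * φ (ω.1, ω.2.1) := by
  simp only [hp, Fintype.sum_prod_type, Finset.sum_mul]

theorem relayErr_eq_relayError (θ1 : X1 → X1') (θ2 : X2 → X2') (θ3 : X3 → X3') (η : Y3' → Y3)
    (hp : ∀ c w3, D.pR c w3 = ∑ w, p (c.1, c.2, w, w3))
    (hQ : ∀ x (F : Y3 → ℝ),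
      ∑ y, D.QR x y * F y = ∑ o, Q (θ1 x.1, θ2 x.2.1, θ3 x.2.2) o * F (η o.2))
    (x1 : S1 → S1 → X1) (x2 : S2 → S2 → X2) (x3 : S1 × S2 → X3)
    (gR : S1 × S2 → Y3 → W3 → S1 × S2) (a : S1 × S2) :
    relayErr p Q (fun c s => θ1 (x1 c s)) (fun c s => θ2 (x2 c s)) (fun s => θ3 (x3 s))
      (fun s y w => gR s (η y) w) a = D.relayError x1 x2 x3 gR a := by
  have h : ∀ ω : S1 × S2 × W × W3, ∑ o, Q (θ1 (x1 ω.1 a.1), θ2 (x2 ω.2.1 a.2), θ3 (x3 a)) o *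
      ind (gR a (η o.2) ω.2.2.2 ≠ (ω.1, ω.2.1)) =
      ∑ y, D.QR (x1 ω.1 a.1, x2 ω.2.1 a.2, x3 a) y * ind (gR a y ω.2.2.2 ≠ (ω.1, ω.2.1)) :=
    fun ω => (hQ (_, _, _) fun y => ind (gR a y ω.2.2.2 ≠ (ω.1, ω.2.1))).symm
  simp only [relayErr, h]
  simp only [Kernels.relayError, hp, mul_assoc, ← Finset.mul_sum]
  simp only [Fintype.sum_prod_type, Finset.sum_mul]
  exact Finset.sum_congr rfl fun _ _ => Finset.sum_congr rfl fun _ _ => Finset.sum_comm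

theorem destErr_eq_destError (θ1 : X1 → X1') (θ2 : X2 → X2') (θ3 : X3 → X3') (η : Y' → Y)
    (hp : ∀ c w, D.pD c w = ∑ w3, p (c.1, c.2, w, w3))
    (hQ : ∀ x (F : Y → ℝ),
      ∑ y, D.QD x y * F y = ∑ o, Q (θ1 x.1, θ2 x.2.1, θ3 x.2.2) o * F (η o.1))
    (x1 : S1 → S1 → X1) (x2 : S2 → S2 → X2) (x3 : S1 × S2 → X3)
    (gD : S1 × S2 → Y → W → S1 × S2) (c : S1 × S2) :
    destErr p Q (fun c s => θ1 (x1 c s)) (fun c s => θ2 (x2 c s)) (fun s => θ3 (x3 s))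
      (fun s y w => gD s (η y) w) c = D.destError x1 x2 x3 gD c := by
  have h : ∀ ω : S1 × S2 × W × W3,
      ∑ o, Q (θ1 (x1 c.1 ω.1), θ2 (x2 c.2 ω.2.1), θ3 (x3 (ω.1, ω.2.1))) o *
        ind (gD c (η o.1) ω.2.2.1 ≠ (ω.1, ω.2.1)) =
      ∑ y, D.QD (x1 c.1 ω.1, x2 c.2 ω.2.1, x3 (ω.1, ω.2.1)) y *
        ind (gD c y ω.2.2.1 ≠ (ω.1, ω.2.1)) :=
    fun ω => (hQ (_, _, _) fun y => ind (gD c y ω.2.2.1 ≠ (ω.1, ω.2.1))).symm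
  simp only [destErr, h]
  simp only [Kernels.destError, hp, mul_assoc, ← Finset.mul_sum]
  simp only [Fintype.sum_prod_type, Finset.sum_mul]

theorem Kernels.relayError_nonneg (hR : ∀ c w, 0 ≤ D.pR c w) (hQ : ∀ x y, 0 ≤ D.QR x y)
    (x1 : S1 → S1 → X1) (x2 : S2 → S2 → X2) (x3 : S1 × S2 → X3)
    (gR : S1 × S2 → Y3 → W3 → S1 × S2) (a : S1 × S2) : 0 ≤ D.relayError x1 x2 x3 gR a :=
  Finset.sum_nonneg fun _ _ => Finset.sum_nonneg fun _ _ => Finset.sum_nonneg fun _ _ =>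
    mul_nonneg (mul_nonneg (hR _ _) (hQ _ _)) (ind_nonneg _)

theorem Kernels.destError_nonneg (hR : ∀ c w, 0 ≤ D.pD c w) (hQ : ∀ x y, 0 ≤ D.QD x y)
    (x1 : S1 → S1 → X1) (x2 : S2 → S2 → X2) (x3 : S1 × S2 → X3)
    (gD : S1 × S2 → Y → W → S1 × S2) (c : S1 × S2) : 0 ≤ D.destError x1 x2 x3 gD c :=
  Finset.sum_nonneg fun _ _ => Finset.sum_nonneg fun _ _ => Finset.sum_nonneg fun _ _ =>
    mul_nonneg (mul_nonneg (hR _ _) (hQ _ _)) (ind_nonneg _)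

end Transfer

section Mute

theorem sum_delta_mul {Y : Type*} [Fintype Y] [DecidableEq Y] (y0 : Y) (F : Y → ℝ) :
    ∑ y, (if y = y0 then 1 else 0) * F y = F y0 := by
  simp

theorem isPmf_delta {Y : Type*} [Fintype Y] [DecidableEq Y] (y0 : Y) :
    IsPmf fun y : Y => if y = y0 then (1 : ℝ) else 0 :=
  ⟨fun y => by dsimp only; split_ifs <;> simp, by simp⟩

theorem sum_sumElim_delta {M K Y : Type*} [Fintype M] [Fintype K] [Fintype Y] [DecidableEq M]
    [DecidableEq K] [DecidableEq Y] (y0 : Y) (A : M → Y → ℝ) (F : (M ⊕ K → Y) → ℝ) :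
    ∑ y : M ⊕ K → Y, ((∏ j, A j (y (Sum.inl j))) *
        ∏ k, if y (Sum.inr k) = y0 then (1 : ℝ) else 0) * F y =
      ∑ y : M → Y, (∏ j, A j (y j)) * F (Sum.elim y fun _ => y0) := by
  rw [← (Equiv.sumArrowEquivProdArrow M K Y).symm.sum_comp, Fintype.sum_prod_type]
  refine Finset.sum_congr rfl fun y _ => ?_
  have h : ∀ z : K → Y, (∏ k, if z k = y0 then (1 : ℝ) else 0) =
      if z = fun _ => y0 then 1 else 0 := fun z => by
    rw [Fintype.prod_ite_zero]
    simp [funext_iff]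
  rw [← sum_delta_mul (fun _ : K => y0) fun z => (∏ j, A j (y j)) * F (Sum.elim y z)]
  refine Finset.sum_congr rfl fun z _ => ?_
  rw [← h, ← mul_assoc, mul_comm (∏ k, _)]
  rfl

namespace Kernels

variable {S1 S2 W W3 V1 V2 X1 X2 X3 Y Y3 : Type*}

/-- The same data with channels whose outputs are constant. -/
def mute [DecidableEq Y] [DecidableEq Y3] (D : Kernels S1 S2 W W3 V1 V2 X1 X2 X3 Y Y3) (y0 : Y)
    (y30 : Y3) : Kernels S1 S2 W W3 V1 V2 X1 X2 X3 Y Y3 :=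
  { D with
    QR := fun _ y => if y = y30 then 1 else 0
    QD := fun _ y => if y = y0 then 1 else 0 }

variable [DecidableEq Y] [DecidableEq Y3] [Fintype S1] [Fintype S2] [Fintype W] [Fintype W3]
  [Fintype V1] [Fintype V2] [Fintype X1] [Fintype X2] [Fintype X3] [Fintype Y] [Fintype Y3]

theorem Valid.mute {D : Kernels S1 S2 W W3 V1 V2 X1 X2 X3 Y Y3} (hD : D.Valid) (y0 : Y)
    (y30 : Y3) : (D.mute y0 y30).Valid :=
  { hD with
    QR := fun _ => isPmf_delta _
    QD := fun _ => isPmf_delta _ }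

variable (M K : Type*) [Fintype M] [Fintype K] [DecidableEq M] [DecidableEq K]
  (p : S1 × S2 × W × W3 → ℝ) (Q : X1 × X2 × X3 → Y × Y3 → ℝ)

/-- Data for a block with source times `M ⊕ K` of which only those in `M` use the channel. -/
def block (D : Kernels S1 S2 W W3 V1 V2 X1 X2 X3 Y Y3) (y0 : Y)
    (y30 : Y3) (k : M ⊕ K) : Kernels S1 S2 W W3 V1 V2 X1 X2 X3 Y Y3 :=
  Sum.elim (fun _ => D) (fun _ => D.mute y0 y30) k

theorem Valid.block {D : Kernels S1 S2 W W3 V1 V2 X1 X2 X3 Y Y3} (hD : D.Valid) (y0 : Y)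
    (y30 : Y3) : ∀ k, (D.block M K y0 y30 k).Valid
  | Sum.inl _ => hD
  | Sum.inr _ => hD.mute y0 y30

variable {M K p Q}

def blockSource (T : Type*) [Fintype T] (p : S1 × S2 × W × W3 → ℝ)
    (ω : (T → S1) × (T → S2) × (T → W) × (T → W3)) : ℝ :=
  ∏ k, p (ω.1 k, ω.2.1 k, ω.2.2.1 k, ω.2.2.2 k)

def blockChannel (M : Type*) [Fintype M] (Q : X1 × X2 × X3 → Y × Y3 → ℝ)
    (x : (M → X1) × (M → X2) × (M → X3)) (o : (M → Y) × (M → Y3)) : ℝ :=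
  ∏ j, Q (x.1 j, x.2.1 j, x.2.2 j) (o.1 j, o.2 j)

theorem isPmf_blockSource {T : Type*} [Fintype T] [DecidableEq T] (hp : IsPmf p) :
    IsPmf (blockSource T p) := by
  refine ⟨fun _ => Finset.prod_nonneg fun _ _ => hp.1 _, ?_⟩
  let e : (T → S1 × S2 × W × W3) ≃ (T → S1) × (T → S2) × (T → W) × (T → W3) :=
    ⟨fun F => (fun k => (F k).1, fun k => (F k).2.1, fun k => (F k).2.2.1, fun k => (F k).2.2.2),
      fun ω k => (ω.1 k, ω.2.1 k, ω.2.2.1 k, ω.2.2.2 k), fun _ => rfl, fun _ => rfl⟩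
  rw [sum_eq_prod_sum e (ψ := fun _ => p) fun _ => rfl]
  simp [hp.2]

theorem isPmf_blockChannel (hQ : ∀ x, IsPmf (Q x)) (x : (M → X1) × (M → X2) × (M → X3)) :
    IsPmf (blockChannel M Q x) := by
  refine ⟨fun _ => Finset.prod_nonneg fun _ _ => (hQ _).1 _, ?_⟩
  rw [sum_eq_prod_sum (pairPi M Y Y3) (ψ := fun j => Q (x.1 j, x.2.1 j, x.2.2 j)) fun _ => rfl]
  exact Finset.prod_eq_one fun _ _ => (hQ _).2

variable {pV1 : V1 → ℝ} {pV2 : V2 → ℝ} {pX1 : S1 → V1 → X1 → ℝ} {pX2 : S2 → V2 → X2 → ℝ}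
  {pX3 : V1 → V2 → X3 → ℝ} {y0 : Y} {y30 : Y3}

theorem pS_pi_block (c : (M ⊕ K → S1) × (M ⊕ K → S2)) :
    (pi ((ofLaw p Q pV1 pV2 pX1 pX2 pX3).block M K y0 y30)).pS c =
      ∑ w, ∑ w3, blockSource (M ⊕ K) p (c.1, c.2, w, w3) := by
  simp only [blockSource]
  rw [sum_pi_prod₂ fun k w w3 => p (c.1 k, c.2 k, w, w3)]
  exact Finset.prod_congr rfl fun k _ => by cases k <;> rfl

theorem pR_pi_block (c : (M ⊕ K → S1) × (M ⊕ K → S2)) (w3 : M ⊕ K → W3) :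
    (pi ((ofLaw p Q pV1 pV2 pX1 pX2 pX3).block M K y0 y30)).pR c w3 =
      ∑ w, blockSource (M ⊕ K) p (c.1, c.2, w, w3) := by
  simp only [blockSource]
  rw [sum_pi_prod fun k w => p (c.1 k, c.2 k, w, w3 k)]
  exact Finset.prod_congr rfl fun k _ => by cases k <;> rfl

theorem pD_pi_block (c : (M ⊕ K → S1) × (M ⊕ K → S2)) (w : M ⊕ K → W) :
    (pi ((ofLaw p Q pV1 pV2 pX1 pX2 pX3).block M K y0 y30)).pD c w =
      ∑ w3, blockSource (M ⊕ K) p (c.1, c.2, w, w3) := by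
  simp only [blockSource]
  rw [sum_pi_prod fun k w3 => p (c.1 k, c.2 k, w k, w3)]
  exact Finset.prod_congr rfl fun k _ => by cases k <;> rfl

theorem sum_QR_pi_block (x : (M ⊕ K → X1) × (M ⊕ K → X2) × (M ⊕ K → X3))
    (F : (M ⊕ K → Y3) → ℝ) :
    ∑ y, (pi ((ofLaw p Q pV1 pV2 pX1 pX2 pX3).block M K y0 y30)).QR x y * F y =
      ∑ o, blockChannel M Q (fun j => x.1 (Sum.inl j), fun j => x.2.1 (Sum.inl j),
        fun j => x.2.2 (Sum.inl j)) o * F (Sum.elim o.2 fun _ => y30) := by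
  simp only [pi, Fintype.prod_sum_type]
  refine (sum_sumElim_delta y30 (fun j y3 => ∑ y, Q (x.1 (Sum.inl j), x.2.1 (Sum.inl j),
    x.2.2 (Sum.inl j)) (y, y3)) F).trans ?_
  rw [Fintype.sum_prod_type_right]
  refine Finset.sum_congr rfl fun y3 _ => ?_
  rw [← sum_pi_prod fun j y => Q (x.1 (Sum.inl j), x.2.1 (Sum.inl j), x.2.2 (Sum.inl j)) (y, y3 j),
    Finset.sum_mul]
  rfl

theorem sum_QD_pi_block (x : (M ⊕ K → X1) × (M ⊕ K → X2) × (M ⊕ K → X3))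
    (F : (M ⊕ K → Y) → ℝ) :
    ∑ y, (pi ((ofLaw p Q pV1 pV2 pX1 pX2 pX3).block M K y0 y30)).QD x y * F y =
      ∑ o, blockChannel M Q (fun j => x.1 (Sum.inl j), fun j => x.2.1 (Sum.inl j),
        fun j => x.2.2 (Sum.inl j)) o * F (Sum.elim o.1 fun _ => y0) := by
  simp only [pi, Fintype.prod_sum_type]
  refine (sum_sumElim_delta y0 (fun j y => ∑ y3, Q (x.1 (Sum.inl j), x.2.1 (Sum.inl j),
    x.2.2 (Sum.inl j)) (y, y3)) F).trans ?_
  rw [Fintype.sum_prod_type]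
  refine Finset.sum_congr rfl fun y _ => ?_
  rw [← sum_pi_prod fun j y3 => Q (x.1 (Sum.inl j), x.2.1 (Sum.inl j), x.2.2 (Sum.inl j)) (y j, y3),
    Finset.sum_mul]
  rfl

end Kernels

end Mute

end MARC

namespace MARC

section Flatten

variable {S1 S2 W W3 X1 X2 X3 Y Y3 T M : Type*}
  [Fintype S1] [Fintype S2] [Fintype W] [Fintype W3] [Fintype Y] [Fintype Y3] [Fintype T]
  [Fintype M] [DecidableEq S1] [DecidableEq S2] [DecidableEq T] [DecidableEq M]

/-- A block code over the product alphabets, spelled out as a code over the original alphabets. -/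
theorem exists_code_of_block_code {p : S1 × S2 × W × W3 → ℝ} {Q : X1 × X2 × X3 → Y × Y3 → ℝ}
    {n B : ℕ} (ε : Fin n ≃ Fin B × T) (c : Fin n ≃ Fin (B + 1) × M)
    (hc : ∀ i j, (c j).1 < (c i).1 → j < i) {δ : ℝ}
    (F1 : (Fin B → T → S1) → Fin (B + 1) → M → X1) (F2 : (Fin B → T → S2) → Fin (B + 1) → M → X2)
    (F3 : Fin (B + 1) → (Fin (B + 1) → M → Y3) → (Fin B → T → W3) → M → X3)
    (g : (Fin (B + 1) → M → Y) → (Fin B → T → W) → Fin B → (T → S1) × (T → S2))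
    (hF3 : ∀ k y y' w, (∀ j < k, y j = y' j) → F3 k y w = F3 k y' w)
    (hδ : ∑ ω : Fin B → (T → S1) × (T → S2) × (T → W) × (T → W3),
      (∏ j, Kernels.blockSource T p (ω j)) *
        ∑ o : Fin (B + 1) → (M → Y) × (M → Y3),
          (∏ j, Kernels.blockChannel M Q (F1 (fun i => (ω i).1) j, F2 (fun i => (ω i).2.1) j,
            F3 j (fun i => (o i).2) (fun i => (ω i).2.2.2)) (o j)) *
          ind (g (fun i => (o i).1) (fun i => (ω i).2.2.1) ≠ fun i => ((ω i).1, (ω i).2.1)) ≤ δ) :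
    ∃ (f1 : (Fin n → S1) → Fin n → X1) (f2 : (Fin n → S2) → Fin n → X2)
      (f3 : Fin n → (Fin n → Y3) → (Fin n → W3) → X3)
      (g : (Fin n → Y) → (Fin n → W) → (Fin n → S1) × (Fin n → S2)),
      CausalRelay f3 ∧ marcErrProb p Q n f1 f2 f3 g ≤ δ := by
  refine ⟨fun s i => F1 (fun b t => s (ε.symm (b, t))) (c i).1 (c i).2,
    fun s i => F2 (fun b t => s (ε.symm (b, t))) (c i).1 (c i).2,
    fun i y w => F3 (c i).1 (fun b j => y (c.symm (b, j))) (fun b t => w (ε.symm (b, t))) (c i).2,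
    fun y w => (fun i => (g (fun b j => y (c.symm (b, j))) (fun b t => w (ε.symm (b, t))) (ε i).1).1
      (ε i).2, fun i => (g (fun b j => y (c.symm (b, j))) (fun b t => w (ε.symm (b, t))) (ε i).1).2
      (ε i).2), ?_, le_of_eq_of_le ?_ hδ⟩
  · intro i y y' w h
    refine congrFun (hF3 _ _ _ _ fun b hb => funext fun j => h _ (hc _ _ ?_)) _
    rwa [Equiv.apply_symm_apply]
  let e1 : (Fin B → (T → S1) × (T → S2) × (T → W) × (T → W3)) ≃
      (Fin n → S1) × (Fin n → S2) × (Fin n → W) × (Fin n → W3) :=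
    ⟨fun ω => (fun i => (ω (ε i).1).1 (ε i).2, fun i => (ω (ε i).1).2.1 (ε i).2,
        fun i => (ω (ε i).1).2.2.1 (ε i).2, fun i => (ω (ε i).1).2.2.2 (ε i).2),
      fun s b => (fun t => s.1 (ε.symm (b, t)), fun t => s.2.1 (ε.symm (b, t)),
        fun t => s.2.2.1 (ε.symm (b, t)), fun t => s.2.2.2 (ε.symm (b, t))),
      fun ω => by simp, fun s => by simp⟩
  let e2 : (Fin (B + 1) → (M → Y) × (M → Y3)) ≃ (Fin n → Y) × (Fin n → Y3) :=
    ⟨fun o => (fun i => (o (c i).1).1 (c i).2, fun i => (o (c i).1).2 (c i).2),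
      fun y b => (fun j => y.1 (c.symm (b, j)), fun j => y.2 (c.symm (b, j))),
      fun o => by simp, fun y => by simp⟩
  have h1 : ∀ φ : (Fin B → (T → S1) × (T → S2) × (T → W) × (T → W3)) → ℝ,
      ∑ ω, φ ω = ∑ s1, ∑ s2, ∑ w, ∑ w3, φ (e1.symm (s1, s2, w, w3)) := fun φ => by
    rw [← e1.symm.sum_comp]
    simp only [Fintype.sum_prod_type]
  have h2 : ∀ φ : (Fin (B + 1) → (M → Y) × (M → Y3)) → ℝ,
      ∑ o, φ o = ∑ y, ∑ y3, φ (e2.symm (y, y3)) := fun φ => by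
    rw [← e2.symm.sum_comp, Fintype.sum_prod_type]
  rw [h1, marcErrProb]
  refine Finset.sum_congr rfl fun s1 _ => Finset.sum_congr rfl fun s2 _ =>
    Finset.sum_congr rfl fun w _ => Finset.sum_congr rfl fun w3 _ => ?_
  rw [h2, Finset.mul_sum]
  refine Finset.sum_congr rfl fun y _ => ?_
  rw [Finset.mul_sum]
  refine Finset.sum_congr rfl fun y3 _ => ?_
  rw [← ε.symm.prod_comp, ← c.symm.prod_comp, Fintype.prod_prod_type, Fintype.prod_prod_type]
  simp only [Equiv.apply_symm_apply, e1, e2, Equiv.coe_fn_symm_mk, Kernels.blockSource,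
    Kernels.blockChannel]
  have hiff : ((fun i => (g (fun b j => y (c.symm (b, j))) (fun b t => w (ε.symm (b, t)))
      (ε i).1).1 (ε i).2, fun i => (g (fun b j => y (c.symm (b, j)))
      (fun b t => w (ε.symm (b, t))) (ε i).1).2 (ε i).2) = (s1, s2)) ↔
      g (fun b j => y (c.symm (b, j))) (fun b t => w (ε.symm (b, t))) =
        fun b => (fun t => s1 (ε.symm (b, t)), fun t => s2 (ε.symm (b, t))) := by
    constructor
    · intro h
      funext b
      refine Prod.ext (funext fun t => ?_) (funext fun t => ?_)
      · simpa using congrFun (congrArg Prod.fst h) (ε.symm (b, t))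
      · simpa using congrFun (congrArg Prod.snd h) (ε.symm (b, t))
    · intro h
      rw [h]
      simp
  by_cases hg : g (fun b j => y (c.symm (b, j))) (fun b t => w (ε.symm (b, t))) =
        fun b => (fun t => s1 (ε.symm (b, t)), fun t => s2 (ε.symm (b, t)))
  · rw [if_neg (not_not.2 (hiff.2 hg)), ind_neg (not_not.2 hg), mul_zero, mul_zero]
  · rw [if_pos (mt hiff.1 hg), ind_pos hg, mul_one]

end Flatten

end MARC

namespace MARC

theorem exists_pow_mul_sum_le {ι : Type*} [Fintype ι] {f f0 : ι → ℝ} (hf : ∀ i, 0 ≤ f i)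
    (hf1 : ∀ i, f i < 1) (hf0 : ∀ i, 0 ≤ f0 i) {δ : ℝ} (hδ : 0 < δ) :
    ∃ B k : ℕ, 0 < B ∧ 0 < k ∧ 2 * B * ∑ i, f i ^ (B * k) * f0 i ^ k ≤ δ := by
  have h1 : ∀ᶠ B : ℕ in Filter.atTop, ∀ i, f i ^ B * f0 i < 1 := by
    refine Filter.eventually_all.2 fun i => ?_
    have := (tendsto_pow_atTop_nhds_zero_of_lt_one (hf i) (hf1 i)).mul_const (f0 i)
    rw [zero_mul] at this
    exact this.eventually (gt_mem_nhds one_pos)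
  obtain ⟨B, hB, hB0⟩ := (h1.and (Filter.eventually_gt_atTop 0)).exists
  have h2 : Filter.Tendsto (fun k : ℕ => 2 * B * ∑ i, (f i ^ B * f0 i) ^ k) Filter.atTop
      (nhds (2 * B * ∑ _i : ι, 0)) :=
    Filter.Tendsto.const_mul _ (tendsto_finsetSum _ fun i _ =>
      tendsto_pow_atTop_nhds_zero_of_lt_one (mul_nonneg (pow_nonneg (hf i) _) (hf0 i)) (hB i))
  rw [Finset.sum_const_zero, mul_zero] at h2
  obtain ⟨k, hk, hk0⟩ :=
    ((h2.eventually (gt_mem_nhds hδ)).and (Filter.eventually_gt_atTop 0)).exists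
  refine ⟨B, k, hB0, hk0, ?_⟩
  simp only [pow_mul, ← mul_pow]
  exact hk.le

theorem nonempty_of_isPmf {α : Type*} [Fintype α] {p : α → ℝ} (hp : IsPmf p) : Nonempty α := by
  by_contra h
  rw [not_nonempty_iff] at h
  simpa using hp.2

theorem bhat_nonneg {Λ : Type*} [Fintype Λ] {q a M : Λ → ℝ} (hq : ∀ x, 0 ≤ q x)
    (ha : ∀ x, 0 ≤ a x) (hM : ∀ x, 0 ≤ M x) (t : ℝ) : 0 ≤ bhat q a M t :=
  Finset.sum_nonneg fun x _ => mul_nonneg (hq x)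
    (mul_nonneg (Real.rpow_nonneg (ha x) _) (Real.rpow_nonneg (hM x) _))

namespace Kernels

section

variable {S1 S2 W W3 V1 V2 X1 X2 X3 Y Y3 : Type*}
  [Fintype S1] [Fintype S2] [Fintype W] [Fintype W3] [Fintype V1] [Fintype V2]
  [Fintype X1] [Fintype X2] [Fintype X3] [Fintype Y] [Fintype Y3]
  [DecidableEq S1] [DecidableEq S2] [DecidableEq Y] [DecidableEq Y3]
  {D : Kernels S1 S2 W W3 V1 V2 X1 X2 X3 Y Y3}

/-- The six exponents. -/
noncomputable def exponent (D : Kernels S1 S2 W W3 V1 V2 X1 X2 X3 Y Y3) (t : Fin 6 → ℝ) :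
    Fin 6 → ℝ :=
  ![D.fR1 (t 0), D.swap.fR1 (t 1), D.fR3 (t 2), D.fD1 (t 3), D.swap.fD1 (t 4), D.fD3 (t 5)]

theorem Valid.exponent_nonneg (hD : D.Valid) (t : Fin 6 → ℝ) (i : Fin 6) :
    0 ≤ D.exponent t i := by
  fin_cases i
  · exact bhat_nonneg hD.relayWeight_nonneg hD.relayScore_nonneg (fun _ => hD.MR1_nonneg _ _ _ _) _
  · exact bhat_nonneg hD.swap.relayWeight_nonneg hD.swap.relayScore_nonneg
      (fun _ => hD.swap.MR1_nonneg _ _ _ _) _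
  · exact bhat_nonneg hD.relayWeight_nonneg hD.relayScore_nonneg (fun _ => hD.MR3_nonneg _ _ _) _
  · exact bhat_nonneg hD.destWeight_nonneg hD.destScore_nonneg
      (fun _ => hD.MD1_nonneg _ _ _ _ _) _
  · exact bhat_nonneg hD.swap.destWeight_nonneg hD.swap.destScore_nonneg
      (fun _ => hD.swap.MD1_nonneg _ _ _ _ _) _
  · exact bhat_nonneg hD.destWeight_nonneg hD.destScore_nonneg (fun _ => hD.MD3_nonneg _ _ _) _

theorem Valid.exponent_pi {T : Type*} [Fintype T] [DecidableEq T]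
    {D : T → Kernels S1 S2 W W3 V1 V2 X1 X2 X3 Y Y3} (hD : ∀ k, (D k).Valid) (t : Fin 6 → ℝ)
    (i : Fin 6) : (Kernels.pi D).exponent t i = ∏ k, (D k).exponent t i := by
  fin_cases i
  · exact fR1_pi hD _
  · exact (congrArg (fun D => fR1 D (t 1)) (swap_pi D)).trans (fR1_pi (fun k => (hD k).swap) _)
  · exact fR3_pi hD _
  · exact fD1_pi hD _
  · exact (congrArg (fun D => fD1 D (t 4)) (swap_pi D)).trans (fD1_pi (fun k => (hD k).swap) _)
  · exact fD3_pi hD _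

end

end Kernels

section Assembly

open Kernels

variable {S1 S2 W W3 V1 V2 X1 X2 X3 Y Y3 : Type*}
  [Fintype S1] [Fintype S2] [Fintype W] [Fintype W3] [Fintype V1] [Fintype V2]
  [Fintype X1] [Fintype X2] [Fintype X3] [Fintype Y] [Fintype Y3]
  [DecidableEq S1] [DecidableEq S2] [DecidableEq Y] [DecidableEq Y3]
  {p : S1 × S2 × W × W3 → ℝ} {Q : X1 × X2 × X3 → Y × Y3 → ℝ}
  {pV1 : V1 → ℝ} {pV2 : V2 → ℝ} {pX1 : S1 → V1 → X1 → ℝ} {pX2 : S2 → V2 → X2 → ℝ}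
  {pX3 : V1 → V2 → X3 → ℝ}

theorem exists_code_error_le [Nonempty S1] [Nonempty S2] (hp : IsPmf p) (hQ : ∀ x, IsPmf (Q x))
    (hD : (ofLaw p Q pV1 pV2 pX1 pX2 pX3).Valid) {t : Fin 6 → ℝ} (ht0 : ∀ i, 0 < t i)
    (ht1 : ∀ i, t i < 1) (y0 : Y) (y30 : Y3) (B k : ℕ) :
    ∃ (f1 : (Fin ((B + 1) * (B * k)) → S1) → Fin ((B + 1) * (B * k)) → X1)
      (f2 : (Fin ((B + 1) * (B * k)) → S2) → Fin ((B + 1) * (B * k)) → X2)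
      (f3 : Fin ((B + 1) * (B * k)) → (Fin ((B + 1) * (B * k)) → Y3) →
        (Fin ((B + 1) * (B * k)) → W3) → X3)
      (g : (Fin ((B + 1) * (B * k)) → Y) → (Fin ((B + 1) * (B * k)) → W) →
        (Fin ((B + 1) * (B * k)) → S1) × (Fin ((B + 1) * (B * k)) → S2)),
      CausalRelay f3 ∧ marcErrProb p Q ((B + 1) * (B * k)) f1 f2 f3 g ≤
        2 * B * ∑ i, (ofLaw p Q pV1 pV2 pX1 pX2 pX3).exponent t i ^ (B * k) *
          ((ofLaw p Q pV1 pV2 pX1 pX2 pX3).mute y0 y30).exponent t i ^ k := by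
  set D := ofLaw p Q pV1 pV2 pX1 pX2 pX3 with hDdef
  have hE := hD.block (Fin (B * k)) (Fin k) y0 y30
  have hP := Valid.pi hE
  obtain ⟨x1, x2, x3, gR, gD, hcode⟩ := hP.exists_code ht0 ht1
  have hsum : (∑ a, (Kernels.pi (D.block (Fin (B * k)) (Fin k) y0 y30)).pS a *
        (Kernels.pi (D.block (Fin (B * k)) (Fin k) y0 y30)).relayError x1 x2 x3 gR a) +
      ∑ c, (Kernels.pi (D.block (Fin (B * k)) (Fin k) y0 y30)).pS c *
        (Kernels.pi (D.block (Fin (B * k)) (Fin k) y0 y30)).destError x1 x2 x3 gD c ≤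
      ∑ i, D.exponent t i ^ (B * k) * (D.mute y0 y30).exponent t i ^ k := by
    have h : ∀ i, (Kernels.pi (D.block (Fin (B * k)) (Fin k) y0 y30)).exponent t i =
        D.exponent t i ^ (B * k) * (D.mute y0 y30).exponent t i ^ k := fun i => by
      rw [Valid.exponent_pi hE, Fintype.prod_sum_type]
      simp [Kernels.block]
    simp only [← h]
    refine hcode.trans_eq ?_
    rw [Fin.sum_univ_six]
    simp only [exponent]
    simp [add_assoc]
  have hR0 := Finset.sum_nonneg fun a (_ : a ∈ Finset.univ) => mul_nonneg (hP.pS.1 a)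
    (relayError_nonneg hP.pR_nonneg (fun x => (hP.QR x).1) x1 x2 x3 gR a)
  have hD0 := Finset.sum_nonneg fun a (_ : a ∈ Finset.univ) => mul_nonneg (hP.pS.1 a)
    (destError_nonneg hP.pD_nonneg (fun x => (hP.QD x).1) x1 x2 x3 gD a)
  have hR := (le_add_of_nonneg_right hD0).trans hsum
  have hDe := (le_add_of_nonneg_left hR0).trans hsum
  rw [sum_pS_mul pS_pi_block] at hR hDe
  have hr := relayErr_eq_relayError (Q := blockChannel (Fin (B * k)) Q)
    (fun (x : Fin (B * k) ⊕ Fin k → X1) j => x (Sum.inl j))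
    (fun (x : Fin (B * k) ⊕ Fin k → X2) j => x (Sum.inl j))
    (fun (x : Fin (B * k) ⊕ Fin k → X3) j => x (Sum.inl j)) (fun y => Sum.elim y fun _ => y30)
    (pR_pi_block (p := p) (Q := Q) (pV1 := pV1) (pV2 := pV2) (pX1 := pX1) (pX2 := pX2) (pX3 := pX3)
      (y0 := y0)) sum_QR_pi_block x1 x2 x3 gR
  have hd := destErr_eq_destError (Q := blockChannel (Fin (B * k)) Q)
    (fun (x : Fin (B * k) ⊕ Fin k → X1) j => x (Sum.inl j))
    (fun (x : Fin (B * k) ⊕ Fin k → X2) j => x (Sum.inl j))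
    (fun (x : Fin (B * k) ⊕ Fin k → X3) j => x (Sum.inl j)) (fun y => Sum.elim y fun _ => y0)
    (pD_pi_block (p := p) (Q := Q) (pV1 := pV1) (pV2 := pV2) (pX1 := pX1) (pX2 := pX2) (pX3 := pX3)
      (y30 := y30)) sum_QD_pi_block x1 x2 x3 gD
  simp only [hDdef, ← hr] at hR
  simp only [hDdef, ← hd] at hDe
  obtain ⟨F1, F2, F3, g, hF3, hb⟩ :=
    exists_block_code (isPmf_blockSource hp) (isPmf_blockChannel hQ) hR hDe B
  have hcard : Fintype.card (Fin ((B + 1) * (B * k))) =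
      Fintype.card (Fin B × (Fin (B * k) ⊕ Fin k)) := by
    simp only [Fintype.card_prod, Fintype.card_sum, Fintype.card_fin]
    ring
  refine exists_code_of_block_code (Fintype.equivOfCardEq hcard) finProdFinEquiv.symm
    (fun i j h => ?_) F1 F2 F3 g hF3 hb
  by_contra! hij
  exact absurd h (not_lt.2 (Nat.div_le_div_right hij))

theorem marcReliablyTransmitted_of_exponent_lt_one (hp : IsPmf p) (hQ : ∀ x, IsPmf (Q x))
    (hD : (ofLaw p Q pV1 pV2 pX1 pX2 pX3).Valid) {t : Fin 6 → ℝ} (ht0 : ∀ i, 0 < t i)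
    (ht1 : ∀ i, t i < 1) (h : ∀ i, (ofLaw p Q pV1 pV2 pX1 pX2 pX3).exponent t i < 1) :
    MarcReliablyTransmitted p Q := by
  intro δ hδ
  obtain ⟨s1, s2, -, -⟩ := nonempty_of_isPmf hp
  obtain ⟨v1⟩ := nonempty_of_isPmf hD.pV1
  obtain ⟨v2⟩ := nonempty_of_isPmf hD.pV2
  obtain ⟨x1⟩ := nonempty_of_isPmf (hD.pX1 s1 v1)
  obtain ⟨x2⟩ := nonempty_of_isPmf (hD.pX2 s2 v2)
  obtain ⟨x3⟩ := nonempty_of_isPmf (hD.pX3 v1 v2)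
  obtain ⟨y0, y30⟩ := nonempty_of_isPmf (hQ (x1, x2, x3))
  have : Nonempty S1 := ⟨s1⟩
  have : Nonempty S2 := ⟨s2⟩
  obtain ⟨B, k, hB, hk, hBk⟩ := exists_pow_mul_sum_le (hD.exponent_nonneg t) h
    ((hD.mute y0 y30).exponent_nonneg t) hδ
  obtain ⟨f1, f2, f3, g, hc, he⟩ := exists_code_error_le hp hQ hD ht0 ht1 y0 y30 B k
  exact ⟨(B + 1) * (B * k), by positivity, f1, f2, f3, g, hc, he.trans hBk⟩

end Assembly

end MARC

open MARC MARC.Kernels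

/-- **Theorem 1** (joint source-channel coding for the MARC; CPM to the relay and
Slepian-Wolf coding to the destination). -/
theorem marc_cpm_relay_sw_destination
    {S1 S2 W W3 X1 X2 X3 Y Y3 : Type*}
    [Fintype S1] [Fintype S2] [Fintype W] [Fintype W3]
    [Fintype X1] [Fintype X2] [Fintype X3] [Fintype Y] [Fintype Y3]
    [DecidableEq S1] [DecidableEq S2] [DecidableEq W] [DecidableEq W3]
    [DecidableEq X1] [DecidableEq X2] [DecidableEq X3] [DecidableEq Y] [DecidableEq Y3]
    (pSrc : S1 × S2 × W × W3 → ℝ) (hSrc : IsPmf pSrc)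
    (Q : X1 × X2 × X3 → Y × Y3 → ℝ) (hQ : ∀ x, IsPmf (Q x))
    (h : ∃ (n1 n2 : ℕ) (pV1 : Fin n1 → ℝ) (pV2 : Fin n2 → ℝ)
        (pX1 : S1 → Fin n1 → X1 → ℝ) (pX2 : S2 → Fin n2 → X2 → ℝ)
        (pX3 : Fin n1 → Fin n2 → X3 → ℝ),
        IsPmf pV1 ∧ IsPmf pV2 ∧
        (∀ s v, IsPmf (pX1 s v)) ∧ (∀ s v, IsPmf (pX2 s v)) ∧
        (∀ v1 v2, IsPmf (pX3 v1 v2)) ∧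
        (let μ := thm1Joint n1 n2 pSrc Q pV1 pV2 pX1 pX2 pX3
        -- H(S1|S2,W3) < I(X1;Y3|S2,X2,V1,X3,W3)
        (condEntropyOf μ (fun (s1,_,_,_,_,_,_,_,_,_,_) => s1)
            (fun (_,s2,w3,_,_,_,_,_,_,_,_) => (s2, w3)) <
          condMutualInfoOf μ (fun (_,_,_,_,_,_,x1,_,_,_,_) => x1)
            (fun (_,_,_,_,_,_,_,_,_,y3,_) => y3)
            (fun (_,s2,w3,_,v1,_,_,x2,x3,_,_) => (s2, x2, v1, x3, w3))) ∧
        -- H(S2|S1,W3) < I(X2;Y3|S1,X1,V2,X3,W3)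
        (condEntropyOf μ (fun (_,s2,_,_,_,_,_,_,_,_,_) => s2)
            (fun (s1,_,w3,_,_,_,_,_,_,_,_) => (s1, w3)) <
          condMutualInfoOf μ (fun (_,_,_,_,_,_,_,x2,_,_,_) => x2)
            (fun (_,_,_,_,_,_,_,_,_,y3,_) => y3)
            (fun (s1,_,w3,_,_,v2,x1,_,x3,_,_) => (s1, x1, v2, x3, w3))) ∧
        -- H(S1,S2|W3) < I(X1,X2;Y3|V1,V2,X3,W3)
        (condEntropyOf μ (fun (s1,s2,_,_,_,_,_,_,_,_,_) => (s1, s2))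
            (fun (_,_,w3,_,_,_,_,_,_,_,_) => w3) <
          condMutualInfoOf μ (fun (_,_,_,_,_,_,x1,x2,_,_,_) => (x1, x2))
            (fun (_,_,_,_,_,_,_,_,_,y3,_) => y3)
            (fun (_,_,w3,_,v1,v2,_,_,x3,_,_) => (v1, v2, x3, w3))) ∧
        -- H(S1|S2,W) < I(X1,X3;Y|S1,X2,V2)
        (condEntropyOf μ (fun (s1,_,_,_,_,_,_,_,_,_,_) => s1)
            (fun (_,s2,_,w,_,_,_,_,_,_,_) => (s2, w)) <
          condMutualInfoOf μ (fun (_,_,_,_,_,_,x1,_,x3,_,_) => (x1, x3))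
            (fun (_,_,_,_,_,_,_,_,_,_,y) => y)
            (fun (s1,_,_,_,_,v2,_,x2,_,_,_) => (s1, x2, v2))) ∧
        -- H(S2|S1,W) < I(X2,X3;Y|S2,X1,V1)
        (condEntropyOf μ (fun (_,s2,_,_,_,_,_,_,_,_,_) => s2)
            (fun (s1,_,_,w,_,_,_,_,_,_,_) => (s1, w)) <
          condMutualInfoOf μ (fun (_,_,_,_,_,_,_,x2,x3,_,_) => (x2, x3))
            (fun (_,_,_,_,_,_,_,_,_,_,y) => y)
            (fun (_,s2,_,_,v1,_,x1,_,_,_,_) => (s2, x1, v1))) ∧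
        -- H(S1,S2|W) < I(X1,X2,X3;Y|S1,S2)
        (condEntropyOf μ (fun (s1,s2,_,_,_,_,_,_,_,_,_) => (s1, s2))
            (fun (_,_,_,w,_,_,_,_,_,_,_) => w) <
          condMutualInfoOf μ (fun (_,_,_,_,_,_,x1,x2,x3,_,_) => (x1, x2, x3))
            (fun (_,_,_,_,_,_,_,_,_,_,y) => y)
            (fun (s1,s2,_,_,_,_,_,_,_,_,_) => (s1, s2))))) :
    MarcReliablyTransmitted pSrc Q := by
  obtain ⟨n1, n2, pV1, pV2, pX1, pX2, pX3, hV1, hV2, hX1, hX2, hX3, h1, h2, h3, h4, h5, h6⟩ := h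
  have hD := ofLaw_valid hSrc hQ hV1 hV2 hX1 hX2 hX3
  set D := ofLaw pSrc Q pV1 pV2 pX1 pX2 pX3 with hDdef
  have hs := thm1Joint_push_relaySource hD hQ
  have hs' := thm1Joint_push_destSource hD hQ
  have hc := thm1Joint_push_relayJoint (p := pSrc) (Q := Q) (pV1 := pV1) (pV2 := pV2) (pX1 := pX1)
    (pX2 := pX2) (pX3 := pX3)
  have hc' := thm1Joint_push_destJoint (p := pSrc) (Q := Q) (pV1 := pV1) (pV2 := pV2) (pX1 := pX1)
    (pX2 := pX2) (pX3 := pX3)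
  obtain ⟨t1, ht1, ht1', hf1⟩ := hD.exists_fR1_lt_one (by
    rw [← condEntropyOf_push hs, ← condMutualInfoOf_push hc]
    exact h1)
  obtain ⟨t2, ht2, ht2', hf2⟩ := hD.swap.exists_fR1_lt_one (by
    rw [← condEntropyOf_push (push_trans hs swap_push_relaySource),
      ← condMutualInfoOf_push (push_trans hc swap_push_relayJoint)]
    exact h2)
  obtain ⟨t3, ht3, ht3', hf3⟩ := hD.exists_fR3_lt_one (by
    rw [← condEntropyOf_push hs, ← condMutualInfoOf_push hc]
    exact h3)
  obtain ⟨t4, ht4, ht4', hf4⟩ := hD.exists_fD1_lt_one (by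
    rw [← condEntropyOf_push hs', ← condMutualInfoOf_push hc']
    exact h4)
  obtain ⟨t5, ht5, ht5', hf5⟩ := hD.swap.exists_fD1_lt_one (by
    rw [← condEntropyOf_push (push_trans hs' swap_push_destSource),
      ← condMutualInfoOf_push (push_trans hc' swap_push_destJoint)]
    exact h5)
  obtain ⟨t6, ht6, ht6', hf6⟩ := hD.exists_fD3_lt_one (by
    rw [← condEntropyOf_push hs', ← condMutualInfoOf_push hc']
    exact h6)
  refine marcReliablyTransmitted_of_exponent_lt_one hSrc hQ hD (t := ![t1, t2, t3, t4, t5, t6])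
    ?_ ?_ ?_ <;> intro i <;> fin_cases i <;> assumption
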